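/- arXiv:2408.12678 — 4 statements merged into one kernel-verified Lean document; each statement's English description precedes it below -/
import Mathlib

section
/- Let R be a commutative ring, k ≥ 2, A a k×k matrix over R with A_{i,j} = 0 whenever i + j < k + 1 (lower anti-triangular), and B a k×k matrix over R with B_{i,j} = 0 whenever i + j ≥ k + 1 (strictly upper anti-triangular). Let D(x) = det(A·x + B) ∈ R[x], where x is an indeterminate. Then: (a) the coefficient of x^0 in D is 0; (b) the coefficient of x^1 in D equals (−1)^{(k−1)(k−2)/2} · A_{k,k} · ∏_{i=1}^{k−1} B_{i, k−i}; (c) the coefficient of x^k in D equals (−1)^{k(k−1)/2} · ∏_{i=1}^{k} A_{i, k+1−i}. -/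
theorem Fin.sign_revPerm (n : ℕ) :
    Equiv.Perm.sign (Fin.revPerm : Equiv.Perm (Fin n)) = (-1) ^ (n * (n - 1) / 2) := by
  rw [Equiv.Perm.sign_eq_prod_prod_Iio, ← Finset.sum_range_id, ← Finset.prod_pow_eq_pow_sum,
    ← Fin.prod_univ_eq_prod_range (fun i => (-1 : ℤˣ) ^ i) n]
  refine Finset.prod_congr rfl fun j _ => ?_
  rw [Finset.prod_congr rfl (g := fun _ => (-1 : ℤˣ)), Finset.prod_const, Fin.card_Iio]
  intro i hi
  have hij : ¬ j < i := not_lt.2 (Finset.mem_Iio.1 hi).le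
  simp [hij]

/-- A matrix vanishing strictly above its antidiagonal. -/
theorem Matrix.det_of_lowerAntitriangular {R : Type*} [CommRing R] {n : ℕ}
    (M : Matrix (Fin n) (Fin n) R) (h : ∀ i j : Fin n, j < i.rev → M i j = 0) :
    M.det = (-1) ^ (n * (n - 1) / 2) * ∏ i, M i i.rev := by
  have hT : (M.submatrix id Fin.revPerm).det = ∏ i, M i i.rev :=
    Matrix.det_of_isLowerTriangular _ fun i j hij =>
      h i j.rev (Fin.rev_lt_rev.2 (by simpa using hij))
  have hs := Matrix.det_permute' Fin.revPerm M
  rw [hT, Fin.sign_revPerm] at hs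
  rw [hs]
  push_cast
  rw [← mul_assoc, ← mul_pow]
  simp

/-- A matrix vanishing strictly below its antidiagonal. -/
theorem Matrix.det_of_upperAntitriangular {R : Type*} [CommRing R] {n : ℕ}
    (M : Matrix (Fin n) (Fin n) R) (h : ∀ i j : Fin n, i.rev < j → M i j = 0) :
    M.det = (-1) ^ (n * (n - 1) / 2) * ∏ i, M i i.rev := by
  have hT : (M.submatrix id Fin.revPerm).det = ∏ i, M i i.rev :=
    Matrix.det_of_isUpperTriangular fun i j hij =>
      h i j.rev (Fin.rev_lt_rev.2 (by simpa using hij))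
  have hs := Matrix.det_permute' Fin.revPerm M
  rw [hT, Fin.sign_revPerm] at hs
  rw [hs]
  push_cast
  rw [← mul_assoc, ← mul_pow]
  simp

/-- If a row of `B` vanishes, `X` factors out of the corresponding row of `A * X + B`. -/
theorem Matrix.det_C_mul_X_add_C_of_row_eq_zero {R ι : Type*} [CommRing R] [Fintype ι]
    [DecidableEq ι] (A B : Matrix ι ι R) (r : ι) (hB : ∀ j, B r j = 0) :
    (Matrix.of fun i j => Polynomial.C (A i j) * Polynomial.X + Polynomial.C (B i j)).det =
      Polynomial.X * ((Matrix.of fun i j =>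
        Polynomial.C (A i j) * Polynomial.X + Polynomial.C (B i j)).updateRow r
          fun j => Polynomial.C (A r j)).det := by
  rw [← Matrix.det_updateRow_smul]
  congr 1
  ext1 i j
  obtain rfl | hi := eq_or_ne i r
  · simp [hB, Polynomial.X_mul_C]
  · simp [hi]

/-- The constant coefficient of the determinant left after factoring `X` out of row `r`. -/
theorem Matrix.coeff_zero_det_updateRow_C_mul_X_add_C {R ι : Type*} [CommRing R] [Fintype ι]
    [DecidableEq ι] (A B : Matrix ι ι R) (r : ι) :
    ((Matrix.of fun i j => Polynomial.C (A i j) * Polynomial.X + Polynomial.C (B i j)).updateRow r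
      fun j => Polynomial.C (A r j)).det.coeff 0 = (B.updateRow r (A r)).det := by
  rw [← Polynomial.constantCoeff_apply, RingHom.map_det]
  congr 1
  ext i j
  obtain rfl | hi := eq_or_ne i r
  · simp
  · simp [hi]

/-- Expansion along a last column whose only possibly nonzero entry is the bottom one. -/
theorem Matrix.det_of_last_column_eq_zero {R : Type*} [CommRing R] {n : ℕ}
    (M : Matrix (Fin (n + 1)) (Fin (n + 1)) R)
    (h : ∀ i : Fin n, M i.castSucc (Fin.last n) = 0) :
    M.det = M (Fin.last n) (Fin.last n) * (M.submatrix Fin.castSucc Fin.castSucc).det := by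
  rw [Matrix.det_succ_column M (Fin.last n), Fin.sum_univ_castSucc]
  simp [h, ← two_mul, Fin.succAbove_last]


/-- Let `A` be lower anti-triangular (`A i j = 0` when `i + j < k + 1`, `1`-indexed) and `B`
strictly upper anti-triangular (`B i j = 0` when `i + j ≥ k + 1`, `1`-indexed), and let
`D(x) = det (A·x + B) ∈ R[x]`. Then the coefficient of `x^0` in `D` is `0`, the coefficient of
`x^1` is `(-1)^((k-1)(k-2)/2) · A k k · ∏_{i=1}^{k-1} B i (k-i)`, and the coefficient of `x^k`
is `(-1)^(k(k-1)/2) · ∏_{i=1}^{k} A i (k+1-i)`. (Indices are `0`-indexed via `Fin k` below.) -/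
theorem stmt_3 {R : Type*} [CommRing R] (k : ℕ) (hk : 2 ≤ k)
    (A B : Matrix (Fin k) (Fin k) R)
    (hA : ∀ i j : Fin k, (i : ℕ) + (j : ℕ) < k - 1 → A i j = 0)
    (hB : ∀ i j : Fin k, k - 1 ≤ (i : ℕ) + (j : ℕ) → B i j = 0)
    (D : Polynomial R)
    (hD : D = Matrix.det (Matrix.of fun i j : Fin k =>
      Polynomial.C (A i j) * Polynomial.X + Polynomial.C (B i j))) :
    D.coeff 0 = 0 ∧
    D.coeff 1 = (-1 : R) ^ ((k - 1) * (k - 2) / 2) *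
        A ⟨k - 1, by omega⟩ ⟨k - 1, by omega⟩ *
        ∏ i : Fin (k - 1), B ⟨(i : ℕ), by have := i.isLt; omega⟩ ⟨k - 2 - (i : ℕ), by omega⟩ ∧
    D.coeff k = (-1 : R) ^ (k * (k - 1) / 2) * ∏ i : Fin k, A i i.rev := by
  subst hD
  obtain ⟨n, rfl⟩ : ∃ n, k = n + 2 := ⟨k - 2, by omega⟩
  have hrow : ∀ j, B (Fin.last (n + 1)) j = 0 := fun j => hB _ _ (by simp)
  have hfactor := Matrix.det_C_mul_X_add_C_of_row_eq_zero A B (Fin.last (n + 1)) hrow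
  refine ⟨?_, ?_, ?_⟩
  · rw [hfactor, Polynomial.coeff_X_mul_zero]
  · rw [hfactor, Polynomial.coeff_X_mul, Matrix.coeff_zero_det_updateRow_C_mul_X_add_C,
      Matrix.det_of_last_column_eq_zero]
    · rw [Matrix.det_of_upperAntitriangular]
      · have hprod : ∀ i : Fin (n + 1),
            ((B.updateRow (Fin.last (n + 1)) (A (Fin.last (n + 1)))).submatrix
              Fin.castSucc Fin.castSucc) i i.rev =
            B ⟨i, by omega⟩ ⟨n + 2 - 2 - i, by omega⟩ := by
          intro i
          rw [Matrix.submatrix_apply, Matrix.updateRow_ne (Fin.castSucc_lt_last i).ne]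
          congr 1
          ext
          simp [Fin.val_rev]
        rw [Finset.prod_congr rfl fun i _ => hprod i, Matrix.updateRow_self, ← mul_assoc,
          mul_comm (A _ _)]
        rfl
      · intro i j hij
        rw [Matrix.submatrix_apply, Matrix.updateRow_ne (Fin.castSucc_lt_last i).ne]
        apply hB
        simp only [Fin.lt_def, Fin.val_rev, Fin.val_castSucc] at hij ⊢
        omega
    · intro i
      rw [Matrix.updateRow_ne (Fin.castSucc_lt_last i).ne]
      exact hB _ _ (by simp)
  · rw [← Matrix.det_of_lowerAntitriangular A]
    · have h := Polynomial.coeff_det_X_add_C_card A B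
      rw [Fintype.card_fin] at h
      rw [← h]
      congr 2
      ext1 i j
      simp [Polynomial.X_mul_C]
    · intro i j hij
      apply hA
      simp only [Fin.lt_def, Fin.val_rev] at hij
      omega
end

section
/- Let F be an algebraically closed field. Fix an integer k ≥ 1, an integer m ≥ 0, and nondecreasing integer tuples e_1 ≤ … ≤ e_k and f_1 ≤ … ≤ f_k satisfying f_i ≥ e_i for all 1 ≤ i ≤ k and f_i ≥ e_{i+1} − m for all 1 ≤ i ≤ k−1. Set δ = Σ_{i=1}^k (f_i − e_i). Let V be the F-vector space of pairs (A,B) of k×k matrices with entries in F[t] satisfying deg A_{i,j} ≤ f_i − e_{k+1−j} and deg B_{i,j} ≤ f_i − e_{k+1−j} + m for all i,j (with deg 0 = −∞, so an entry must be 0 when its bound is negative), and let W be the F-vector space of tuples (P_0, P_1, …, P_k) of polynomials in F[t] with deg P_j ≤ δ + (k−j)·m for each 0 ≤ j ≤ k. Let φ : V → W be the map sending (A,B) to the tuple of coefficients of det(A·x + B·y), i.e., det(A·x + B·y) = Σ_{j=0}^{k} φ(A,B)_j · x^j y^{k−j} in F[t][x,y]. Then φ is dominant in the following sense: any polynomial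 function ψ on W (i.e., any polynomial in the finitely many F-coordinates of W) that satisfies ψ(φ(A,B)) = 0 for all (A,B) ∈ V is the zero polynomial. -/
open Polynomial

/-- The degree of `p` is at most the integer `z`; for negative `z` this forces `p = 0`. -/
def IntDegreeLE {F : Type*} [Semiring F] (p : F[X]) (z : ℤ) : Prop :=
  ∀ n : ℕ, z < (n : ℤ) → p.coeff n = 0

namespace IntDegreeLE

variable {F : Type*} [CommRing F] {p q : F[X]} {y z : ℤ}

theorem mono (h : IntDegreeLE p y) (hyz : y ≤ z) : IntDegreeLE p z :=
  fun n hn => h n (hyz.trans_lt hn)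

theorem zero : IntDegreeLE (0 : F[X]) z := fun _ _ => coeff_zero _

theorem add (hp : IntDegreeLE p z) (hq : IntDegreeLE q z) : IntDegreeLE (p + q) z :=
  fun n hn => by rw [coeff_add, hp n hn, hq n hn, add_zero]

theorem neg (hp : IntDegreeLE p z) : IntDegreeLE (-p) z :=
  fun n hn => by rw [coeff_neg, hp n hn, neg_zero]

theorem sub (hp : IntDegreeLE p z) (hq : IntDegreeLE q z) : IntDegreeLE (p - q) z := by
  rw [sub_eq_add_neg]
  exact hp.add hq.neg

theorem mul (hp : IntDegreeLE p y) (hq : IntDegreeLE q z) : IntDegreeLE (p * q) (y + z) := by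
  intro n hn
  rw [coeff_mul]
  refine Finset.sum_eq_zero fun x hx => ?_
  have hx' : x.1 + x.2 = n := Finset.HasAntidiagonal.mem_antidiagonal.1 hx
  by_cases h : y < (x.1 : ℤ)
  · rw [hp _ h, zero_mul]
  · rw [hq x.2 (by omega), mul_zero]

theorem one : IntDegreeLE (1 : F[X]) 0 := fun n hn => by
  rw [coeff_one, if_neg (by omega)]

theorem sum {ι : Type*} (s : Finset ι) {g : ι → F[X]} (h : ∀ i ∈ s, IntDegreeLE (g i) z) :
    IntDegreeLE (∑ i ∈ s, g i) z :=
  Finset.sum_induction g (IntDegreeLE · z) (fun _ _ => add) zero h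

theorem prod {ι : Type*} (s : Finset ι) {g : ι → F[X]} {w : ι → ℤ}
    (h : ∀ i ∈ s, IntDegreeLE (g i) (w i)) : IntDegreeLE (∏ i ∈ s, g i) (∑ i ∈ s, w i) := by
  classical
  induction s using Finset.induction_on with
  | empty => simpa using one
  | insert i s hi ih =>
    rw [Finset.prod_insert hi, Finset.sum_insert hi]
    exact (h i (Finset.mem_insert_self i s)).mul
      (ih fun j hj => h j (Finset.mem_insert_of_mem hj))

theorem pow (hp : IntDegreeLE p z) (n : ℕ) : IntDegreeLE (p ^ n) (n * z) := by
  simpa using prod (Finset.range n) (g := fun _ => p) (w := fun _ => z) fun _ _ => hp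

theorem of_natDegree_le (h : (p.natDegree : ℤ) ≤ z) : IntDegreeLE p z :=
  fun n hn => coeff_eq_zero_of_natDegree_lt (by omega)

theorem of_monic_mul (hp : p.Monic) (h : IntDegreeLE (p * q) z) :
    IntDegreeLE q (z - p.natDegree) := by
  by_cases hq : q = 0
  · rw [hq]; exact zero
  refine of_natDegree_le ?_
  by_contra! hlt
  have hc := h (p.natDegree + q.natDegree) (by push_cast; omega)
  rw [coeff_mul_degree_add_degree, hp.leadingCoeff, one_mul] at hc
  exact hq (leadingCoeff_eq_zero.1 hc)

end IntDegreeLE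

/-- Bézout's identity with control of degrees. -/
theorem exists_eq_mul_add_mul_of_isCoprime {F : Type*} [Field F] {p q h : F[X]} {y z : ℤ}
    (hp : p.Monic) (hpq : IsCoprime p q) (hq : IntDegreeLE q y) (hh : IntDegreeLE h (y + z))
    (hz : (p.natDegree : ℤ) - 1 ≤ z) :
    ∃ u v : F[X], h = p * u + q * v ∧ IntDegreeLE u (y + z - p.natDegree) ∧ IntDegreeLE v z := by
  obtain ⟨α, β, hαβ⟩ := hpq
  set v := (h * β) %ₘ p with hv
  have hvz : IntDegreeLE v z := by
    intro n hn
    refine coeff_eq_zero_of_degree_lt ((degree_modByMonic_lt (h * β) hp).trans_le ?_)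
    rw [degree_eq_natDegree hp.ne_zero]
    exact_mod_cast (by omega : p.natDegree ≤ n)
  obtain ⟨w, hw⟩ := dvd_modByMonic_sub (h * β) p
  have hu : p * (h * α - q * w) = h - q * v := by
    have : v = h * β + p * w := by rw [← hw]; ring
    rw [this]
    linear_combination h * hαβ
  refine ⟨h * α - q * w, v, by rw [hu]; ring, IntDegreeLE.of_monic_mul hp ?_, hvz⟩
  rw [hu]
  exact hh.sub (hq.mul hvz)

theorem exists_eq_sum_mul_prod {F : Type*} [Field F] (c l : ℕ → F[X]) (μ g : ℕ → ℤ) (K : ℕ)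
    (hc : ∀ j < K, (c j).Monic) (hl : ∀ r < K, IntDegreeLE (l r) (μ r))
    (hcop : ∀ j < K, ∀ r ≤ j, IsCoprime (l r) (c j))
    (hg : ∀ j < K, ((c j).natDegree : ℤ) - 1 ≤ g (j + 1))
    (hbal : ∀ j < K, g j + (c j).natDegree = μ j + g (j + 1)) :
    ∀ j ≤ K, ∀ h : F[X], IntDegreeLE h (∑ r ∈ Finset.range j, μ r + g j) →
      ∃ v : ℕ → F[X], (∀ i ≤ j, IntDegreeLE (v i) (g i)) ∧
        h = ∑ i ∈ Finset.range (j + 1),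
          v i * ((∏ r ∈ Finset.range i, l r) * ∏ r ∈ Finset.Ico i j, c r) := by
  intro j
  induction j with
  | zero =>
    intro _ h hh
    refine ⟨fun _ => h, fun i hi => ?_, by simp⟩
    obtain rfl : i = 0 := by omega
    simpa using hh
  | succ j ih =>
    intro hj h hh
    have hcop' : IsCoprime (c j) (∏ r ∈ Finset.range (j + 1), l r) :=
      (IsCoprime.prod_left fun r hr =>
        hcop j hj r (Nat.lt_succ_iff.1 (Finset.mem_range.1 hr))).symm
    have hdeg : IntDegreeLE (∏ r ∈ Finset.range (j + 1), l r) (∑ r ∈ Finset.range (j + 1), μ r) :=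
      IntDegreeLE.prod _ fun r hr => hl r (by have := Finset.mem_range.1 hr; omega)
    obtain ⟨u, w, rfl, hu, hw⟩ :=
      exists_eq_mul_add_mul_of_isCoprime (hc j hj) hcop' hdeg hh (hg j hj)
    obtain ⟨v, hv, rfl⟩ := ih (by omega) u (hu.mono (by
      rw [Finset.sum_range_succ]; have := hbal j hj; omega))
    refine ⟨fun i => if i = j + 1 then w else v i, fun i hi => ?_, ?_⟩
    · dsimp only
      split_ifs with h
      · rwa [h]
      · exact hv i (by omega)
    · rw [Finset.sum_range_succ _ (j + 1), Finset.mul_sum]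
      simp only [if_true, Finset.Ico_self, Finset.prod_empty, mul_one]
      rw [mul_comm w]
      congr 1
      refine Finset.sum_congr rfl fun i hi => ?_
      have hi' := Finset.mem_range.1 hi
      rw [if_neg (by omega), Finset.prod_Ico_succ_top (by omega)]
      ring

/-- `P`, read as the dehomogenization at `y = 1` of a form `∑ P_j x ^ j y ^ (k - j)` of degree `k`
over `F[t]`, has `deg P_j ≤ D - j * m` for all `j`. -/
def IsTwistedForm {F : Type*} [Semiring F] (m k : ℕ) (D : ℤ) (P : F[X][X]) : Prop :=
  ∀ j : ℕ, (k < j → P.coeff j = 0) ∧ IntDegreeLE (P.coeff j) (D - j * m)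

namespace IsTwistedForm

variable {F : Type*} [CommRing F] {m k l : ℕ} {D E : ℤ} {P Q : F[X][X]}

theorem zero : IsTwistedForm m k D (0 : F[X][X]) :=
  fun j => ⟨fun _ => coeff_zero j, by rw [coeff_zero]; exact IntDegreeLE.zero⟩

theorem add (hP : IsTwistedForm m k D P) (hQ : IsTwistedForm m k D Q) :
    IsTwistedForm m k D (P + Q) := fun j =>
  ⟨fun h => by rw [coeff_add, (hP j).1 h, (hQ j).1 h, add_zero],
    by rw [coeff_add]; exact (hP j).2.add (hQ j).2⟩

theorem neg (hP : IsTwistedForm m k D P) : IsTwistedForm m k D (-P) := fun j =>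
  ⟨fun h => by rw [coeff_neg, (hP j).1 h, neg_zero], by rw [coeff_neg]; exact (hP j).2.neg⟩

theorem sub (hP : IsTwistedForm m k D P) (hQ : IsTwistedForm m k D Q) :
    IsTwistedForm m k D (P - Q) := by
  rw [sub_eq_add_neg]
  exact hP.add hQ.neg

theorem mul (hP : IsTwistedForm m k D P) (hQ : IsTwistedForm m l E Q) :
    IsTwistedForm m (k + l) (D + E) (P * Q) := by
  refine fun j => ⟨fun hj => ?_, ?_⟩
  · rw [coeff_mul]
    refine Finset.sum_eq_zero fun x hx => ?_
    have hx' : x.1 + x.2 = j := Finset.HasAntidiagonal.mem_antidiagonal.1 hx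
    by_cases h : k < x.1
    · rw [(hP _).1 h, zero_mul]
    · rw [(hQ x.2).1 (by omega), mul_zero]
  · rw [coeff_mul]
    refine IntDegreeLE.sum _ fun x hx => ?_
    have hx' : x.1 + x.2 = j := Finset.HasAntidiagonal.mem_antidiagonal.1 hx
    refine ((hP x.1).2.mul (hQ x.2).2).mono (le_of_eq ?_)
    rw [← hx']
    push_cast
    ring

theorem one : IsTwistedForm m 0 0 (1 : F[X][X]) := by
  refine fun j => ⟨fun hj => ?_, ?_⟩
  · rw [coeff_one, if_neg (by omega)]
  · rw [coeff_one]
    split_ifs with h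
    · simpa [h] using IntDegreeLE.one
    · exact IntDegreeLE.zero

theorem sum {ι : Type*} (s : Finset ι) {g : ι → F[X][X]}
    (h : ∀ i ∈ s, IsTwistedForm m k D (g i)) : IsTwistedForm m k D (∑ i ∈ s, g i) :=
  Finset.sum_induction g (IsTwistedForm m k D) (fun _ _ => add) zero h

theorem prod {ι : Type*} (s : Finset ι) {g : ι → F[X][X]} {w : ι → ℤ}
    (h : ∀ i ∈ s, IsTwistedForm m 1 (w i) (g i)) :
    IsTwistedForm m s.card (∑ i ∈ s, w i) (∏ i ∈ s, g i) := by
  classical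
  induction s using Finset.induction_on with
  | empty => simpa using one
  | insert i s hi ih =>
    rw [Finset.prod_insert hi, Finset.sum_insert hi, Finset.card_insert_of_notMem hi, add_comm _ 1]
    exact (h i (Finset.mem_insert_self i s)).mul
      (ih fun j hj => h j (Finset.mem_insert_of_mem hj))

theorem linear {p q : F[X]} (hp : IntDegreeLE p (D - m)) (hq : IntDegreeLE q D) :
    IsTwistedForm m 1 D (C q + C p * X) := by
  rintro (_ | _ | j)
  · simpa using hq
  · simpa using hp
  · simp [IntDegreeLE.zero]

theorem const {q : F[X]} (hq : IntDegreeLE q D) : IsTwistedForm m 1 D (C q) := by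
  simpa using linear (m := m) (p := 0) IntDegreeLE.zero hq

/-- A linear form dividing a form does so with a quotient satisfying the expected bounds. -/
theorem of_linear_mul {a b : F[X]} (ha : a.Monic) (hb : IntDegreeLE b (a.natDegree + m))
    (h : IsTwistedForm m (k + 1) D ((C b + C a * X) * Q)) :
    IsTwistedForm m k (D - (a.natDegree + m)) Q := by
  have key : ∀ i j : ℕ, Q.natDegree < j + i →
      (k < j → Q.coeff j = 0) ∧ IntDegreeLE (Q.coeff j) (D - (a.natDegree + m) - j * m) := by
    intro i
    induction i with
    | zero =>
      intro j hj
      rw [coeff_eq_zero_of_natDegree_lt (by omega)]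
      exact ⟨fun _ => rfl, IntDegreeLE.zero⟩
    | succ i ih =>
      intro j hj
      have hrec : a * Q.coeff j =
          ((C b + C a * X) * Q).coeff (j + 1) - b * Q.coeff (j + 1) := by
        rw [add_mul, mul_assoc, coeff_add, coeff_C_mul, coeff_C_mul, coeff_X_mul]
        ring
      obtain ⟨h1, h2⟩ := ih (j + 1) (by omega)
      refine ⟨fun hjk => ?_, ?_⟩
      · rw [h1 (by omega), (h (j + 1)).1 (by omega), mul_zero, sub_zero] at hrec
        exact ha.mul_right_eq_zero_iff.1 hrec
      · have hd : IntDegreeLE (a * Q.coeff j) (D - (j + 1 : ℕ) * m) := by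
          rw [hrec]
          refine (h (j + 1)).2.sub ((hb.mul h2).mono (le_of_eq ?_))
          ring
        refine (IntDegreeLE.of_monic_mul ha hd).mono (le_of_eq ?_)
        push_cast
        ring
  exact fun j => key (Q.natDegree + 1) j (by omega)

end IsTwistedForm

theorem exists_generic_linear_forms {F : Type*} [Field F] [Infinite F] (d w : ℕ → ℕ) (K : ℕ) :
    ∃ a b s : ℕ → F[X],
      (∀ r, (a r).Monic ∧ (a r).natDegree = d r) ∧ (∀ r, (b r).natDegree = 0) ∧
      (∀ r, IsCoprime (a r) (b r)) ∧ (∀ j, (s j).Monic ∧ (s j).natDegree = w j) ∧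
      ∀ q < K, ∀ j < q, ∀ r ≤ j, IsCoprime (b r * a q - a r * b q) (s j * a q) := by
  have hinf : ({0}ᶜ : Set F).Infinite := (Set.finite_singleton 0).infinite_compl
  set α : ℕ → F := fun n => hinf.natEmbedding _ n with hα
  have hα0 : ∀ n, α n ≠ 0 := fun n => (hinf.natEmbedding _ n).2
  have hαi : ∀ i j, i ≠ j → α i - α j ≠ 0 := fun i j hij h =>
    hij ((hinf.natEmbedding _).injective (Subtype.ext (sub_eq_zero.1 h)))
  set a : ℕ → F[X] := fun r => (X - C (α r)) ^ d r with ha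
  set b : ℕ → F[X] := fun r => C (α r) with hb
  have ham : ∀ r, (a r).Monic := fun r => (monic_X_sub_C _).pow _
  have had : ∀ r, (a r).natDegree = d r := fun r => by
    simp [ha, (monic_X_sub_C (α r)).natDegree_pow]
  have hbu : ∀ r, IsUnit (b r) := fun r => isUnit_C.2 (hα0 r).isUnit
  have hcu : ∀ {u : F[X]}, IsUnit u → ∀ p : F[X], IsCoprime p u := fun {u} hu p => by
    obtain ⟨v, hv⟩ := hu.exists_left_inv
    exact ⟨0, v, by rw [hv, zero_mul, zero_add]⟩
  have hl0 : ∀ r q, r ≠ q → b r * a q - a r * b q ≠ 0 := by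
    intro r q hrq h0
    have h1 := sub_eq_zero.1 h0
    have h2 := congrArg natDegree h1
    rw [mul_comm (a r), natDegree_C_mul (hα0 r), natDegree_C_mul (hα0 q)] at h2
    have h3 := congrArg leadingCoeff h1
    rw [leadingCoeff_mul, leadingCoeff_mul, (ham q).leadingCoeff, (ham r).leadingCoeff, one_mul,
      mul_one, leadingCoeff_C, leadingCoeff_C] at h3
    exact hαi r q hrq (sub_eq_zero.2 h3)
  have hprod : (∏ q ∈ Finset.range K, ∏ r ∈ Finset.range q, (b r * a q - a r * b q)) ≠ 0 :=
    Finset.prod_ne_zero_iff.2 fun q _ => Finset.prod_ne_zero_iff.2 fun r hr =>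
      hl0 r q (Finset.mem_range.1 hr).ne
  obtain ⟨β, hβ⟩ : ∃ β, (∏ q ∈ Finset.range K, ∏ r ∈ Finset.range q,
      (b r * a q - a r * b q)).eval β ≠ 0 := by
    by_contra! h
    exact hprod (Polynomial.funext fun x => by rw [h x, eval_zero])
  refine ⟨a, b, fun j => (X - C β) ^ w j, fun r => ⟨ham r, had r⟩, fun r => natDegree_C _,
    fun r => hcu (hbu r) _, fun j => ⟨(monic_X_sub_C _).pow _, ?_⟩,
    fun q hq j hj r hr => ?_⟩
  · simp [(monic_X_sub_C β).natDegree_pow]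
  · refine IsCoprime.mul_right (IsCoprime.pow_right ?_) ?_
    · refine IsCoprime.symm (((irreducible_X_sub_C β).coprime_iff_not_dvd).2 fun hdvd => ?_)
      refine hβ ?_
      rw [eval_prod]
      refine Finset.prod_eq_zero (Finset.mem_range.2 hq) ?_
      rw [eval_prod]
      exact Finset.prod_eq_zero (Finset.mem_range.2 (hr.trans_lt hj)) (dvd_iff_isRoot.1 hdvd)
    · have h1 : IsCoprime (a r) (a q) :=
        (isCoprime_X_sub_C_of_isUnit_sub (hαi r q (by omega)).isUnit).pow
      have h2 : IsCoprime (-(a r * b q)) (a q) :=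
        (h1.mul_left (isCoprime_comm.1 (hcu (hbu q) _))).neg_left
      have h3 := IsCoprime.add_mul_right_left h2 (b r)
      rwa [neg_add_eq_sub] at h3

/-- A form is congruent, modulo a linear form, to its value at the zero of the linear form. -/
theorem IsTwistedForm.exists_dvd_sub {F : Type*} [CommRing F] {m k : ℕ} {D d : ℤ} {a b : F[X]}
    {P : F[X][X]} (hP : IsTwistedForm m k D P) (ha : IntDegreeLE a d)
    (hb : IntDegreeLE b (d + m)) :
    ∃ h : F[X], IntDegreeLE h (D + k * d) ∧
      (C b + C a * X : F[X][X]) ∣ C a ^ k * P - C h := by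
  refine ⟨∑ j ∈ Finset.range (k + 1), P.coeff j * ((-b) ^ j * a ^ (k - j)),
    IntDegreeLE.sum _ fun j hj => ?_, ?_⟩
  · have hj' := Finset.mem_range.1 hj
    refine ((hP j).2.mul ((hb.neg.pow j).mul (ha.pow (k - j)))).mono (le_of_eq ?_)
    rw [Nat.cast_sub (by omega)]
    ring
  · have hPs : P = ∑ j ∈ Finset.range (k + 1), C (P.coeff j) * X ^ j :=
      P.as_sum_range_C_mul_X_pow' (Nat.lt_succ_iff.2 (natDegree_le_iff_coeff_eq_zero.2
        fun N hN => (hP N).1 hN))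
    rw [show C a ^ k * P = C a ^ k * ∑ j ∈ Finset.range (k + 1), C (P.coeff j) * X ^ j from
      congrArg _ hPs, Finset.mul_sum, map_sum, ← Finset.sum_sub_distrib]
    refine Finset.dvd_sum fun j hj => ?_
    have hj' : j ≤ k := Nat.lt_succ_iff.1 (Finset.mem_range.1 hj)
    have h1 : (C a : F[X][X]) ^ k * (C (P.coeff j) * X ^ j)
        - C (P.coeff j * ((-b) ^ j * a ^ (k - j)))
        = C (P.coeff j) * C a ^ (k - j) * ((C a * X) ^ j - (-C b) ^ j) := by
      obtain ⟨i, rfl⟩ := Nat.exists_eq_add_of_le hj'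
      simp only [map_mul, map_pow, map_neg, Nat.add_sub_cancel_left]
      ring
    rw [h1]
    refine Dvd.dvd.mul_left ?_ _
    have h2 := sub_dvd_pow_sub_pow (C a * X : F[X][X]) (-C b) j
    rwa [sub_neg_eq_add, add_comm] at h2

theorem exists_ringHom_eq_iff_dvd_sub.{v} {R : Type v} [CommRing R] (x : R) :
    ∃ (S : Type v) (_ : CommRing S) (φ : R →+* S), ∀ A B : R, x ∣ A - B ↔ φ A = φ B :=
  ⟨R ⧸ Ideal.span {x}, inferInstance, Ideal.Quotient.mk (Ideal.span {x}), fun A B => by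
    rw [Ideal.Quotient.eq, Ideal.mem_span_singleton]⟩

section Row

variable {F : Type*} [Field F] {m : ℕ} {e f : ℕ → ℤ} {a b s : ℕ → F[X]} {q : ℕ}

theorem exists_row_dvd_sub (hf : Monotone f) (he : Monotone e)
    (ha : ∀ r, (a r).Monic ∧ ((a r).natDegree : ℤ) = f r - e r)
    (hb : ∀ r, IntDegreeLE (b r) (f r - e r + m)) (hab : IsCoprime (a q) (b q))
    (hs : ∀ j, (s j).Monic ∧ ((s j).natDegree : ℤ) = f j - e (j + 1) + m)
    (hcop : ∀ j < q, ∀ r ≤ j, IsCoprime (b r * a q - a r * b q) (s j * a q))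
    {h : F[X]}
    (hh : IntDegreeLE h (∑ r ∈ Finset.range (q + 1), (f r - e r + m) + (q + 1) * (f q - e q))) :
    ∃ u : ℕ → F[X][X], (∀ j ≤ q, IsTwistedForm m 1 (f q - e j + m) (u j)) ∧
      (C (b q) + C (a q) * X : F[X][X]) ∣
        C (a q) ^ (q + 1) * (∑ j ∈ Finset.range (q + 1), u j *
          ((∏ r ∈ Finset.range j, (C (b r) + C (a r) * X)) * ∏ r ∈ Finset.Ico j q, C (s r))) -
            C h := by
  have haD : ∀ r, IntDegreeLE (a r) (f r - e r) := fun r =>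
    IntDegreeLE.of_natDegree_le (ha r).2.le
  have hcd : ∀ j, ((s j * a q).natDegree : ℤ) = f j - e (j + 1) + m + (f q - e q) := fun j => by
    rw [(hs j).1.natDegree_mul (ha q).1]
    push_cast
    rw [(hs j).2, (ha q).2]
  obtain ⟨v, hv, rfl⟩ := exists_eq_sum_mul_prod (fun j => s j * a q)
    (fun r => b r * a q - a r * b q) (fun r => (f r - e r) + (f q - e q) + m)
    (fun i => f q - e q + m + (f q - e i)) q
    (fun j _ => (hs j).1.mul (ha q).1)
    (fun r _ => (((hb r).mul (haD q)).mono (by linarith)).sub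
      (((haD r).mul (hb q)).mono (by linarith)))
    hcop
    (fun j hj => by have := hf hj.le; rw [hcd]; linarith)
    (fun j _ => by rw [hcd]; ring) q le_rfl h (hh.mono (le_of_eq (by
      rw [Finset.sum_range_succ]
      simp only [Finset.sum_add_distrib, Finset.sum_const, Finset.card_range, nsmul_eq_mul]
      ring)))
  have hex : ∀ j, ∃ U : F[X][X], j ≤ q → IsTwistedForm m 1 (f q - e j + m) U ∧
      (C (b q) + C (a q) * X : F[X][X]) ∣ C (a q) * U - C (v j) := by
    intro j
    by_cases hj : j ≤ q
    · obtain ⟨x, y, hxy, hx, hy⟩ := exists_eq_mul_add_mul_of_isCoprime (y := f q - e q + m)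
        (z := f q - e j) (ha q).1 hab (hb q) (hv j hj) (by rw [(ha q).2]; linarith [he hj])
      refine ⟨C x + C (-y) * X, fun _ => ⟨IsTwistedForm.linear (hy.neg.mono (by linarith))
        (hx.mono (by rw [(ha q).2]; linarith)), -C y, ?_⟩⟩
      rw [hxy]
      simp only [map_add, map_mul, map_neg]
      ring
    · exact ⟨0, fun h => absurd h hj⟩
  choose u hu using hex
  refine ⟨u, fun j hj => (hu j hj).1, ?_⟩
  obtain ⟨S, _, φ, hmod⟩ := exists_ringHom_eq_iff_dvd_sub (C (b q) + C (a q) * X)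
  rw [hmod]
  have hφu : ∀ j ≤ q, φ (C (a q)) * φ (u j) = φ (C (v j)) := fun j hj => by
    rw [← map_mul]
    exact (hmod _ _).1 (hu j hj).2
  have hφl : ∀ r, φ (C (a q)) * φ (C (b r) + C (a r) * X) =
      φ (C (b r * a q - a r * b q)) := fun r => by
    rw [← map_mul]
    refine (hmod _ _).1 ⟨C (a r), ?_⟩
    simp only [map_sub, map_mul]
    ring
  rw [map_mul, map_sum, map_sum, map_sum, Finset.mul_sum]
  refine Finset.sum_congr rfl fun j hj => ?_
  have hj' : j ≤ q := Nat.lt_succ_iff.1 (Finset.mem_range.1 hj)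
  simp only [map_mul, map_prod, ← hφu j hj', ← hφl, map_pow, Finset.prod_mul_distrib,
    Finset.prod_const, Finset.card_range, Nat.card_Ico]
  obtain ⟨i, rfl⟩ := Nat.exists_eq_add_of_le hj'
  rw [Nat.add_sub_cancel_left]
  ring

theorem isTwistedForm_row_term (ha : ∀ r, IntDegreeLE (a r) (f r - e r))
    (hb : ∀ r, IntDegreeLE (b r) (f r - e r + m))
    (hs : ∀ j, IntDegreeLE (s j) (f j - e (j + 1) + m)) {j : ℕ} (hj : j ≤ q) {u : F[X][X]}
    (hu : IsTwistedForm m 1 (f q - e j + m) u) :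
    IsTwistedForm m (q + 1) (∑ r ∈ Finset.range (q + 1), (f r - e r + m)) (u *
      ((∏ r ∈ Finset.range j, (C (b r) + C (a r) * X)) * ∏ r ∈ Finset.Ico j q, C (s r))) := by
  have h := hu.mul ((IsTwistedForm.prod (m := m) (Finset.range j) fun r _ =>
    IsTwistedForm.linear (p := a r) (q := b r) (D := f r - e r + m)
      ((ha r).mono (by linarith)) (hb r)).mul
    (IsTwistedForm.prod (m := m) (Finset.Ico j q) fun r _ => IsTwistedForm.const (hs r)))
  have hsum : ∀ q, j ≤ q → ∑ r ∈ Finset.range j, (f r - e r + m) +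
      ∑ r ∈ Finset.Ico j q, (f r - e (r + 1) + m) =
      ∑ r ∈ Finset.range q, (f r - e r + m) + e j - e q := by
    intro q hq
    induction q, hq using Nat.le_induction with
    | base => simp
    | succ q hq ih =>
      rw [Finset.sum_Ico_succ_top hq, Finset.sum_range_succ _ q]
      linarith
  have h1 : 1 + ((Finset.range j).card + (Finset.Ico j q).card) = q + 1 := by
    rw [Finset.card_range, Nat.card_Ico]
    omega
  rw [h1, hsum q hj] at h
  have h2 : f q - e j + m + (∑ r ∈ Finset.range q, (f r - e r + m) + e j - e q) =
      ∑ r ∈ Finset.range (q + 1), (f r - e r + m) := by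
    rw [Finset.sum_range_succ]
    ring
  rwa [h2] at h

/-- The differential of the determinant at an upper bidiagonal matrix, in the direction of lower
triangular matrices, is surjective. -/
theorem exists_eq_sum_lower_triangular (K : ℕ) (hf : Monotone f) (he : Monotone e)
    (ha : ∀ r, (a r).Monic ∧ ((a r).natDegree : ℤ) = f r - e r)
    (hb : ∀ r, IntDegreeLE (b r) (f r - e r + m)) (hab : ∀ r, IsCoprime (a r) (b r))
    (hs : ∀ j, (s j).Monic ∧ ((s j).natDegree : ℤ) = f j - e (j + 1) + m)
    (hcop : ∀ q < K, ∀ j < q, ∀ r ≤ j, IsCoprime (b r * a q - a r * b q) (s j * a q)) :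
    ∀ n, 1 ≤ n → n ≤ K → ∀ P : F[X][X],
      IsTwistedForm m n (∑ r ∈ Finset.range n, (f r - e r + m)) P →
      ∃ u : ℕ → ℕ → F[X][X],
        (∀ i < n, ∀ j ≤ i, IsTwistedForm m 1 (f i - e j + m) (u i j)) ∧
        P = ∑ i ∈ Finset.range n, ∑ j ∈ Finset.range (i + 1), u i j *
          ((∏ r ∈ Finset.range j, (C (b r) + C (a r) * X)) * (∏ r ∈ Finset.Ico j i, C (s r)) *
            ∏ r ∈ Finset.Ico (i + 1) n, (C (b r) + C (a r) * X)) := by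
  have haD : ∀ r, IntDegreeLE (a r) (f r - e r) := fun r =>
    IntDegreeLE.of_natDegree_le (ha r).2.le
  intro n hn
  induction n, hn using Nat.le_induction with
  | base =>
    intro _ P hP
    refine ⟨fun _ _ => P, fun i hi j hj => ?_, by simp⟩
    obtain rfl : i = 0 := by omega
    obtain rfl : j = 0 := by omega
    simpa using hP
  | succ q _ ih =>
    intro hq P hP
    obtain ⟨h, hh, hPh⟩ := hP.exists_dvd_sub (haD q) (hb q)
    obtain ⟨u, hu, hdvd⟩ := exists_row_dvd_sub hf he ha hb (hab q) hs (hcop q hq)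
      (hh.mono (by push_cast; rfl))
    set R := ∑ j ∈ Finset.range (q + 1), u j *
      ((∏ r ∈ Finset.range j, (C (b r) + C (a r) * X)) * ∏ r ∈ Finset.Ico j q, C (s r)) with hR
    have hRform : IsTwistedForm m (q + 1) (∑ r ∈ Finset.range (q + 1), (f r - e r + m)) R :=
      IsTwistedForm.sum _ fun j hj => by
        have hj' := Nat.lt_succ_iff.1 (Finset.mem_range.1 hj)
        exact isTwistedForm_row_term haD hb (fun j => IntDegreeLE.of_natDegree_le (hs j).2.le)
          hj' (hu j hj')
    have hdvd' : (C (b q) + C (a q) * X : F[X][X]) ∣ C (a q) ^ (q + 1) * (P - R) := by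
      have := dvd_sub hPh hdvd
      rwa [sub_sub_sub_cancel_right, ← mul_sub] at this
    have hcopl : IsCoprime (C (b q) + C (a q) * X : F[X][X]) (C (a q)) := by
      obtain ⟨x, y, hxy⟩ := hab q
      have hxy' := congrArg (C : F[X] →+* F[X][X]) hxy
      simp only [map_add, map_mul, map_one] at hxy'
      exact ⟨C y, C x - C y * X, by linear_combination hxy'⟩
    obtain ⟨Q, hQ⟩ := hcopl.pow_right.dvd_of_dvd_mul_left hdvd'
    have hQform := IsTwistedForm.of_linear_mul (a := a q) (b := b q) (m := m) (ha q).1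
      (by rw [(ha q).2]; exact hb q) (hQ ▸ hP.sub hRform)
    obtain ⟨w, hw, hQw⟩ := ih (by omega) Q (by
      rw [(ha q).2, Finset.sum_range_succ, add_sub_cancel_right] at hQform
      exact hQform)
    refine ⟨fun i => if i = q then u else w i, fun i hi j hj => ?_, ?_⟩
    · dsimp only
      split_ifs with hiq
      · subst hiq
        exact hu j hj
      · exact hw i (by omega) j hj
    · rw [sub_eq_iff_eq_add] at hQ
      rw [hQ, Finset.sum_range_succ]
      simp only [if_true, Finset.Ico_self, Finset.prod_empty, mul_one]
      rw [← hR]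
      congr 1
      rw [hQw, Finset.mul_sum]
      refine Finset.sum_congr rfl fun i hi => ?_
      have hi' := Finset.mem_range.1 hi
      rw [Finset.mul_sum]
      refine Finset.sum_congr rfl fun j _ => ?_
      rw [if_neg hi'.ne, Finset.prod_Ico_succ_top (by omega)]
      ring

end Row

/-- The coordinates of a point scaled by `r` scale the value of a homogeneous polynomial. -/
theorem aeval_mul_left_of_isHomogeneous {σ F A : Type*} [CommSemiring F]
    [CommSemiring A] [Algebra F A] {p : MvPolynomial σ F} {n : ℕ} (hp : p.IsHomogeneous n)
    (r : A) (x : σ → A) :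
    MvPolynomial.aeval (fun s => r * x s) p = r ^ n * MvPolynomial.aeval x p := by
  rw [MvPolynomial.aeval_def, MvPolynomial.aeval_def, MvPolynomial.eval₂_eq, MvPolynomial.eval₂_eq,
    Finset.mul_sum]
  refine Finset.sum_congr rfl fun d hd => ?_
  have hd' := hp (MvPolynomial.mem_support_iff.1 hd)
  simp only [mul_pow, Finset.prod_mul_distrib, Finset.prod_pow_eq_pow_sum]
  rw [Finsupp.weight_apply, Finsupp.sum] at hd'
  simp only [Pi.one_apply, smul_eq_mul, mul_one] at hd'
  rw [hd']
  ring

/-- A polynomial vanishing along curves through `z` in every tangent direction is zero. -/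
theorem eq_zero_of_eval_curves {σ F : Type*} [Field F] [Infinite F]
    (ψ : MvPolynomial σ F) (z : σ → F)
    (h : ∀ w : σ → F, ∃ p : σ → F[X], (∀ s, (p s).coeff 0 = z s) ∧ (∀ s, (p s).coeff 1 = w s) ∧
      ∀ c, MvPolynomial.eval (fun s => (p s).eval c) ψ = 0) : ψ = 0 := by
  classical
  set ψ' : MvPolynomial σ F :=
    MvPolynomial.aeval (fun s => MvPolynomial.X s + MvPolynomial.C (z s)) ψ with hψ'
  have hback : MvPolynomial.aeval
      (fun s => (MvPolynomial.X s - MvPolynomial.C (z s) : MvPolynomial σ F)) ψ' = ψ := by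
    rw [hψ', ← AlgHom.comp_apply, MvPolynomial.comp_aeval]
    simp
  suffices hcomp : ∀ n, MvPolynomial.homogeneousComponent n ψ' = 0 by
    rw [← hback, ← MvPolynomial.sum_homogeneousComponent ψ', Finset.sum_eq_zero fun n _ => hcomp n,
      map_zero]
  intro n
  induction n using Nat.strong_induction_on with
  | _ n ih =>
  refine MvPolynomial.funext fun w => ?_
  obtain ⟨p, hp0, hp1, hp⟩ := h w
  set q : σ → F[X] := fun s => (p s).divX with hq
  have hpq : ∀ s, p s = X * q s + C (z s) := fun s => by
    rw [hq, ← hp0 s, mul_comm, divX_mul_X_add]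
  have hzero : MvPolynomial.aeval p ψ = 0 := by
    refine Polynomial.funext fun c => ?_
    rw [eval_zero, ← hp c, ← Polynomial.coe_evalRingHom, ← MvPolynomial.eval₂_id]
    rw [MvPolynomial.aeval_def, MvPolynomial.hom_eval₂]
    congr 1
    ext x
    simp
  have hshift : MvPolynomial.aeval (fun s => X * q s) ψ' = 0 := by
    rw [← hzero, hψ', ← AlgHom.comp_apply, MvPolynomial.comp_aeval]
    congr 1
    congr 1
    funext s
    rw [hpq s]
    simp
  have hcoeff : ∀ i, (MvPolynomial.aeval (fun s => X * q s)
      (MvPolynomial.homogeneousComponent i ψ')).coeff n =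
      if i = n then MvPolynomial.eval w (MvPolynomial.homogeneousComponent n ψ') else 0 := by
    intro i
    rw [aeval_mul_left_of_isHomogeneous (MvPolynomial.homogeneousComponent_isHomogeneous i ψ'),
      coeff_X_pow_mul']
    rcases lt_trichotomy i n with hin | rfl | hin
    · rw [ih i hin]
      simp [hin.ne]
    · rw [if_pos le_rfl, if_pos rfl, Nat.sub_self, coeff_zero_eq_eval_zero,
        ← Polynomial.coe_evalRingHom, MvPolynomial.aeval_def, MvPolynomial.hom_eval₂,
        ← MvPolynomial.eval₂_id]
      congr 1
      · ext x
        simp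
      · funext s
        simp [hq, ← coeff_zero_eq_eval_zero, coeff_divX, hp1]
    · rw [if_neg (by omega), if_neg (by omega)]
  have h0 := congrArg (fun r => r.coeff n) hshift
  simp only [coeff_zero] at h0
  rw [← MvPolynomial.sum_homogeneousComponent ψ', map_sum, finsetSum_coeff] at h0
  simp only [hcoeff, Finset.sum_ite_eq'] at h0
  rw [map_zero]
  by_cases hn : n ∈ Finset.range (ψ'.totalDegree + 1)
  · rwa [if_pos hn] at h0
  · rw [MvPolynomial.homogeneousComponent_eq_zero n ψ' (by simpa using hn), map_zero]

namespace Matrix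

variable {R : Type*} [CommRing R]

theorem derivative_det {ι : Type*} [Fintype ι] [DecidableEq ι] (M : Matrix ι ι R[X]) :
    derivative M.det = ∑ c, (M.updateCol c fun r => derivative (M r c)).det := by
  simp only [det_apply, derivative_sum, Units.smul_def, derivative_smul, derivative_prod_finset]
  rw [Finset.sum_comm]
  refine Finset.sum_congr rfl fun g _ => ?_
  rw [← Finset.smul_sum]
  congr 1
  refine Finset.sum_congr rfl fun c _ => ?_
  rw [← Finset.prod_erase_mul _ _ (Finset.mem_univ c), updateCol_self]
  congr 1
  refine Finset.prod_congr rfl fun i hi => ?_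
  rw [updateCol_ne (Finset.ne_of_mem_erase hi)]

theorem coeff_one_det_map_C_add_X_smul {ι : Type*} [Fintype ι] [DecidableEq ι]
    (M N : Matrix ι ι R) :
    (M.map C + (X : R[X]) • N.map C).det.coeff 1 = ∑ c, ∑ r, M.adjugate c r * N r c := by
  have h1 : (M.map C + (X : R[X]) • N.map C).det.coeff 1 =
      (derivative (M.map C + (X : R[X]) • N.map C).det).eval 0 := by
    rw [← coeff_zero_eq_eval_zero, coeff_derivative]
    simp
  rw [h1, derivative_det, eval_finsetSum]
  refine Finset.sum_congr rfl fun c _ => ?_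
  have h2 : ∑ r, M.adjugate c r * N r c = (M.adjugate *ᵥ fun r => N r c) c := rfl
  rw [h2, ← cramer_eq_adjugate_mulVec, cramer_apply, ← coe_evalRingHom, RingHom.map_det]
  congr 1
  ext i j
  by_cases hj : j = c
  · subst hj
    simp
  · simp [updateCol_ne hj]

theorem eval_det_map_C_add_X_smul {ι : Type*} [Fintype ι] [DecidableEq ι]
    (M N : Matrix ι ι R) (c : R) :
    (M.map C + (X : R[X]) • N.map C).det.eval c = (M + c • N).det := by
  rw [← coe_evalRingHom, RingHom.map_det]
  congr 1
  ext i j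
  simpa using mul_comm (N i j) c

/-- The adjugate of an upper bidiagonal matrix. -/
theorem adjugate_bidiagonal [IsDomain R] (l s : ℕ → R) (hl : ∀ i, l i ≠ 0) (k : ℕ)
    (i j : Fin k) :
    (Matrix.of fun r c : Fin k =>
        if (c : ℕ) = r then l r else if (c : ℕ) = r + 1 then -s r else 0).adjugate j i =
      if (j : ℕ) ≤ i then
        (∏ r ∈ Finset.range j, l r) * (∏ r ∈ Finset.Ico (j : ℕ) i, s r) *
          ∏ r ∈ Finset.Ico ((i : ℕ) + 1) k, l r
      else 0 := by
  set M : Matrix (Fin k) (Fin k) R := Matrix.of fun r c : Fin k =>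
    if (c : ℕ) = r then l r else if (c : ℕ) = r + 1 then -s r else 0 with hM
  set G : ℕ → ℕ → R := fun i j => if j ≤ i then
      (∏ r ∈ Finset.range j, l r) * (∏ r ∈ Finset.Ico j i, s r) *
        ∏ r ∈ Finset.Ico (i + 1) k, l r else 0 with hG
  have hdet : M.det = ∏ r ∈ Finset.range k, l r := by
    rw [det_of_isUpperTriangular, Finset.prod_range]
    · simp [hM]
    · intro r c hrc
      have hrc' : (c : ℕ) < r := hrc
      simp only [hM, of_apply]
      rw [if_neg (by omega), if_neg (by omega)]
  have hmul : M * Matrix.of (fun j i : Fin k => G i j) =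
      M.det • (1 : Matrix (Fin k) (Fin k) R) := by
    ext r i
    have hentry : (M * Matrix.of (fun j i : Fin k => G i j)) r i =
        l r * G i r - s r * G i (r + 1) := by
      rw [mul_apply]
      simp only [of_apply, hM]
      have hterm : ∀ c : Fin k,
          (if (c : ℕ) = r then l r else if (c : ℕ) = r + 1 then -s r else 0) * G i c =
          (if (c : ℕ) = r then l r * G i r else 0) -
            (if (c : ℕ) = r + 1 then s r * G i (r + 1) else 0) := by
        intro c
        split_ifs with h1 h2 h3
        · omega
        · rw [h1]; ring
        · rw [h3]; ring
        · ring
      simp only [hterm, Finset.sum_sub_distrib]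
      rw [Fin.sum_univ_eq_sum_range (fun c => if c = (r : ℕ) then l r * G i r else 0),
        Fin.sum_univ_eq_sum_range (fun c => if c = (r : ℕ) + 1 then s r * G i (r + 1) else 0),
        Finset.sum_ite_eq', Finset.sum_ite_eq', if_pos (Finset.mem_range.2 r.2)]
      split_ifs with h
      · rfl
      · have hG0 : G i (r + 1) = 0 := if_neg (by
          have := i.2
          have := Finset.mem_range.not.1 h
          omega)
        rw [hG0, mul_zero]
    have hone : (M.det • (1 : Matrix (Fin k) (Fin k) R)) r i = if r = i then M.det else 0 := by
      rw [smul_apply, one_apply, smul_eq_mul, mul_ite, mul_one, mul_zero]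
    rw [hentry, hone, hdet]
    rcases lt_trichotomy (r : ℕ) i with h | h | h
    · rw [if_neg (fun h' => by rw [h'] at h; omega)]
      simp only [hG]
      rw [if_pos h.le, if_pos (by omega), Finset.prod_range_succ,
        Finset.prod_eq_prod_Ico_succ_bot h]
      ring
    · obtain rfl : r = i := Fin.ext h
      simp only [hG]
      rw [if_pos le_rfl, if_neg (by omega), if_pos trivial, Finset.Ico_self, Finset.prod_empty,
        Finset.range_eq_Ico, Finset.range_eq_Ico,
        ← Finset.prod_Ico_consecutive _ (Nat.zero_le (r : ℕ)) r.2.le,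
        Finset.prod_eq_prod_Ico_succ_bot r.2]
      ring
    · rw [if_neg (fun h' => by rw [h'] at h; omega)]
      simp only [hG]
      rw [if_neg (by omega), if_neg (by omega)]
      ring
  have hdet0 : M.det ≠ 0 := by
    rw [hdet]
    exact Finset.prod_ne_zero_iff.2 fun r _ => hl r
  have hadj : M.adjugate = Matrix.of (fun j i : Fin k => G i j) := by
    have h1 := congrArg (M.adjugate * ·) hmul
    simp only [← Matrix.mul_assoc, adjugate_mul, Matrix.smul_mul, Matrix.mul_smul, Matrix.one_mul,
      Matrix.mul_one] at h1
    ext r c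
    have h2 := congrFun (congrFun h1 r) c
    simp only [smul_apply, smul_eq_mul] at h2
    exact (mul_left_cancel₀ hdet0 h2).symm
  rw [hadj]
  rfl

end Matrix

theorem IsTwistedForm.monomial {F : Type*} [CommRing F] {m k j n : ℕ} {D : ℤ} (hj : j ≤ k)
    (hn : (n : ℤ) + j * m ≤ D) (x : F) :
    IsTwistedForm m k D (Polynomial.monomial j (Polynomial.monomial n x)) := by
  intro i
  rw [coeff_monomial]
  split_ifs with h
  · subst h
    refine ⟨fun h => absurd hj (by omega), fun l hl => ?_⟩
    rw [coeff_monomial, if_neg (by omega)]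
  · exact ⟨fun _ => rfl, IntDegreeLE.zero⟩

theorem IsTwistedForm.eq_linear {F : Type*} [CommRing F] {m : ℕ} {D : ℤ} {P : F[X][X]}
    (hP : IsTwistedForm m 1 D P) : C (P.coeff 1) * X + C (P.coeff 0) = P := by
  ext1 j
  rcases j with _ | _ | j
  · simp
  · simp
  · rw [(hP (j + 2)).1 (by omega)]
    simp

/-- Applying a linear functional to a polynomial with coefficients in an algebra. -/
theorem exists_polynomial_coeff_eq {F R : Type*} [CommRing F] [CommRing R] [Algebra F R]
    (L : R →ₗ[F] F) (D : R[X]) :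
    ∃ p : F[X], (∀ i, p.coeff i = L (D.coeff i)) ∧
      ∀ c : F, p.eval c = L (D.eval (algebraMap F R c)) := by
  induction D using Polynomial.induction_on' with
  | add D E hD hE =>
    obtain ⟨p, hp, hp'⟩ := hD
    obtain ⟨q, hq, hq'⟩ := hE
    exact ⟨p + q, fun i => by rw [coeff_add, coeff_add, map_add, hp, hq],
      fun c => by rw [eval_add, eval_add, map_add, hp', hq']⟩
  | monomial n x =>
    refine ⟨monomial n (L x), fun i => ?_, fun c => ?_⟩
    · rw [coeff_monomial, coeff_monomial]
      split_ifs
      · rfl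
      · rw [map_zero]
    · rw [eval_monomial, eval_monomial, ← map_pow, mul_comm x, ← Algebra.smul_def, map_smul,
        smul_eq_mul, mul_comm]

theorem coeff_det_C_mul_X_add_C_mul_X {R : Type*} [CommRing R] {k j : ℕ} (hj : j ≤ k)
    (A B : Matrix (Fin k) (Fin k) R) :
    MvPolynomial.coeff (Finsupp.single (0 : Fin 2) j + Finsupp.single (1 : Fin 2) (k - j))
      (Matrix.det (Matrix.of fun r c : Fin k =>
        MvPolynomial.C (A r c) * MvPolynomial.X 0 + MvPolynomial.C (B r c) * MvPolynomial.X 1)) =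
      (Matrix.det (Matrix.of fun r c : Fin k => C (A r c) * X + C (B r c))).coeff j := by
  have hhom : (Matrix.det (Matrix.of fun r c : Fin k =>
      MvPolynomial.C (σ := Fin 2) (A r c) * MvPolynomial.X 0 +
        MvPolynomial.C (B r c) * MvPolynomial.X 1)).IsHomogeneous k := by
    rw [Matrix.det_apply']
    refine MvPolynomial.IsHomogeneous.sum _ _ _ fun g _ => ?_
    have hprod : (∏ i, (Matrix.of fun r c : Fin k =>
        MvPolynomial.C (σ := Fin 2) (A r c) * MvPolynomial.X 0 +
          MvPolynomial.C (B r c) * MvPolynomial.X 1) (g i) i).IsHomogeneous k := by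
      have := MvPolynomial.IsHomogeneous.prod (Finset.univ : Finset (Fin k))
        (fun i => (Matrix.of fun r c : Fin k =>
          MvPolynomial.C (σ := Fin 2) (A r c) * MvPolynomial.X 0 +
            MvPolynomial.C (B r c) * MvPolynomial.X 1) (g i) i) (fun _ => 1)
        (fun i _ => (MvPolynomial.isHomogeneous_C_mul_X _ _).add
          (MvPolynomial.isHomogeneous_C_mul_X _ _))
      simpa using this
    rcases Int.units_eq_one_or (Equiv.Perm.sign g) with h | h
    · simpa [h] using hprod
    · simpa [h] using hprod.neg
  rw [← homogenize_eq_of_isHomogeneous hhom rfl, coeff_homogenize]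
  rw [if_pos (by simp; omega), AlgHom.map_det]
  congr 2
  · ext r c : 2
    simp
  · simp

theorem Fin.sum_univ_ite_le {M : Type*} [AddCommMonoid M] {k : ℕ} (r : Fin k) (g : ℕ → M) :
    ∑ c : Fin k, (if (c : ℕ) ≤ r then g c else 0) = ∑ j ∈ Finset.range (r + 1), g j := by
  rw [Fin.sum_univ_eq_sum_range (fun c => if c ≤ (r : ℕ) then g c else 0), ← Finset.sum_filter]
  refine Finset.sum_congr (Finset.ext fun j => ?_) fun _ _ => rfl
  simp only [Finset.mem_filter, Finset.mem_range]
  omega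

/-- Some matrix of linear forms at which the differential of the determinant is surjective. -/
theorem exists_coeff_one_det_eq {F : Type*} [Field F] [Infinite F] (k m : ℕ) {e f : ℕ → ℤ}
    (he : Monotone e) (hf : Monotone f) (hef : ∀ i, e i ≤ f i)
    (hefm : ∀ i, e (i + 1) - (m : ℤ) ≤ f i) (hk : 1 ≤ k) :
    ∃ M : Matrix (Fin k) (Fin k) F[X][X],
      (∀ r c : Fin k, IsTwistedForm m 1 (f r - e c + m) (M r c)) ∧
      ∀ P : F[X][X], IsTwistedForm m k (∑ i : Fin k, (f i - e i + m)) P →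
        ∃ N : Matrix (Fin k) (Fin k) F[X][X],
          (∀ r c : Fin k, IsTwistedForm m 1 (f r - e c + m) (N r c)) ∧
          (M.map C + (X : F[X][X][X]) • N.map C).det.coeff 1 = P := by
  obtain ⟨a, b, s, ha, hb, hab, hs, hcop⟩ := exists_generic_linear_forms (F := F)
    (fun r => (f r - e r).toNat) (fun j => (f j - e (j + 1) + m).toNat) k
  have ha' : ∀ r, (a r).Monic ∧ ((a r).natDegree : ℤ) = f r - e r := fun r =>
    ⟨(ha r).1, by rw [(ha r).2, Int.toNat_of_nonneg]; linarith [hef r]⟩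
  have hs' : ∀ j, (s j).Monic ∧ ((s j).natDegree : ℤ) = f j - e (j + 1) + m := fun j =>
    ⟨(hs j).1, by rw [(hs j).2, Int.toNat_of_nonneg]; linarith [hefm j]⟩
  have hb' : ∀ r, IntDegreeLE (b r) (f r - e r + m) := fun r =>
    IntDegreeLE.of_natDegree_le (by rw [hb r]; push_cast; linarith [hef r])
  have hl : ∀ r, C (b r) + C (a r) * X ≠ 0 := fun r h => by
    have h1 := congrArg (fun p => coeff p 1) h
    simp only [coeff_add, coeff_C_mul, coeff_X_one, coeff_C, one_ne_zero, if_false, zero_add,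
      mul_one, coeff_zero] at h1
    exact (ha r).1.ne_zero h1
  refine ⟨Matrix.of fun r c : Fin k => if (c : ℕ) = r then C (b r) + C (a r) * X
    else if (c : ℕ) = r + 1 then -C (s r) else 0, fun r c => ?_, fun P hP => ?_⟩
  · rw [Matrix.of_apply]
    split_ifs with h h'
    · rw [h]
      exact .linear (.of_natDegree_le (by rw [(ha' r).2]; linarith)) (hb' r)
    · rw [h']
      exact (IsTwistedForm.const (.of_natDegree_le (hs' r).2.le)).neg
    · exact .zero
  · rw [Fin.sum_univ_eq_sum_range (fun i => f i - e i + m)] at hP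
    obtain ⟨u, hu, rfl⟩ := exists_eq_sum_lower_triangular k hf he ha' hb' hab hs' hcop k hk le_rfl
      P hP
    refine ⟨Matrix.of fun r c => if (c : ℕ) ≤ r then u r c else 0, fun r c => ?_, ?_⟩
    · rw [Matrix.of_apply]
      split_ifs with h
      · exact hu r r.2 c h
      · exact .zero
    · rw [Matrix.coeff_one_det_map_C_add_X_smul, Finset.sum_comm, ← Fin.sum_univ_eq_sum_range
        (fun i => ∑ j ∈ Finset.range (i + 1), u i j * ((∏ r ∈ Finset.range j,
          (C (b r) + C (a r) * X)) * (∏ r ∈ Finset.Ico j i, C (s r)) *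
          ∏ r ∈ Finset.Ico (i + 1) k, (C (b r) + C (a r) * X)))]
      refine Finset.sum_congr rfl fun r _ => ?_
      rw [← Fin.sum_univ_ite_le]
      refine Finset.sum_congr rfl fun c _ => ?_
      rw [Matrix.adjugate_bidiagonal _ (fun i => C (s i)) hl, Matrix.of_apply]
      split_ifs
      · rw [mul_comm]
      · rw [mul_zero]

theorem Fin.exists_monotone_nat_extension {k m : ℕ} (hk : 1 ≤ k) {e f : Fin k → ℤ}
    (he : Monotone e) (hf : Monotone f) (hef : ∀ i, e i ≤ f i)
    (hefm : ∀ i : Fin k, ∀ h : (i : ℕ) + 1 < k, e ⟨(i : ℕ) + 1, h⟩ - (m : ℤ) ≤ f i) :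
    ∃ e' f' : ℕ → ℤ, Monotone e' ∧ Monotone f' ∧ (∀ i, e' i ≤ f' i) ∧
      (∀ i, e' (i + 1) - (m : ℤ) ≤ f' i) ∧ (∀ i : Fin k, e' i = e i) ∧ ∀ i : Fin k, f' i = f i := by
  have hmin : ∀ n, min n (k - 1) < k := fun n => by omega
  have hval : ∀ i : Fin k, (⟨min i (k - 1), hmin i⟩ : Fin k) = i := fun i =>
    Fin.ext (by simp only; omega)
  refine ⟨fun n => e ⟨min n (k - 1), hmin n⟩, fun n => f ⟨min n (k - 1), hmin n⟩,
    fun i j hij => he (Fin.mk_le_mk.2 (by omega)), fun i j hij => hf (Fin.mk_le_mk.2 (by omega)),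
    fun i => hef _, fun i => ?_, fun i => by simp only [hval], fun i => by simp only [hval]⟩
  by_cases h : i + 1 < k
  · have h1 : (⟨min (i + 1) (k - 1), hmin (i + 1)⟩ : Fin k) =
        ⟨min i (k - 1) + 1, by omega⟩ := Fin.ext (by simp only; omega)
    simp only [h1]
    exact hefm ⟨min i (k - 1), hmin i⟩ (by simp only; omega)
  · have h1 : (⟨min (i + 1) (k - 1), hmin (i + 1)⟩ : Fin k) = ⟨min i (k - 1), hmin i⟩ :=
      Fin.ext (by simp only; omega)
    simp only [h1]
    linarith [hef ⟨min i (k - 1), hmin i⟩]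

/-- A twisted form with prescribed coefficients. -/
theorem IsTwistedForm.exists_coeff_eq {F : Type*} [CommRing F] {k m : ℕ} {δ : ℤ} (hδ : 0 ≤ δ)
    (w : ((j : Fin (k + 1)) × Fin ((δ + (((k - (j : ℕ)) * m : ℕ) : ℤ)).toNat + 1)) → F) :
    ∃ P : F[X][X], IsTwistedForm m k (δ + k * m) P ∧
      ∀ s, (P.coeff (s.1 : ℕ)).coeff (s.2 : ℕ) = w s := by
  refine ⟨∑ s, Polynomial.monomial (s.1 : ℕ) (Polynomial.monomial (s.2 : ℕ) (w s)),
    IsTwistedForm.sum _ fun s _ => ?_, fun s => ?_⟩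
  · have hj : (s.1 : ℕ) ≤ k := Nat.lt_succ_iff.1 s.1.2
    refine IsTwistedForm.monomial hj ?_ _
    have h := s.2.2
    have h2 : (k : ℤ) * m = ((k - (s.1 : ℕ)) * m : ℕ) + (s.1 : ℕ) * m := by
      push_cast [Nat.cast_sub hj]
      ring
    omega
  · rw [finsetSum_coeff, finsetSum_coeff, Finset.sum_eq_single s]
    · rw [coeff_monomial_same, coeff_monomial_same]
    · rintro ⟨j, n⟩ - hne
      rw [coeff_monomial]
      split_ifs with h
      · obtain rfl : j = s.1 := Fin.ext h
        rw [coeff_monomial, if_neg]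
        intro h'
        obtain rfl : n = s.2 := Fin.ext h'
        exact hne rfl
      · exact coeff_zero _
    · exact fun h => absurd (Finset.mem_univ s) h

/-- Dominance of the determinant map `φ` (Lemma 3.2).  `V` is the space of pairs `(A, B)` of
`k × k` matrices over `F[t]` with `deg A r c ≤ f r - e (k+1-c)` and
`deg B r c ≤ f r - e (k+1-c) + m` (encoded via vanishing of coefficients beyond the bound),
and `φ (A, B)` is the tuple of coefficients `P_j ∈ F[t]` of `det (A·x + B·y) = Σ P_j x^j y^(k-j)`,
a point of the space `W` of tuples `(P_0, …, P_k)` with `deg P_j ≤ δ + (k-j)·m`.  A polynomial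
function `ψ` on `W` (a polynomial in the coefficient-coordinates of `W`) vanishing on the image
of `φ` is zero. -/
theorem stmt_6 {F : Type*} [Field F] [IsAlgClosed F] (k : ℕ) (hk : 1 ≤ k) (m : ℕ)
    (e f : Fin k → ℤ) (he : Monotone e) (hf : Monotone f)
    (hef : ∀ i, e i ≤ f i)
    (hefm : ∀ i : Fin k, ∀ h : (i : ℕ) + 1 < k, e ⟨(i : ℕ) + 1, h⟩ - (m : ℤ) ≤ f i)
    (δ : ℤ) (hδ : δ = ∑ i, (f i - e i))
    (ψ : MvPolynomial ((j : Fin (k + 1)) × Fin ((δ + (((k - (j : ℕ)) * m : ℕ) : ℤ)).toNat + 1)) F)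
    (hψ : ∀ A B : Matrix (Fin k) (Fin k) (Polynomial F),
      (∀ r c : Fin k, ∀ n : ℕ, f r - e c.rev < (n : ℤ) → (A r c).coeff n = 0) →
      (∀ r c : Fin k, ∀ n : ℕ, f r - e c.rev + (m : ℤ) < (n : ℤ) → (B r c).coeff n = 0) →
      MvPolynomial.eval (fun s =>
        ((MvPolynomial.coeff
            (Finsupp.single (0 : Fin 2) ((s.1 : ℕ)) + Finsupp.single (1 : Fin 2) (k - (s.1 : ℕ)))
            (Matrix.det (Matrix.of fun r c : Fin k =>
              MvPolynomial.C (A r c) * MvPolynomial.X 0 +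
                MvPolynomial.C (B r c) * MvPolynomial.X 1))).coeff (s.2 : ℕ))) ψ = 0) :
    ψ = 0 := by
  obtain ⟨e', f', he', hf', hef', hefm', hee, hff⟩ :=
    Fin.exists_monotone_nat_extension hk he hf hef hefm
  obtain ⟨M, hM, hMN⟩ := exists_coeff_one_det_eq (F := F) k m he' hf' hef' hefm' hk
  simp only [hee, hff] at hM hMN
  have hδ0 : 0 ≤ δ := hδ ▸ Finset.sum_nonneg fun i _ => sub_nonneg.2 (hef i)
  have hsum : ∑ i, (f i - e i + m) = δ + k * m := by
    rw [Finset.sum_add_distrib, ← hδ]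
    simp
  rw [hsum] at hMN
  set ε : F := ((Equiv.Perm.sign (Fin.revPerm (n := k)) : ℤ) : F) with hε
  have hεε : ε * ε = 1 := by
    rw [hε, ← Int.cast_mul, Int.units_coe_mul_self, Int.cast_one]
  let L (s : (j : Fin (k + 1)) × Fin ((δ + (((k - (j : ℕ)) * m : ℕ) : ℤ)).toNat + 1)) :
      F[X][X] →ₗ[F] F := ε • (lcoeff F s.2 ∘ₗ (lcoeff F[X] s.1).restrictScalars F)
  have hL : ∀ s P, L s P = ε * (P.coeff (s.1 : ℕ)).coeff (s.2 : ℕ) := fun s P => rfl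
  refine eq_zero_of_eval_curves ψ (fun s => L s M.det) fun w => ?_
  obtain ⟨P, hP, hPw⟩ := IsTwistedForm.exists_coeff_eq (m := m) hδ0 fun s => ε * w s
  obtain ⟨N, hN, hdet⟩ := hMN P hP
  choose p hp hpc using fun s => exists_polynomial_coeff_eq (L s)
    (M.map C + (X : F[X][X][X]) • N.map C).det
  refine ⟨p, fun s => ?_, fun s => ?_, fun c => ?_⟩
  · rw [hp, coeff_zero_eq_eval_zero, Matrix.eval_det_map_C_add_X_smul, zero_smul, add_zero]
  · rw [hp, hdet, hL, hPw, ← mul_assoc, hεε, one_mul]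
  · set Q := M + algebraMap F F[X][X] c • N with hQdef
    have hQ : ∀ r i, IsTwistedForm m 1 (f r - e i + m) (Q r i) := fun r i => by
      have hc : IsTwistedForm m 0 0 (algebraMap F F[X][X] c) := by
        have h := IsTwistedForm.monomial (m := m) (k := 0) (D := 0) (j := 0) (n := 0) le_rfl
          (by simp) c
        simpa using h
      have h := (hM r i).add (by simpa using hc.mul (hN r i))
      exact h
    have h := hψ (Matrix.of fun r i => (Q r i.rev).coeff 1)
      (Matrix.of fun r i => (Q r i.rev).coeff 0)
      (fun r i n hn => ((hQ r i.rev) 1).2 n (by push_cast; linarith))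
      (fun r i n hn => ((hQ r i.rev) 0).2 n (by push_cast; linarith))
    convert h using 3
    funext s
    rw [hpc, hL, Matrix.eval_det_map_C_add_X_smul, ← hQdef,
      coeff_det_C_mul_X_add_C_mul_X (Nat.lt_succ_iff.1 s.1.2)]
    have hperm : (Matrix.of fun r i : Fin k =>
        C ((Matrix.of fun r i => (Q r i.rev).coeff 1 : Matrix (Fin k) (Fin k) F[X]) r i) * X +
        C ((Matrix.of fun r i => (Q r i.rev).coeff 0 : Matrix (Fin k) (Fin k) F[X]) r i)) =
        Q.submatrix id Fin.revPerm := by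
      ext1 r i
      exact (hQ r i.rev).eq_linear
    rw [hperm, Matrix.det_permute']
    have hcast : ((Equiv.Perm.sign (Fin.revPerm (n := k)) : ℤ) : F[X][X]) = C (C ε) := by
      rw [hε, map_intCast, map_intCast]
    rw [hcast, coeff_C_mul, coeff_C_mul]
end

section
/- Let F be an algebraically closed field, m ≥ 0 an integer, and e_1 ≤ e_2, f_1, f_2 integers with f_1 ≥ e_1, f_2 ≥ e_2, and f_1 ≥ e_2 − m; set δ = (f_1 + f_2) − (e_1 + e_2). Then for all homogeneous polynomials P_2, P_1, P_0 ∈ F[s,t] of degrees δ, δ + m, δ + 2m respectively, there exist homogeneous polynomials A_{12}, A_{21}, A_{22}, B_{11}, B_{12}, B_{21} ∈ F[s,t] of degrees f_1 − e_1, f_2 − e_2, f_2 − e_1, f_1 − e_2 + m, f_1 − e_1 + m, f_2 − e_2 + m respectively such that −A_{21}·A_{12} = P_2, B_{11}·A_{22} − A_{12}·B_{21} − A_{21}·B_{12} = P_1, and −B_{21}·B_{12} = P_0; equivalently, the determinant of the 2×2 matrix with rows (B_{11}·y, A_{12}·x + B_{12}·y) and (A_{21}·x + B_{21}·y, A_{22}·x)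 equals P_2·x² + P_1·xy + P_0·y². -/
open Polynomial in
/-- Over an algebraically closed field, a polynomial of degree at most `a + b` is a product of
polynomials of degrees at most `a` and `b`. -/
theorem Polynomial.exists_eq_mul_of_natDegree_le_add {F : Type*} [Field F] [IsAlgClosed F]
    (a b : ℕ) (p : F[X]) (hp : p.natDegree ≤ a + b) :
    ∃ q r : F[X], q.natDegree ≤ a ∧ r.natDegree ≤ b ∧ p = q * r := by
  induction a generalizing p with
  | zero => exact ⟨1, p, by simp, by lia, by simp⟩
  | succ a ih =>
    by_cases h : p.natDegree ≤ a + b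
    · obtain ⟨q, r, hq, hr, rfl⟩ := ih p h
      exact ⟨q, r, by lia, hr, rfl⟩
    · obtain ⟨x, hx⟩ := IsAlgClosed.exists_root p fun h0 ↦ by
        have := natDegree_eq_zero_iff_degree_le_zero.2 h0.le
        lia
      obtain ⟨p', rfl⟩ := dvd_iff_isRoot.2 hx
      have hp' : p' ≠ 0 := by
        rintro rfl
        simp at h
      rw [natDegree_mul (X_sub_C_ne_zero x) hp', natDegree_X_sub_C] at hp
      obtain ⟨q, r, hq, hr, rfl⟩ := ih p' (by lia)
      refine ⟨(X - C x) * q, r, ?_, hr, by ring⟩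
      have := natDegree_mul_le (p := X - C x) (q := q)
      rw [natDegree_X_sub_C] at this
      lia

/-- Over an algebraically closed field, a binary form of degree `a + b` is a product of
binary forms of degrees `a` and `b`. -/
theorem MvPolynomial.IsHomogeneous.exists_eq_mul {F : Type*} [Field F] [IsAlgClosed F]
    {n : ℕ} (a b : ℕ) (hn : n = a + b) {P : MvPolynomial (Fin 2) F} (hP : P.IsHomogeneous n) :
    ∃ Q R : MvPolynomial (Fin 2) F, Q.IsHomogeneous a ∧ R.IsHomogeneous b ∧ P = Q * R := by
  subst hn
  have hdeg : (MvPolynomial.aeval ![Polynomial.X, (1 : Polynomial F)] P).natDegree ≤ a + b := by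
    simpa using MvPolynomial.aeval_natDegree_le P hP.totalDegree_le
      ![Polynomial.X, (1 : Polynomial F)] (n := 1) (by simp [Fin.forall_fin_two])
  obtain ⟨q, r, hq, hr, h⟩ := Polynomial.exists_eq_mul_of_natDegree_le_add a b _ hdeg
  refine ⟨q.homogenize a, r.homogenize b, by simp, by simp, ?_⟩
  rw [← Polynomial.homogenize_mul q r hq hr, Polynomial.homogenize_eq_of_isHomogeneous hP h]


/-- Surjectivity of the determinant map `φ²` in the case `k = 2`: given integers
`e₁ ≤ e₂`, `f₁ ≥ e₁`, `f₂ ≥ e₂`, `f₁ ≥ e₂ - m` and `δ = (f₁ + f₂) - (e₁ + e₂)`, every triple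
of binary forms `P₂, P₁, P₀ ∈ F[s,t]` of degrees `δ, δ + m, δ + 2m` arises as
`(-A₂₁A₁₂, B₁₁A₂₂ - A₁₂B₂₁ - A₂₁B₁₂, -B₂₁B₁₂)` for binary forms of the prescribed degrees,
i.e. as the coefficients of `det ((B₁₁y, A₁₂x + B₁₂y), (A₂₁x + B₂₁y, A₂₂x))`. -/
theorem stmt_7 {F : Type*} [Field F] [IsAlgClosed F] (m : ℕ)
    (e₁ e₂ f₁ f₂ : ℤ) (he : e₁ ≤ e₂) (h1 : e₁ ≤ f₁) (h2 : e₂ ≤ f₂)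
    (h3 : e₂ - (m : ℤ) ≤ f₁)
    (δ : ℤ) (hδ : δ = (f₁ + f₂) - (e₁ + e₂))
    (P₂ P₁ P₀ : MvPolynomial (Fin 2) F)
    (hP₂ : P₂.IsHomogeneous δ.toNat)
    (hP₁ : P₁.IsHomogeneous (δ + (m : ℤ)).toNat)
    (hP₀ : P₀.IsHomogeneous (δ + 2 * (m : ℤ)).toNat) :
    ∃ A₁₂ A₂₁ A₂₂ B₁₁ B₁₂ B₂₁ : MvPolynomial (Fin 2) F,
      A₁₂.IsHomogeneous (f₁ - e₁).toNat ∧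
      A₂₁.IsHomogeneous (f₂ - e₂).toNat ∧
      A₂₂.IsHomogeneous (f₂ - e₁).toNat ∧
      B₁₁.IsHomogeneous (f₁ - e₂ + (m : ℤ)).toNat ∧
      B₁₂.IsHomogeneous (f₁ - e₁ + (m : ℤ)).toNat ∧
      B₂₁.IsHomogeneous (f₂ - e₂ + (m : ℤ)).toNat ∧
      -(A₂₁ * A₁₂) = P₂ ∧
      B₁₁ * A₂₂ - A₁₂ * B₂₁ - A₂₁ * B₁₂ = P₁ ∧
      -(B₂₁ * B₁₂) = P₀ := by
  obtain ⟨A, A', hA, hA', rfl⟩ := hP₂.exists_eq_mul (f₁ - e₁).toNat (f₂ - e₂).toNat (by lia)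
  obtain ⟨B, B', hB, hB', rfl⟩ :=
    hP₀.exists_eq_mul (f₁ - e₁ + (m : ℤ)).toNat (f₂ - e₂ + (m : ℤ)).toNat (by lia)
  have hAB : (A * B').IsHomogeneous (δ + (m : ℤ)).toNat := by
    convert hA.mul hB' using 1
    lia
  have hBA : (A' * B).IsHomogeneous (δ + (m : ℤ)).toNat := by
    convert hA'.mul hB using 1
    lia
  obtain ⟨C, C', hC, hC', h⟩ := ((hP₁.sub hAB).sub hBA).exists_eq_mul
    (f₁ - e₂ + (m : ℤ)).toNat (f₂ - e₁).toNat (by lia)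
  refine ⟨A, -A', C', C, B, -B', hA, hA'.neg, hC', hC, hB, hB'.neg, by ring, ?_, by ring⟩
  linear_combination -h
end

section
/- Let F be an algebraically closed field. Fix an integer k ≥ 2, an integer m ≥ 0, and nondecreasing integer tuples e_1 ≤ … ≤ e_k and f_1 ≤ … ≤ f_k satisfying f_i ≥ e_i for all 1 ≤ i ≤ k and f_i ≥ e_{i+1} − m for all 1 ≤ i ≤ k−1; set δ = Σ_{i=1}^k (f_i − e_i). Call a pair (A, B) of k×k matrices over F[t] admissible if deg A_{i,j} ≤ f_i − e_{k+1−j} and deg B_{i,j} ≤ f_i − e_{k+1−j} + m for all i, j (with deg 0 = −∞, so an entry must be 0 when its bound is negative), A_{i,j} = 0 whenever i + j < k + 1, and B_{i,j} = 0 whenever i + j ≥ k + 1. Call an admissible pair (A', B') a restricted tangent if moreover A'_{i,k+1−i} = 0 for all 1 ≤ i ≤ k and B'_{i,k−i} = 0 for all 1 ≤ i ≤ k−1. Given an admissible pair (A, B) and a restricted tangent (A', B'), let D(A', B') ∈ F[t][x] be the unique polynomial with det((A + εA')·x + (B + εB')) = det(A·x + B) + ε·D(A', B') in (F[t][x])[ε]/(ε²).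 Then there exists an admissible pair (A, B) with B_{i,k−i} ≠ 0 for all 1 ≤ i ≤ k−1 such that the set {D(A', B') : (A', B') a restricted tangent} is exactly the set of polynomials of the form Σ_{j=1}^{k} P_j·x^j with P_j ∈ F[t], deg P_j ≤ δ + (k−j)·m for all 1 ≤ j ≤ k, P_k = 0, and P_1 divisible by ∏_{i=1}^{k−1} B_{i,k−i}. -/
/-- The matrix `A·x + B` over `F[t][x]` (inner variable `t`, outer variable `x`). -/
noncomputable def xMat {F : Type*} [Field F] {k : ℕ}
    (A B : Matrix (Fin k) (Fin k) (Polynomial F)) :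
    Matrix (Fin k) (Fin k) (Polynomial (Polynomial F)) :=
  Matrix.of fun r c => Polynomial.C (A r c) * Polynomial.X + Polynomial.C (B r c)

/-- A pair `(A, B)` of `k × k` matrices over `F[t]` is admissible if
`deg A r c ≤ f r - e (k+1-c)` and `deg B r c ≤ f r - e (k+1-c) + m` (encoded via vanishing of
coefficients beyond the bound; `k+1-c` `1`-indexed is `c.rev` `0`-indexed), `A` is lower
anti-triangular (`A r c = 0` for `r + c < k + 1`, `1`-indexed) and `B` is strictly upper
anti-triangular (`B r c = 0` for `r + c ≥ k + 1`, `1`-indexed). -/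
def IsAdmissible {F : Type*} [Field F] {k : ℕ} (m : ℕ) (e f : Fin k → ℤ)
    (A B : Matrix (Fin k) (Fin k) (Polynomial F)) : Prop :=
  (∀ r c : Fin k, ∀ n : ℕ, f r - e c.rev < (n : ℤ) → (A r c).coeff n = 0) ∧
  (∀ r c : Fin k, ∀ n : ℕ, f r - e c.rev + (m : ℤ) < (n : ℤ) → (B r c).coeff n = 0) ∧
  (∀ r c : Fin k, (r : ℕ) + (c : ℕ) < k - 1 → A r c = 0) ∧
  (∀ r c : Fin k, k - 1 ≤ (r : ℕ) + (c : ℕ) → B r c = 0)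

section Surjectivity

open Polynomial

section PencilDet

variable {R : Type*} [CommRing R]

/-- The `k × k` matrix over `R[X]` whose entries on and below the diagonal are `X * S i j` and
whose entries above the diagonal are the constants `S i j`. -/
noncomputable def pencil (k : ℕ) (S : ℕ → ℕ → R) : Matrix (Fin k) (Fin k) R[X] :=
  Matrix.of fun i j => if (j : ℕ) ≤ i then X * C (S i j) else C (S i j)

/-- The determinant of `pencil k S`. -/
noncomputable def pencilDet (k : ℕ) (S : ℕ → ℕ → R) : R[X] := (pencil k S).det

lemma pencil_of_le {k : ℕ} (S : ℕ → ℕ → R) {i j : Fin k} (h : (j : ℕ) ≤ i) :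
    pencil k S i j = X * C (S i j) := if_pos h

lemma pencil_of_lt {k : ℕ} (S : ℕ → ℕ → R) {i j : Fin k} (h : (i : ℕ) < j) :
    pencil k S i j = C (S i j) := if_neg h.not_ge

lemma pencilDet_congr {k : ℕ} {S S' : ℕ → ℕ → R} (h : ∀ i < k, ∀ j < k, S i j = S' i j) :
    pencilDet k S = pencilDet k S' := by
  unfold pencilDet pencil
  congr 1
  ext i j : 2
  simp [h i i.2 j j.2]

lemma pencilDet_map {R' : Type*} [CommRing R'] (φ : R →+* R') (k : ℕ) (S : ℕ → ℕ → R) :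
    (pencilDet k S).map φ = pencilDet k fun i j => φ (S i j) := by
  unfold pencilDet
  rw [← Polynomial.coe_mapRingHom, RingHom.map_det]
  congr 1
  ext i j : 2
  simp only [pencil, RingHom.mapMatrix_apply, Matrix.map_apply, Matrix.of_apply, apply_ite,
    Polynomial.coe_mapRingHom, Polynomial.map_mul, Polynomial.map_X, Polynomial.map_C]

lemma pencil_update {k : ℕ} (S : ℕ → ℕ → R) (i : Fin k) (z : ℕ → R) :
    pencil k (Function.update S i z) = (pencil k S).updateRow i
      fun j => if (j : ℕ) ≤ i then X * C (z j) else C (z j) := by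
  ext l j : 2
  rw [Matrix.updateRow_apply]
  by_cases h : l = i
  · subst h; simp [pencil]
  · have : (l : ℕ) ≠ i := fun h' => h (Fin.ext h')
    simp [pencil, h, Function.update_of_ne this]

lemma pencilDet_update_add {k i : ℕ} (hi : i < k) (S : ℕ → ℕ → R) (z z' : ℕ → R) :
    pencilDet k (Function.update S i (z + z')) =
      pencilDet k (Function.update S i z) + pencilDet k (Function.update S i z') := by
  unfold pencilDet
  have h := fun z : ℕ → R => pencil_update S ⟨i, hi⟩ z
  simp only at h
  rw [h, h, h, ← Matrix.det_updateRow_add]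
  congr 2
  ext j : 1
  by_cases hj : (j : ℕ) ≤ i <;> simp [hj, mul_add]

lemma pencilDet_update_smul {k i : ℕ} (hi : i < k) (S : ℕ → ℕ → R) (c : R) (z : ℕ → R) :
    pencilDet k (Function.update S i (c • z)) =
      C c * pencilDet k (Function.update S i z) := by
  unfold pencilDet
  have h := fun z : ℕ → R => pencil_update S ⟨i, hi⟩ z
  simp only at h
  rw [h, h, ← Matrix.det_updateRow_smul]
  congr 2
  ext j : 1
  by_cases hj : (j : ℕ) ≤ i
  · simp only [hj, if_true, Pi.smul_apply, smul_eq_mul, C_mul]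
    ring
  · simp [hj]

lemma pencilDet_eq_zero_of_row {k i : ℕ} (hi : i < k) (S : ℕ → ℕ → R)
    (h : ∀ j < k, S i j = 0) : pencilDet k S = 0 :=
  Matrix.det_eq_zero_of_row_eq_zero ⟨i, hi⟩ fun j => by simp [pencil, h j j.2]

lemma pencil_eq_smul_add (k : ℕ) (S : ℕ → ℕ → R) :
    pencil k S = (X : R[X]) •
        (Matrix.of fun i j : Fin k => if (j : ℕ) ≤ i then S i j else 0).map C +
      (Matrix.of fun i j : Fin k => if (j : ℕ) ≤ i then 0 else S i j).map C := by
  ext i j : 2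
  rcases le_or_gt (j : ℕ) i with h | h
  · rw [pencil_of_le S h]
    simp [-Fin.val_fin_le, h]
  · rw [pencil_of_lt S h]
    simp [-Fin.val_fin_le, h.not_ge]

lemma coeff_pencilDet_zero (k : ℕ) (S : ℕ → ℕ → R) : (pencilDet (k + 1) S).coeff 0 = 0 := by
  rw [pencilDet, pencil_eq_smul_add, Polynomial.coeff_det_X_add_C_zero]
  refine Matrix.det_eq_zero_of_row_eq_zero (Fin.last k) fun j => ?_
  rw [Matrix.of_apply, if_pos]
  exact Nat.le_of_lt_succ j.2

lemma coeff_pencilDet_card (k : ℕ) (S : ℕ → ℕ → R) :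
    (pencilDet k S).coeff k = ∏ i ∈ Finset.range k, S i i := by
  have := Polynomial.coeff_det_X_add_C_card
    (Matrix.of fun i j : Fin k => if (j : ℕ) ≤ i then S i j else 0)
    (Matrix.of fun i j : Fin k => if (j : ℕ) ≤ i then 0 else S i j)
  rw [← pencil_eq_smul_add, Fintype.card_fin] at this
  rw [pencilDet, this, Matrix.det_of_isLowerTriangular,
    ← Fin.prod_univ_eq_prod_range fun i => S i i]
  · simp
  · intro i j hij
    have hij' : (i : ℕ) < j := hij
    rw [Matrix.of_apply, if_neg hij'.not_ge]

lemma coeff_pencilDet_eq_zero {k n : ℕ} (hn : k < n) (S : ℕ → ℕ → R) :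
    (pencilDet k S).coeff n = 0 := by
  apply Polynomial.coeff_eq_zero_of_natDegree_lt
  have := Polynomial.natDegree_det_X_add_C_le
    (Matrix.of fun i j : Fin k => if (j : ℕ) ≤ i then S i j else 0)
    (Matrix.of fun i j : Fin k => if (j : ℕ) ≤ i then 0 else S i j)
  rw [← pencil_eq_smul_add, Fintype.card_fin] at this
  exact this.trans_lt hn

lemma coeff_pencilDet_one (k : ℕ) (S : ℕ → ℕ → R) :
    (pencilDet (k + 1) S).coeff 1 =
      (-1) ^ k * (S k 0 * ∏ i ∈ Finset.range k, S i (i + 1)) := by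
  set M : Matrix (Fin (k + 1)) (Fin (k + 1)) R[X] :=
    (pencil (k + 1) S).updateRow (Fin.last k) fun j => C (S k j) with hM
  have h1 : pencilDet (k + 1) S = X * M.det := by
    rw [hM, ← Matrix.det_updateRow_smul, pencilDet]
    congr 1
    ext i j : 2
    rw [Matrix.updateRow_apply]
    split_ifs with h
    · subst h
      rw [pencil_of_le S (Nat.le_of_lt_succ j.2)]
      simp
    · rfl
  have h2 : (Matrix.map M (Polynomial.eval 0)).det =
      (-1) ^ k * (S k 0 * ∏ i ∈ Finset.range k, S i (i + 1)) := by
    set M' := Matrix.map M (Polynomial.eval 0) with hM'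
    have hrot : (M'.submatrix (finRotate (k + 1)).symm id).det = (-1) ^ k * M'.det := by
      rw [Matrix.det_permute]
      simp
    have htri : (M'.submatrix (finRotate (k + 1)).symm id).det =
        S k 0 * ∏ i ∈ Finset.range k, S i (i + 1) := by
      have hz : (finRotate (k + 1)).symm 0 = Fin.last k := by
        rw [Equiv.symm_apply_eq, finRotate_last]
      have hs : ∀ i : Fin k, (finRotate (k + 1)).symm i.succ = i.castSucc := by
        intro i
        rw [Equiv.symm_apply_eq]
        simp
      rw [Matrix.det_of_isUpperTriangular, Fin.prod_univ_succ,
        ← Fin.prod_univ_eq_prod_range fun i => S i (i + 1)]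
      · congr 1
        · simp [hz, hM', hM]
        · refine Finset.prod_congr rfl fun i _ => ?_
          simp [hs, hM', hM, pencil, (Fin.castSucc_lt_last i).ne]
      · intro i j hij
        induction i using Fin.cases with
        | zero => simp at hij
        | succ i =>
          have hij' : (j : ℕ) ≤ i := by
            have : (j : ℕ) < i.succ := hij
            simpa [Nat.lt_succ_iff] using this
          have hne : i.castSucc ≠ Fin.last k := (Fin.castSucc_lt_last i).ne
          rw [Matrix.submatrix_apply, hs, hM', hM, Matrix.map_apply, id,
            Matrix.updateRow_ne hne, pencil_of_le S (by simpa using hij')]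
          simp
    rw [htri] at hrot
    rw [hrot, ← mul_assoc, ← mul_pow]
    simp
  rw [h1, Polynomial.coeff_X_mul, Polynomial.coeff_zero_eq_eval_zero, ← h2,
    ← Polynomial.coe_evalRingHom, RingHom.map_det]
  rfl

lemma pencil_reindex (p q : ℕ) (S : ℕ → ℕ → R) :
    (pencil (p + q) S).submatrix finSumFinEquiv finSumFinEquiv =
      Matrix.fromBlocks (pencil p S)
        (Matrix.of fun i j => pencil (p + q) S (Fin.castAdd q i) (Fin.natAdd p j))
        (Matrix.of fun i j => pencil (p + q) S (Fin.natAdd p i) (Fin.castAdd q j))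
        (pencil q fun i j => S (p + i) (p + j)) := by
  ext i j : 2
  rcases i with i | i <;> rcases j with j | j <;>
    simp [pencil, -Fin.val_fin_le]

lemma pencilDet_mul_of_upper {p q : ℕ} {S : ℕ → ℕ → R}
    (h : ∀ i < p, ∀ j < q, S i (p + j) = 0) :
    pencilDet (p + q) S = pencilDet p S * pencilDet q fun i j => S (p + i) (p + j) := by
  have h0 : (Matrix.of fun i j => pencil (p + q) S (Fin.castAdd q i)
      (Fin.natAdd p j)) = 0 := by
    ext i j : 2
    simp [pencil, h i i.2 j j.2]
  rw [pencilDet, ← Matrix.det_submatrix_equiv_self finSumFinEquiv, pencil_reindex, h0,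
    Matrix.det_fromBlocks_zero₁₂, pencilDet, pencilDet]

lemma pencilDet_mul_of_lower {p q : ℕ} {S : ℕ → ℕ → R}
    (h : ∀ i < q, ∀ j < p, S (p + i) j = 0) :
    pencilDet (p + q) S = pencilDet p S * pencilDet q fun i j => S (p + i) (p + j) := by
  have h0 : (Matrix.of fun i j => pencil (p + q) S (Fin.natAdd p i)
      (Fin.castAdd q j)) = 0 := by
    ext i j : 2
    simp [pencil, h i i.2 j j.2]
  rw [pencilDet, ← Matrix.det_submatrix_equiv_self finSumFinEquiv, pencil_reindex, h0,
    Matrix.det_fromBlocks_zero₂₁, pencilDet, pencilDet]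

lemma pencilDet_one (S : ℕ → ℕ → R) : pencilDet 1 S = X * C (S 0 0) := by
  simp [pencilDet, pencil]

lemma pencilDet_eq_of_row_last {k i : ℕ} (hi : i < k) {S : ℕ → ℕ → R}
    (h : ∀ j < k, S i j = 0) :
    pencilDet (k + 1) S =
      -(C (S i k) * ((pencil k S).updateRow ⟨i, hi⟩ fun j => X * C (S k j)).det) := by
  have hne : (⟨i, hi.trans k.lt_succ_self⟩ : Fin (k + 1)) ≠ Fin.last k :=
    fun h => hi.ne (congrArg Fin.val h)
  set M' := (pencil (k + 1) S).submatrix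
    (Equiv.swap ⟨i, hi.trans k.lt_succ_self⟩ (Fin.last k)) id with hM'
  have hswap : M'.det = -pencilDet (k + 1) S := by
    rw [hM', Matrix.det_permute, Equiv.Perm.sign_swap hne, pencilDet]
    simp
  have hlast : ∀ j, M' (Fin.last k) j = if j = Fin.last k then C (S i k) else 0 := by
    intro j
    rw [hM', Matrix.submatrix_apply, Equiv.swap_apply_right, id]
    induction j using Fin.lastCases with
    | last => rw [pencil_of_lt _ (by simpa using hi)]; simp
    | cast j =>
      rw [if_neg (Fin.castSucc_lt_last j).ne]
      simp [pencil, h j j.2]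
  rw [← neg_eq_iff_eq_neg, ← hswap, Matrix.det_succ_row M' (Fin.last k), Fin.sum_univ_castSucc,
    Finset.sum_eq_zero fun j _ => by rw [hlast, if_neg (Fin.castSucc_lt_last j).ne]; simp]
  rw [hlast, if_pos rfl, zero_add, ← two_mul, pow_mul]
  simp only [even_two, Even.neg_pow, one_pow, one_mul, Fin.succAbove_last]
  congr 2
  ext l j : 2
  rw [Matrix.submatrix_apply, hM', Matrix.submatrix_apply, Matrix.updateRow_apply, id]
  split_ifs with hl
  · subst hl
    have : (Fin.castSucc ⟨i, hi⟩ : Fin (k + 1)) = ⟨i, hi.trans k.lt_succ_self⟩ := rfl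
    rw [this, Equiv.swap_apply_left, pencil_of_le _ (Nat.le_of_lt_succ j.castSucc.2)]
    simp
  · rw [Equiv.swap_apply_of_ne_of_ne _ (Fin.castSucc_lt_last l).ne]
    · simp [pencil]
    · intro h'
      exact hl (Fin.ext (by simpa using congrArg Fin.val h'))

lemma pencilDet_eq_of_col_last {k : ℕ} {S : ℕ → ℕ → R} (h : ∀ i < k, S i (k + 1) = 0)
    (h' : S (k + 1) (k + 1) = 0) :
    pencilDet (k + 2) S =
      -(C (S k (k + 1)) * pencilDet (k + 1) (Function.update S k (S (k + 1)))) := by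
  have hcol : ∀ i : Fin (k + 2), i ≠ (Fin.last k).castSucc →
      pencil (k + 2) S i (Fin.last (k + 1)) = 0 := by
    intro i hi
    have : S i (k + 1) = 0 := by
      rcases lt_trichotomy (i : ℕ) k with h1 | h1 | h1
      · exact h _ h1
      · exact absurd (Fin.ext h1) hi
      · rwa [show (i : ℕ) = k + 1 by omega]
    simp [pencil, this]
  rw [pencilDet, Matrix.det_succ_column _ (Fin.last (k + 1)),
    Finset.sum_eq_single (Fin.last k).castSucc (fun i _ hi => by rw [hcol i hi]; simp)
      (by simp)]
  rw [pencil_of_lt _ (by simp)]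
  have hsign : (-1 : R[X]) ^ (((Fin.last k).castSucc : ℕ) + (Fin.last (k + 1) : ℕ)) = -1 := by
    simp only [Fin.val_castSucc, Fin.val_last]
    rw [← add_assoc, ← two_mul, pow_succ, pow_mul]
    simp
  rw [hsign, pencilDet, Fin.succAbove_last, neg_one_mul, neg_mul]
  congr 3
  ext l j : 2
  induction l using Fin.lastCases with
  | last =>
    rw [Matrix.submatrix_apply, Fin.succAbove_castSucc_self,
      pencil_of_le _ (by simp), pencil_of_le _ (by simpa using Nat.le_of_lt_succ j.2)]
    simp
  | cast l =>
    have hl : (l : ℕ) ≠ k := l.2.ne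
    rw [Matrix.submatrix_apply, Fin.succAbove_castSucc_of_lt _ _ (Fin.castSucc_lt_last l)]
    simp [pencil, Function.update_of_ne hl, -Fin.val_fin_le]

lemma coeff_pencilDet_two_of_split {p q : ℕ} {S : ℕ → ℕ → R}
    (h : ∀ i < p + 1, ∀ j < q + 1, S i (p + 1 + j) = 0) :
    (pencilDet (p + 1 + (q + 1)) S).coeff 2 =
      (-1) ^ (p + q) * ((S p 0 * ∏ l ∈ Finset.range p, S l (l + 1)) *
        (S (p + 1 + q) (p + 1) *
          ∏ l ∈ Finset.range q, S (p + 1 + l) (p + 1 + (l + 1)))) := by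
  rw [pencilDet_mul_of_upper h, Polynomial.coeff_mul,
    Finset.Nat.sum_antidiagonal_eq_sum_range_succ_mk]
  simp only [Finset.sum_range_succ, Finset.sum_range_zero, coeff_pencilDet_zero,
    Nat.sub_self, Nat.sub_zero, zero_mul, mul_zero, zero_add, add_zero,
    show 2 - 1 = 1 from rfl, coeff_pencilDet_one]
  ring

lemma coeff_pencilDet_two_of_row_last {n i : ℕ} (hi : i < n) {S : ℕ → ℕ → R}
    (hS : ∀ l < n, l ≠ i → ∀ c, l + 1 < c → S l c = 0) (h : ∀ j < n + 1, S i j = 0)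
    (hw : S (n + 1) 0 = 0) :
    (pencilDet (n + 2) S).coeff 2 =
      -(S i (n + 1) * ((-1) ^ n * (S n 0 *
        ∏ l ∈ Finset.range n, if l = i then S (n + 1) (i + 1) else S l (l + 1)))) := by
  set lo : ℕ → R := fun j => if j ≤ i then S (n + 1) j else 0 with hlo
  set up : ℕ → R := fun j => if j ≤ i then 0 else S (n + 1) j with hup
  have hi' : i < n + 1 := hi.trans n.lt_succ_self
  have hsplit : ((pencil (n + 1) S).updateRow ⟨i, hi'⟩ fun j => X * C (S (n + 1) j)).det =
      pencilDet (n + 1) (Function.update S i lo) +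
        X * pencilDet (n + 1) (Function.update S i up) := by
    have e1 := pencil_update S ⟨i, hi'⟩ lo
    have e2 := pencil_update S ⟨i, hi'⟩ up
    simp only at e1 e2
    rw [pencilDet, pencilDet, e1, e2, ← Matrix.det_updateRow_smul, ← Matrix.det_updateRow_add]
    congr 2
    ext j : 1
    by_cases hj : (j : ℕ) ≤ i <;> simp [hj, hlo, hup]
  have hlow : (pencilDet (n + 1) (Function.update S i lo)).coeff 2 = 0 := by
    obtain ⟨q, rfl⟩ : ∃ q, n = i + 1 + q := ⟨n - (i + 1), by omega⟩
    rw [add_assoc (i + 1) q 1, coeff_pencilDet_two_of_split]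
    · simp [hlo, hw]
    · intro l hl j hj
      rcases eq_or_ne l i with rfl | hne
      · simp [hlo, show ¬ l + 1 + j ≤ l by omega]
      · rw [Function.update_of_ne hne]
        exact hS l (by omega) hne _ (by omega)
  rw [pencilDet_eq_of_row_last hi' h, hsplit, Polynomial.coeff_neg, Polynomial.coeff_C_mul,
    Polynomial.coeff_add, hlow, zero_add, Polynomial.coeff_X_mul, coeff_pencilDet_one]
  congr 4
  · rw [Function.update_of_ne hi.ne']
  · refine Finset.prod_congr rfl fun l _ => ?_
    split_ifs with hl
    · subst hl; simp [hup]
    · rw [Function.update_of_ne hl]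

end PencilDet

/-- Generically the last row can be chosen freely to prescribe the determinant of a pencil. -/
lemma exists_row_pencilDet_eq {K : Type*} [Field K] {k : ℕ} {S : ℕ → ℕ → K}
    (hS : ∀ l < k, ∀ c, l + 1 < c → S l c = 0) (ha : ∀ l < k, S l l ≠ 0)
    (hb : ∀ l < k, S l (l + 1) ≠ 0) {Q : K[X]} (hQ0 : Q.coeff 0 = 0)
    (hQ : ∀ n, k + 1 < n → Q.coeff n = 0) :
    ∃ z : ℕ → K, pencilDet (k + 1) (Function.update S k z) = Q := by
  induction k generalizing Q with
  | zero =>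
    refine ⟨fun _ => Q.coeff 1, ?_⟩
    rw [zero_add, pencilDet_one]
    ext n
    rcases n with _ | _ | n
    · simp [hQ0]
    · simp
    · simp [hQ (n + 2) (by omega)]
  | succ k ih =>
    have hprod : ∏ i ∈ Finset.range (k + 1), S i i ≠ 0 :=
      Finset.prod_ne_zero_iff.mpr fun i hi => ha i (Finset.mem_range.mp hi)
    set d := Q.coeff (k + 2) / ∏ i ∈ Finset.range (k + 1), S i i with hd
    set v : ℕ → K := fun j => if j = k + 1 then d else 0 with hv
    set V := pencilDet (k + 2) (Function.update S (k + 1) v) with hV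
    have hVc : V.coeff (k + 2) = Q.coeff (k + 2) := by
      rw [hV, coeff_pencilDet_card, Finset.prod_range_succ, Finset.prod_congr rfl
        fun i hi => by rw [Function.update_of_ne (Finset.mem_range.mp hi).ne]]
      simp only [Function.update_self, hv, if_true, hd]
      field_simp
    have hbk := hb k k.lt_succ_self
    obtain ⟨z, hz⟩ := ih (fun l hl => hS l (by omega)) (fun l hl => ha l (by omega))
      (fun l hl => hb l (by omega)) (Q := C (-(S k (k + 1))⁻¹) * (Q - V))
      (by simp [hQ0, hV, coeff_pencilDet_zero]) (by
        intro n hn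
        rcases (show k + 2 ≤ n from hn).eq_or_lt with rfl | hn
        · simp [hVc]
        · simp [hQ n (by omega), hV, coeff_pencilDet_eq_zero hn])
    set z' : ℕ → K := fun j => if j = k + 1 then 0 else z j with hz'
    refine ⟨z' + v, ?_⟩
    rw [pencilDet_update_add (Nat.lt_succ_self _), ← hV, pencilDet_eq_of_col_last]
    · rw [pencilDet_congr (S' := Function.update S k z), hz]
      · rw [Function.update_of_ne (Nat.lt_succ_self k).ne, ← mul_assoc, ← C_mul]
        simp [hbk]
      · intro i hi j hj
        rcases eq_or_ne i k with rfl | hik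
        · simp [hz', hj.ne]
        · rw [Function.update_of_ne hik, Function.update_of_ne hik,
            Function.update_of_ne (by omega)]
    · intro i hi
      rw [Function.update_of_ne (by omega)]
      exact hS i (by omega) _ (by omega)
    · simp [hz']

/-- If a linear map carries a submodule onto a finite-dimensional one, then so does some nonzero
small perturbation of it. -/
lemma exists_ne_zero_perturbation_surjOn {F V W : Type*} [Field F] [Infinite F] [AddCommGroup V]
    [Module F V] [AddCommGroup W] [Module F W] {W₀ : Submodule F W} {T : Submodule F V}
    [FiniteDimensional F T] {L L' : W →ₗ[F] V} (h : ∀ w ∈ W₀, L w ∈ T) (h' : ∀ w ∈ W₀, L' w ∈ T)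
    (hs : ∀ t ∈ T, ∃ w ∈ W₀, L w = t) :
    ∃ μ : F, μ ≠ 0 ∧ ∀ t ∈ T, ∃ w ∈ W₀, (L + μ • L') w = t := by
  classical
  obtain ⟨g, hg⟩ := (L.restrict h).exists_rightInverse_of_surjective
    (LinearMap.range_eq_top.mpr fun t => by
      obtain ⟨w, hw, hwt⟩ := hs t t.2
      exact ⟨⟨w, hw⟩, Subtype.ext hwt⟩)
  set K : Module.End F T := L'.restrict h' ∘ₗ g with hK
  obtain ⟨ν, hν⟩ := Infinite.exists_notMem_finset
    ((Module.End.finite_hasEigenvalue K).toFinset ∪ {0})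
  rw [Finset.mem_union, Set.Finite.mem_toFinset, Finset.mem_singleton, not_or] at hν
  have hinj : Function.Injective (K - ν • (1 : Module.End F T)) := by
    rw [← LinearMap.ker_eq_bot, ← Module.End.eigenspace_def]
    exact not_not.mp hν.1
  have hsurj := LinearMap.injective_iff_surjective.mp hinj
  refine ⟨-ν⁻¹, neg_ne_zero.mpr (inv_ne_zero hν.2), fun t ht => ?_⟩
  obtain ⟨s, hst⟩ := hsurj (-ν • ⟨t, ht⟩)
  refine ⟨g s, (g s).2, ?_⟩
  have h1 : L (g s) = s := congrArg Subtype.val (LinearMap.congr_fun hg s)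
  have h2 : L' (g s) = K s := rfl
  have h3 : (K s : V) - ν • (s : V) = -ν • t := by
    have := congrArg Subtype.val hst
    simpa using this
  rw [LinearMap.add_apply, LinearMap.smul_apply, h1, h2, sub_eq_iff_eq_add.mp h3, smul_add,
    smul_smul, smul_smul]
  simp [hν.2]

section Derivative

variable {F : Type*} [Field F]

/-- The derivative at `S` of the determinant of the pencil. -/
noncomputable def pencilDeriv (k : ℕ) (S : ℕ → ℕ → F[X]) : (ℕ → ℕ → F[X]) →ₗ[F] F[X][X] where
  toFun E := ∑ i ∈ Finset.range k, pencilDet k (Function.update S i (E i))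
  map_add' E E' := by
    rw [← Finset.sum_add_distrib]
    exact Finset.sum_congr rfl fun i hi => pencilDet_update_add (Finset.mem_range.mp hi) _ _ _
  map_smul' c E := by
    rw [Finset.smul_sum]
    refine Finset.sum_congr rfl fun i hi => ?_
    have h1 : (c • E) i = (C c : F[X]) • E i := by
      ext j : 1
      simp [Polynomial.smul_eq_C_mul]
    rw [h1, pencilDet_update_smul (Finset.mem_range.mp hi)]
    simp [Algebra.smul_def]

lemma pencilDeriv_apply (k : ℕ) (S E : ℕ → ℕ → F[X]) :
    pencilDeriv k S E = ∑ i ∈ Finset.range k, pencilDet k (Function.update S i (E i)) := rfl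

/-- The degree bound on the entry in position `(i, j)`. -/
def entryBound (m : ℕ) (e f : ℕ → ℤ) (i j : ℕ) : ℤ := f i - e j + if j ≤ i then 0 else (m : ℤ)

/-- The restricted tangent directions. -/
def tangents (F : Type*) [Field F] (k m : ℕ) (e f : ℕ → ℤ) : Submodule F (ℕ → ℕ → F[X]) where
  carrier := {E | (∀ i < k, E i i = 0) ∧ (∀ i, i + 1 < k → E i (i + 1) = 0) ∧
    ∀ i < k, ∀ j < k, ∀ n : ℕ, entryBound m e f i j < n → (E i j).coeff n = 0}
  add_mem' := by
    rintro E E' ⟨h1, h2, h3⟩ ⟨h1', h2', h3'⟩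
    refine ⟨fun i hi => ?_, fun i hi => ?_, fun i hi j hj n hn => ?_⟩
    · simp [h1 i hi, h1' i hi]
    · simp [h2 i hi, h2' i hi]
    · simp [h3 i hi j hj n hn, h3' i hi j hj n hn]
  zero_mem' := by simp
  smul_mem' := by
    rintro c E ⟨h1, h2, h3⟩
    refine ⟨fun i hi => ?_, fun i hi => ?_, fun i hi j hj n hn => ?_⟩
    · simp [h1 i hi]
    · simp [h2 i hi]
    · simp [h3 i hi j hj n hn]

/-- The polynomials satisfying the obvious constraints on derivatives in restricted tangent
directions. -/
def targets (k m : ℕ) (δ : ℤ) (b : F[X]) : Submodule F F[X][X] where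
  carrier := {P | P.coeff 0 = 0 ∧ (∀ j, k ≤ j → P.coeff j = 0) ∧
    (∀ j n : ℕ, δ + ((k : ℤ) - j) * m < n → (P.coeff j).coeff n = 0) ∧ b ∣ P.coeff 1}
  add_mem' := by
    rintro P P' ⟨h1, h2, h3, h4⟩ ⟨h1', h2', h3', h4'⟩
    refine ⟨?_, fun j hj => ?_, fun j n hn => ?_, ?_⟩
    · simp [h1, h1']
    · simp [h2 j hj, h2' j hj]
    · simp [h3 j n hn, h3' j n hn]
    · rw [Polynomial.coeff_add]
      exact dvd_add h4 h4'
  zero_mem' := by simp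
  smul_mem' := by
    rintro c P ⟨h1, h2, h3, h4⟩
    refine ⟨?_, fun j hj => ?_, fun j n hn => ?_, ?_⟩
    · simp [h1]
    · simp [h2 j hj]
    · simp [h3 j n hn]
    · rw [Polynomial.coeff_smul, Polynomial.smul_eq_C_mul]
      exact h4.mul_left _

instance (k m : ℕ) (δ : ℤ) (b : F[X]) : FiniteDimensional F (targets k m δ b) := by
  set M := (δ + k * m).toNat + 1 with hM
  let φ : targets k m δ b →ₗ[F] (Fin k → Fin M → F) :=
    { toFun := fun P j n => (P.1.coeff j).coeff n
      map_add' := fun P Q => by ext; simp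
      map_smul' := fun c P => by ext; simp }
  suffices hφ : Function.Injective φ from Module.Finite.of_injective φ hφ
  intro P Q h
  have ⟨_, hP2, hP3, _⟩ := P.2
  have ⟨_, hQ2, hQ3, _⟩ := Q.2
  apply Subtype.ext
  ext j n : 2
  by_cases hj : j < k
  · by_cases hn : n < M
    · exact congrFun (congrFun h ⟨j, hj⟩) ⟨n, hn⟩
    · have hb : δ + ((k : ℤ) - j) * m < n := by
        have h1 : δ + k * m < n := by omega
        have h2 : (0 : ℤ) ≤ j * m := by positivity
        rw [sub_mul]
        linarith
      rw [hP3 j n hb, hQ3 j n hb]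
  · rw [hP2 j (not_lt.mp hj), hQ2 j (not_lt.mp hj)]

/-- Every coefficient of `x ^ j` in `P` has degree at most `w - j * m`. -/
def WeightLE (m : ℕ) (w : ℤ) (P : F[X][X]) : Prop :=
  ∀ j n : ℕ, w - j * m < n → (P.coeff j).coeff n = 0

lemma WeightLE.mul {m : ℕ} {w w' : ℤ} {P P' : F[X][X]} (h : WeightLE m w P)
    (h' : WeightLE m w' P') : WeightLE m (w + w') (P * P') := by
  intro j n hn
  rw [Polynomial.coeff_mul, Polynomial.finsetSum_coeff]
  refine Finset.sum_eq_zero fun x hx => ?_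
  rw [Polynomial.coeff_mul]
  refine Finset.sum_eq_zero fun y hy => ?_
  rw [Finset.HasAntidiagonal.mem_antidiagonal] at hx hy
  by_cases h1 : w - x.1 * m < y.1
  · rw [h _ _ h1, zero_mul]
  · rw [h' x.2 y.2, mul_zero]
    rw [← hx, ← hy] at hn
    push_cast at hn
    rw [add_mul] at hn
    linarith

lemma WeightLE.prod {ι : Type*} {m : ℕ} (s : Finset ι) {w : ι → ℤ} {P : ι → F[X][X]}
    (h : ∀ i ∈ s, WeightLE m (w i) (P i)) : WeightLE m (∑ i ∈ s, w i) (∏ i ∈ s, P i) := by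
  classical
  induction s using Finset.induction_on with
  | empty =>
    intro j n hn
    rcases eq_or_ne j 0 with rfl | hj
    · have : n ≠ 0 := by rintro rfl; simp at hn
      simp [Polynomial.coeff_one, this]
    · simp [Polynomial.coeff_one, hj]
  | insert a s ha ih =>
    rw [Finset.sum_insert ha, Finset.prod_insert ha]
    exact (h a (s.mem_insert_self a)).mul (ih fun i hi => h i (Finset.mem_insert_of_mem hi))

/-- The entries of the leading `k × k` block of `S` satisfy the degree bounds. -/
def EntriesLE (k m : ℕ) (e f : ℕ → ℤ) (S : ℕ → ℕ → F[X]) : Prop :=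
  ∀ i < k, ∀ j < k, ∀ n : ℕ, entryBound m e f i j < n → (S i j).coeff n = 0

lemma EntriesLE.update {k m i : ℕ} {e f : ℕ → ℤ} {S : ℕ → ℕ → F[X]} {z : ℕ → F[X]}
    (h : EntriesLE k m e f S)
    (hz : ∀ j < k, ∀ n : ℕ, entryBound m e f i j < n → (z j).coeff n = 0) :
    EntriesLE k m e f (Function.update S i z) := by
  intro l hl j hj n hn
  rcases eq_or_ne l i with rfl | hli
  · rw [Function.update_self]
    exact hz j hj n hn
  · rw [Function.update_of_ne hli]
    exact h l hl j hj n hn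

lemma weightLE_pencilDet {k m : ℕ} {e f : ℕ → ℤ} {S : ℕ → ℕ → F[X]} (hS : EntriesLE k m e f S) :
    WeightLE m (∑ i ∈ Finset.range k, (f i - e i) + k * m) (pencilDet k S) := by
  have hentry : ∀ i j : Fin k, WeightLE m (f i - e j + m) (pencil k S i j) := by
    intro i j l n hn
    have hb := hS i i.2 j j.2
    rcases le_or_gt (j : ℕ) i with h | h
    · rw [pencil_of_le S h]
      rcases l with _ | _ | l
      · simp
      · rw [Polynomial.coeff_X_mul, Polynomial.coeff_C_zero]
        apply hb
        rw [entryBound, if_pos h]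
        push_cast at hn
        linarith
      · simp
    · rw [pencil_of_lt S h]
      rcases l with _ | l
      · rw [Polynomial.coeff_C_zero]
        apply hb
        rw [entryBound, if_neg h.not_ge]
        push_cast at hn
        linarith
      · simp
  intro j n hn
  rw [pencilDet, Matrix.det_apply, Polynomial.finsetSum_coeff, Polynomial.finsetSum_coeff]
  refine Finset.sum_eq_zero fun σ _ => ?_
  have h := WeightLE.prod Finset.univ fun i _ => hentry (σ i) i
  have hw : ∑ i : Fin k, (f (σ i) - e i + m) = ∑ i ∈ Finset.range k, (f i - e i) + k * m := by
    rw [Finset.sum_add_distrib, Finset.sum_sub_distrib, Equiv.sum_comp σ fun i : Fin k => f i,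
      Finset.sum_sub_distrib, Fin.sum_univ_eq_sum_range, Fin.sum_univ_eq_sum_range]
    simp
  rw [hw] at h
  rcases Int.units_eq_one_or (Equiv.Perm.sign σ) with hs | hs <;> simp [hs, h j n hn]

lemma coeff_pencilDeriv_one (k : ℕ) (S : ℕ → ℕ → F[X]) {E : ℕ → ℕ → F[X]}
    (hE : ∀ i < k, E i (i + 1) = 0) :
    (pencilDeriv (k + 1) S E).coeff 1 =
      (-1) ^ k * (E k 0 * ∏ i ∈ Finset.range k, S i (i + 1)) := by
  rw [pencilDeriv_apply, Polynomial.finsetSum_coeff, Finset.sum_range_succ,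
    Finset.sum_eq_zero, zero_add, coeff_pencilDet_one]
  · congr 2
    · simp
    · refine Finset.prod_congr rfl fun i hi => ?_
      rw [Function.update_of_ne (Finset.mem_range.mp hi).ne]
  · intro i hi
    rw [coeff_pencilDet_one, Finset.prod_eq_zero hi]
    · simp
    · rw [Function.update_self, hE i (Finset.mem_range.mp hi)]

lemma pencilDeriv_mem_targets {k m : ℕ} {e f : ℕ → ℤ} {S E : ℕ → ℕ → F[X]}
    (hS : EntriesLE (k + 1) m e f S) (hE : E ∈ tangents F (k + 1) m e f) :
    pencilDeriv (k + 1) S E ∈ targets (k + 1) m (∑ i ∈ Finset.range (k + 1), (f i - e i))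
      (∏ i ∈ Finset.range k, S i (i + 1)) := by
  obtain ⟨h1, h2, h3⟩ := hE
  refine ⟨?_, fun j hj => ?_, fun j n hn => ?_, ?_⟩
  · rw [pencilDeriv_apply, Polynomial.finsetSum_coeff]
    exact Finset.sum_eq_zero fun i _ => coeff_pencilDet_zero _ _
  · rw [pencilDeriv_apply, Polynomial.finsetSum_coeff]
    refine Finset.sum_eq_zero fun i hi => ?_
    rcases hj.eq_or_lt with rfl | hj
    · rw [coeff_pencilDet_card, Finset.prod_eq_zero hi]
      rw [Function.update_self, h1 i (Finset.mem_range.mp hi)]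
    · exact coeff_pencilDet_eq_zero hj _
  · rw [pencilDeriv_apply, Polynomial.finsetSum_coeff, Polynomial.finsetSum_coeff]
    refine Finset.sum_eq_zero fun i hi => ?_
    apply weightLE_pencilDet (hS.update (h3 i (Finset.mem_range.mp hi)))
    linarith
  · rw [coeff_pencilDeriv_one k S fun i hi => h2 i (by omega)]
    exact ((dvd_refl _).mul_left _).mul_left _

/-- The derivative depends affinely on each row of the base point. -/
lemma pencilDeriv_update_add_smul {k i : ℕ} (hi : i < k) (S : ℕ → ℕ → F[X]) (u v : ℕ → F[X])
    (c : F) :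
    pencilDeriv k (Function.update S i (u + c • v)) =
      pencilDeriv k (Function.update S i u) +
        c • (pencilDeriv k (Function.update S i (u + v)) -
          pencilDeriv k (Function.update S i u)) := by
  refine LinearMap.ext fun E => ?_
  simp only [LinearMap.add_apply, LinearMap.smul_apply, LinearMap.sub_apply, pencilDeriv_apply]
  rw [← Finset.sum_sub_distrib, Finset.smul_sum, ← Finset.sum_add_distrib]
  refine Finset.sum_congr rfl fun l _ => ?_
  rcases eq_or_ne l i with rfl | hli
  · simp
  · have hc : c • v = (C c : F[X]) • v := by
      ext j : 1
      simp [Polynomial.smul_eq_C_mul]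
    simp only [Function.update_comm hli.symm]
    rw [pencilDet_update_add hi, pencilDet_update_add hi, hc, pencilDet_update_smul hi,
      add_sub_cancel_left]
    simp [Algebra.smul_def]

/-- The derivative at a base point whose last row is concentrated on the diagonal. -/
lemma pencilDeriv_of_row_last {k : ℕ} {S E : ℕ → ℕ → F[X]} (hS : ∀ j < k, S k j = 0) :
    pencilDeriv (k + 1) S E =
      X * C (S k k) * pencilDeriv k S E + pencilDet (k + 1) (Function.update S k (E k)) := by
  rw [pencilDeriv_apply, Finset.sum_range_succ, pencilDeriv_apply, Finset.mul_sum]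
  congr 1
  refine Finset.sum_congr rfl fun i hi => ?_
  rw [Finset.mem_range] at hi
  rw [pencilDet_mul_of_lower, pencilDet_one, mul_comm]
  · simp [Function.update_of_ne hi.ne']
  · intro l hl j hj
    obtain rfl : l = 0 := by omega
    rw [add_zero, Function.update_of_ne hi.ne']
    exact hS j hj

lemma pencilDeriv_congr {k : ℕ} {S S' : ℕ → ℕ → F[X]} (h : ∀ i < k, ∀ j < k, S i j = S' i j) :
    pencilDeriv k S = pencilDeriv k S' := by
  refine LinearMap.ext fun E => ?_
  rw [pencilDeriv_apply, pencilDeriv_apply]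
  refine Finset.sum_congr rfl fun l _ => pencilDet_congr fun i hi j hj => ?_
  rcases eq_or_ne i l with rfl | hil
  · simp
  · rw [Function.update_of_ne hil, Function.update_of_ne hil, h i hi j hj]

lemma eval_coeff_pencilDet (k n : ℕ) (S : ℕ → ℕ → F[X]) (r : F) :
    eval r ((pencilDet k S).coeff n) = (pencilDet k fun i j => eval r (S i j)).coeff n := by
  have := pencilDet_map (evalRingHom r) k S
  simp only [coe_evalRingHom] at this
  rw [← this, Polynomial.coeff_map, coe_evalRingHom]

/-- The monic polynomial with simple roots at the points of `s`. -/
noncomputable def rootsPoly (s : Finset F) : F[X] := Lagrange.nodal s id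

lemma rootsPoly_monic (s : Finset F) : (rootsPoly s).Monic := Lagrange.nodal_monic

lemma natDegree_rootsPoly (s : Finset F) : (rootsPoly s).natDegree = s.card :=
  Lagrange.natDegree_nodal

lemma coeff_rootsPoly_eq_zero {s : Finset F} {n : ℕ} (h : s.card < n) :
    (rootsPoly s).coeff n = 0 :=
  Polynomial.coeff_eq_zero_of_natDegree_lt (by rwa [natDegree_rootsPoly])

lemma eval_rootsPoly_eq_zero_iff {s : Finset F} {r : F} : eval r (rootsPoly s) = 0 ↔ r ∈ s := by
  rw [rootsPoly, Lagrange.eval_nodal, Finset.prod_eq_zero_iff]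
  simp [sub_eq_zero]

lemma rootsPoly_dvd {s : Finset F} {P : F[X]} (h : ∀ r ∈ s, eval r P = 0) : rootsPoly s ∣ P := by
  refine Finset.prod_dvd_of_coprime (fun r _ r' _ hne => ?_) fun r hr => ?_
  · exact Polynomial.pairwise_coprime_X_sub_C Function.injective_id hne
  · exact Polynomial.dvd_iff_isRoot.mpr (h r hr)

lemma prod_rootsPoly_dvd {k : ℕ} {R : ℕ → Finset F}
    (hR : ∀ i < k, ∀ j < k, i ≠ j → Disjoint (R i) (R j)) {P : F[X]}
    (h : ∀ i < k, ∀ r ∈ R i, eval r P = 0) : ∏ i ∈ Finset.range k, rootsPoly (R i) ∣ P := by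
  classical
  have : ∏ i ∈ Finset.range k, rootsPoly (R i) =
      rootsPoly ((Finset.range k).biUnion R) := by
    simp only [rootsPoly, Lagrange.nodal_eq]
    rw [Finset.prod_biUnion]
    intro i hi j hj hij
    exact hR i (by simpa using hi) j (by simpa using hj) hij
  rw [this]
  refine rootsPoly_dvd fun r hr => ?_
  obtain ⟨i, hi, hri⟩ := Finset.mem_biUnion.mp hr
  exact h i (Finset.mem_range.mp hi) r hri

lemma coeff_eq_zero_of_monic_mul {b Q : F[X]} (hb : b.Monic) {D : ℤ}
    (h : ∀ n : ℕ, D < n → (b * Q).coeff n = 0) {n : ℕ} (hn : D - b.natDegree < n) :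
    Q.coeff n = 0 := by
  by_contra hne
  have hQ : Q ≠ 0 := by rintro rfl; simp at hne
  have hle := Polynomial.le_natDegree_of_ne_zero hne
  have hbQ : b * Q ≠ 0 := mul_ne_zero hb.ne_zero hQ
  have hdeg := hb.natDegree_mul' hQ
  refine hbQ (Polynomial.leadingCoeff_eq_zero.mp (h _ ?_))
  omega

lemma exists_interpolant (s : Finset F) (v : F → F) :
    ∃ P : F[X], (∀ r ∈ s, eval r P = v r) ∧ ∀ n, s.card ≤ n → P.coeff n = 0 := by
  classical
  refine ⟨Lagrange.interpolate s id v, fun r hr => ?_, fun n hn => ?_⟩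
  · exact Lagrange.eval_interpolate_at_node v (Set.injOn_id _) hr
  · refine Polynomial.coeff_eq_zero_of_degree_lt
      ((Lagrange.degree_interpolate_lt v (Set.injOn_id _)).trans_le ?_)
    exact_mod_cast hn

lemma exists_finset_card_eq_disjoint {α : Type*} [Infinite α] (n : ℕ) (Z : Finset α) :
    ∃ s : Finset α, s.card = n ∧ Disjoint s Z := by
  obtain ⟨s, hs, hn⟩ := (Z.finite_toSet.infinite_compl).exists_subset_card_eq n
  refine ⟨s, hn, Finset.disjoint_left.mpr fun r hr hrZ => ?_⟩
  exact hs hr hrZ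

/-- `S` has `k` rows and `k + 1` columns of Hessenberg shape that satisfy the degree bounds, and
its superdiagonal entries have simple roots, in general position with respect to one another and
to the first column. -/
structure IsFrame (k m : ℕ) (e f : ℕ → ℤ) (S : ℕ → ℕ → F[X]) (R : ℕ → Finset F) : Prop where
  eq_zero : ∀ i < k, ∀ j, i + 1 < j → S i j = 0
  coeff_eq_zero : ∀ i < k, ∀ j < k + 1, ∀ n : ℕ, entryBound m e f i j < n → (S i j).coeff n = 0
  superdiag : ∀ i < k, S i (i + 1) = rootsPoly (R i)
  card : ∀ i < k, ((R i).card : ℤ) = f i - e (i + 1) + m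
  disjoint : ∀ i < k, ∀ j < k, i ≠ j → Disjoint (R i) (R j)
  eval_ne : ∀ l < k, ∀ i < k, ∀ r ∈ R i, eval r (S l 0) ≠ 0
  col_ne : ∀ l < k, S l 0 ≠ 0
  diag_ne : ∀ l < k, S l l ≠ 0

namespace IsFrame

variable {k m p : ℕ} {e f : ℕ → ℤ} {S : ℕ → ℕ → F[X]} {R : ℕ → Finset F}

lemma entriesLE_update (hS : IsFrame k m e f S R) {z : ℕ → F[X]}
    (hz : ∀ j < k + 1, ∀ n : ℕ, entryBound m e f k j < n → (z j).coeff n = 0) :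
    EntriesLE (k + 1) m e f (Function.update S k z) := by
  intro i hi j hj n hn
  rcases eq_or_ne i k with rfl | hik
  · rw [Function.update_self]
    exact hz j hj n hn
  · rw [Function.update_of_ne hik]
    exact hS.coeff_eq_zero i (by omega) j hj n hn

lemma eval_superdiag_ne (hS : IsFrame k m e f S R) {i l : ℕ} (hi : i < k) (hl : l < k)
    (hli : l ≠ i) {r : F} (hr : r ∈ R i) : eval r (S l (l + 1)) ≠ 0 := by
  rw [hS.superdiag l hl, Ne, eval_rootsPoly_eq_zero_iff]
  exact fun h => Finset.disjoint_left.mp (hS.disjoint l hl i hi hli) h hr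

lemma eval_superdiag_eq_zero (hS : IsFrame k m e f S R) {i : ℕ} (hi : i < k) {r : F}
    (hr : r ∈ R i) : eval r (S i (i + 1)) = 0 := by
  rwa [hS.superdiag i hi, eval_rootsPoly_eq_zero_iff]

lemma exists_eval_coeff_two_eq (hS : IsFrame (p + 1) m e f S R) {i : ℕ} (hi : i < p) {r : F}
    (hr : r ∈ R i) : ∃ c : F, c ≠ 0 ∧ ∀ z : ℕ → F[X],
      eval r ((pencilDet (p + 2) (Function.update S (p + 1) z)).coeff 2) =
        c * eval r (z (i + 1)) := by
  obtain ⟨q, rfl⟩ : ∃ q, p = i + q := ⟨p - i, by omega⟩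
  refine ⟨(-1) ^ (i + q) * ((eval r (S i 0) * ∏ l ∈ Finset.range i, eval r (S l (l + 1))) *
    ∏ l ∈ Finset.range q, eval r (S (i + 1 + l) (i + 1 + (l + 1)))), ?_, fun z => ?_⟩
  · refine mul_ne_zero (by simp) (mul_ne_zero (mul_ne_zero ?_ ?_) ?_)
    · exact hS.eval_ne i (by omega) i (by omega) r hr
    · refine Finset.prod_ne_zero_iff.mpr fun l hl => ?_
      rw [Finset.mem_range] at hl
      exact hS.eval_superdiag_ne (by omega) (by omega) (by omega) hr
    · refine Finset.prod_ne_zero_iff.mpr fun l hl => ?_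
      rw [Finset.mem_range] at hl
      exact hS.eval_superdiag_ne (by omega) (by omega) (by omega) hr
  · rw [eval_coeff_pencilDet, show i + q + 2 = i + 1 + (q + 1) by omega,
      coeff_pencilDet_two_of_split]
    · rw [Function.update_of_ne (by omega : i ≠ i + q + 1),
        show i + 1 + q = i + q + 1 by omega, Function.update_self,
        Finset.prod_congr rfl fun l hl => by
          rw [Function.update_of_ne (by rw [Finset.mem_range] at hl; omega)],
        Finset.prod_congr (s₁ := Finset.range q) rfl fun l hl => by
          rw [Function.update_of_ne (by rw [Finset.mem_range] at hl; omega)]]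
      ring
    · intro l hl j hj
      rw [Function.update_of_ne (by omega)]
      by_cases h : l = i ∧ j = 0
      · obtain ⟨rfl, rfl⟩ := h
        exact hS.eval_superdiag_eq_zero (by omega) hr
      · rw [hS.eq_zero l (by omega) _ (by omega), eval_zero]

lemma coeff_two_update_last (hS : IsFrame (p + 1) m e f S R) {i : ℕ} (hi : i < p) {z : ℕ → F[X]}
    (hz : z 0 = 0) (y : F[X]) :
    (pencilDet (p + 2) (Function.update (Function.update S (p + 1) z) i
        fun j => if j = p + 1 then y else 0)).coeff 2 =
      -(y * ((-1) ^ p * (S p 0 *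
        ∏ l ∈ Finset.range p, if l = i then z (i + 1) else S l (l + 1)))) := by
  rw [coeff_pencilDet_two_of_row_last hi]
  · rw [Function.update_of_ne (by omega : p + 1 ≠ i), Function.update_self,
      Function.update_of_ne (by omega : p ≠ i), Function.update_of_ne (by omega : p ≠ p + 1)]
    simp only [Function.update_self, if_true]
    congr 4
    refine Finset.prod_congr rfl fun l hl => ?_
    rw [Finset.mem_range] at hl
    split_ifs with h
    · rfl
    · rw [Function.update_of_ne h, Function.update_of_ne (by omega)]
  · intro l hl hli c hc
    rw [Function.update_of_ne hli, Function.update_of_ne (by omega)]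
    exact hS.eq_zero l (by omega) c hc
  · intro j hj
    simp [hj.ne]
  · rw [Function.update_of_ne (by omega : p + 1 ≠ i), Function.update_self, hz]

lemma eval_coeff_two_update_last_of_ne (hS : IsFrame (p + 1) m e f S R) {i l : ℕ} (hi : i < p)
    (hl : l < p) (hli : l ≠ i) {z : ℕ → F[X]} (hz : z 0 = 0) (y : F[X]) {r : F} (hr : r ∈ R i) :
    eval r ((pencilDet (p + 2) (Function.update (Function.update S (p + 1) z) l
        fun j => if j = p + 1 then y else 0)).coeff 2) = 0 := by
  rw [hS.coeff_two_update_last hl hz, eval_neg, eval_mul, eval_mul, eval_mul, eval_prod,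
    Finset.prod_eq_zero (Finset.mem_range.mpr hi)]
  · simp
  · rw [if_neg hli.symm, hS.eval_superdiag_eq_zero (by omega) hr]

lemma exists_eval_coeff_two_update_last_eq (hS : IsFrame (p + 1) m e f S R) {i : ℕ} (hi : i < p)
    {r : F} (hr : r ∈ R i) : ∃ c : F, c ≠ 0 ∧ ∀ z : ℕ → F[X], z 0 = 0 → ∀ y : F[X],
      eval r ((pencilDet (p + 2) (Function.update (Function.update S (p + 1) z) i
        fun j => if j = p + 1 then y else 0)).coeff 2) =
      c * eval r (z (i + 1)) * eval r y := by
  refine ⟨-((-1) ^ p * (eval r (S p 0) *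
    ∏ l ∈ Finset.range p, if l = i then 1 else eval r (S l (l + 1)))), ?_, fun z hz y => ?_⟩
  · refine neg_ne_zero.mpr (mul_ne_zero (by simp) (mul_ne_zero ?_ ?_))
    · exact hS.eval_ne p (by omega) i (by omega) r hr
    · refine Finset.prod_ne_zero_iff.mpr fun l hl => ?_
      rw [Finset.mem_range] at hl
      split_ifs with h
      · exact one_ne_zero
      · exact hS.eval_superdiag_ne (by omega) (by omega) h hr
  · rw [hS.coeff_two_update_last hi hz]
    have h1 : (∏ l ∈ Finset.range p, if l = i then z (i + 1) else S l (l + 1)) =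
        z (i + 1) * ∏ l ∈ Finset.range p, if l = i then 1 else S l (l + 1) := by
      rw [← Finset.mul_prod_erase _ _ (Finset.mem_range.mpr hi), if_pos rfl,
        ← Finset.mul_prod_erase _ _ (Finset.mem_range.mpr hi), if_pos rfl, one_mul]
      congr 1
      refine Finset.prod_congr rfl fun l hl => ?_
      rw [if_neg (Finset.ne_of_mem_erase hl), if_neg (Finset.ne_of_mem_erase hl)]
    have h2 : eval r (∏ l ∈ Finset.range p, if l = i then 1 else S l (l + 1)) =
        ∏ l ∈ Finset.range p, if l = i then 1 else eval r (S l (l + 1)) := by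
      rw [eval_prod]
      refine Finset.prod_congr rfl fun l _ => ?_
      split_ifs <;> simp
    rw [h1, eval_neg, eval_mul, eval_mul, eval_mul, eval_mul, h2]
    simp only [eval_pow, eval_neg, eval_one]
    ring

/-- If all coefficients of a target vanish at the roots of the new diagonal entry, and its
coefficient of `x ^ 2` vanishes at the roots of the superdiagonal, then it comes from a target of
smaller size. -/
lemma exists_eq_X_mul_C_mul (hS : IsFrame (p + 1) m e f S R) {s : Finset F} {d : ℤ}
    (hs : ∀ i < p, Disjoint s (R i)) {δ : ℤ} (hd : δ = d + s.card) {b : F[X]} {Q : F[X][X]}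
    (hQ : Q ∈ targets (p + 2) m δ b) (h1 : Q.coeff 1 = 0)
    (hQs : ∀ r ∈ s, ∀ n, eval r (Q.coeff n) = 0) (h2 : ∀ i < p, ∀ r ∈ R i, eval r (Q.coeff 2) = 0) :
    ∃ Q' ∈ targets (p + 1) m d (∏ i ∈ Finset.range p, S i (i + 1)),
      Q = X * C (rootsPoly s) * Q' := by
  obtain ⟨hQ0, hQk, hQd, -⟩ := hQ
  obtain ⟨Q₁, rfl⟩ : C (rootsPoly s) ∣ Q :=
    (Polynomial.C_dvd_iff_dvd_coeff _ _).mpr fun n => rootsPoly_dvd fun r hr => hQs r hr n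
  have hne := (rootsPoly_monic s).ne_zero
  obtain ⟨Q', rfl⟩ : X ∣ Q₁ := by
    rw [Polynomial.X_dvd_iff]
    simpa [hne] using hQ0
  simp only [Polynomial.coeff_C_mul] at *
  have hc : ∀ j, (X * Q').coeff (j + 1) = Q'.coeff j := fun j => Polynomial.coeff_X_mul Q' j
  refine ⟨Q', ⟨?_, fun j hj => ?_, fun j n hn => ?_, ?_⟩, by ring⟩
  · simpa [hne] using h1
  · simpa [hne] using hQk (j + 1) (by omega)
  · apply coeff_eq_zero_of_monic_mul (rootsPoly_monic s) (D := δ + ((p : ℤ) + 1 - j) * m)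
    · intro n hn
      rw [← hc]
      apply hQd
      push_cast
      convert hn using 2
      ring
    · rw [natDegree_rootsPoly]
      push_cast at hn
      linarith
  · rw [Finset.prod_congr rfl fun i hi => hS.superdiag i (by rw [Finset.mem_range] at hi; omega)]
    refine prod_rootsPoly_dvd (fun i hi j hj => hS.disjoint i (by omega) j (by omega))
      fun i hi r hr => ?_
    have := h2 i hi r hr
    rw [Polynomial.coeff_X_mul, eval_mul, mul_eq_zero] at this
    refine this.resolve_left fun h => ?_
    rw [eval_rootsPoly_eq_zero_iff] at h
    exact Finset.disjoint_left.mp (hs i hi) h hr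

/-- At a point where the diagonal and the superdiagonal do not vanish, every target is attained by
varying the last row. -/
lemma exists_row_eval_eq (hS : IsFrame (p + 1) m e f S R) {r : F}
    (hr : ∀ i < p + 1, r ∉ R i) (hdiag : ∀ l < p + 1, eval r (S l l) ≠ 0) {δ : ℤ} {b : F[X]}
    {P : F[X][X]} (hP : P ∈ targets (p + 2) m δ b) :
    ∃ z : ℕ → F, z (p + 1) = 0 ∧ ∀ w : ℕ → F[X], (∀ j < p + 2, eval r (w j) = z j) →
      ∀ n, eval r ((pencilDet (p + 2) (Function.update S (p + 1) w)).coeff n) =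
        eval r (P.coeff n) := by
  obtain ⟨z, hz⟩ := exists_row_pencilDet_eq (k := p + 1) (S := fun i j => eval r (S i j))
    (Q := P.map (evalRingHom r)) (fun l hl c hc => by simp [hS.eq_zero l hl c hc]) hdiag
    (fun l hl => by
      rw [hS.superdiag l hl, Ne, eval_rootsPoly_eq_zero_iff]
      exact hr l hl)
    (by simp [hP.1]) (fun n hn => by simp [hP.2.1 n (by omega)])
  refine ⟨z, ?_, fun w hw n => ?_⟩
  · have h1 := congrArg (fun Q => Polynomial.coeff Q (p + 2)) hz
    simp only [coeff_pencilDet_card, Polynomial.coeff_map, hP.2.1 (p + 2) le_rfl, map_zero] at h1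
    rw [Finset.prod_range_succ, Function.update_self, mul_eq_zero] at h1
    refine h1.resolve_left (Finset.prod_ne_zero_iff.mpr fun l hl => ?_)
    rw [Finset.mem_range] at hl
    rw [Function.update_of_ne hl.ne]
    exact hdiag l hl
  · have h2 := congrArg (fun Q => Polynomial.coeff Q n) hz
    simp only [Polynomial.coeff_map, coe_evalRingHom] at h2
    rw [eval_coeff_pencilDet, ← h2]
    congr 1
    refine pencilDet_congr fun i hi j hj => ?_
    rcases eq_or_ne i (p + 1) with rfl | hi'
    · simp only [Function.update_self]
      exact hw j hj
    · simp only [Function.update_of_ne hi']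

end IsFrame

lemma pencilDeriv_apply_congr {k : ℕ} (S : ℕ → ℕ → F[X]) {E E' : ℕ → ℕ → F[X]}
    (h : ∀ i < k, ∀ j < k, E i j = E' i j) : pencilDeriv k S E = pencilDeriv k S E' := by
  rw [pencilDeriv_apply, pencilDeriv_apply]
  refine Finset.sum_congr rfl fun l hl => pencilDet_congr fun i hi j hj => ?_
  rcases eq_or_ne i l with rfl | hil
  · simp [h i hi j hj]
  · rw [Function.update_of_ne hil, Function.update_of_ne hil]

/-- The projection of a direction to its `k`-th column. -/
noncomputable def colProj (F : Type*) [Field F] (k : ℕ) :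
    (ℕ → ℕ → F[X]) →ₗ[F] (ℕ → ℕ → F[X]) where
  toFun E i j := if j = k then E i j else 0
  map_add' E E' := by
    ext i j : 2
    by_cases h : j = k <;> simp [h]
  map_smul' c E := by
    ext i j : 2
    by_cases h : j = k <;> simp [h]

lemma colProj_apply (k : ℕ) (E : ℕ → ℕ → F[X]) (i j : ℕ) :
    colProj F k E i j = if j = k then E i j else 0 := rfl

lemma colProj_mem_tangents {k l m : ℕ} {e f : ℕ → ℤ} {E : ℕ → ℕ → F[X]}
    (hE : E ∈ tangents F k m e f) : colProj F l E ∈ tangents F k m e f := by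
  obtain ⟨h1, h2, h3⟩ := hE
  refine ⟨fun i hi => ?_, fun i hi => ?_, fun i hi j hj n hn => ?_⟩
  · rw [colProj_apply, h1 i hi, ite_self]
  · rw [colProj_apply, h2 i hi, ite_self]
  · rw [colProj_apply]
    split_ifs
    · exact h3 i hi j hj n hn
    · simp

/-- The surjectivity onto the targets propagates from size `p + 1` to size `p + 2` for a degenerate
base point: the first summand is the derivative at the row `u`, which is concentrated on the
diagonal, and the second one records the first-order effect of the entries of `v`. -/
lemma IsFrame.exists_tangent_of_disjoint {m p : ℕ} {e f : ℕ → ℤ} {S : ℕ → ℕ → F[X]}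
    {R R' : ℕ → Finset F} {s : Finset F} (hS : IsFrame (p + 1) m e f S R)
    (hsurj : ∀ P ∈ targets (p + 1) m (∑ i ∈ Finset.range (p + 1), (f i - e i))
      (∏ i ∈ Finset.range p, S i (i + 1)),
      ∃ E ∈ tangents F (p + 1) m e f, pencilDeriv (p + 1) S E = P)
    (hs : (s.card : ℤ) = f (p + 1) - e (p + 1)) (hsR : ∀ i < p + 1, Disjoint s (R i))
    (hdiag : ∀ l < p + 1, ∀ r ∈ s, eval r (S l l) ≠ 0) (hR' : ∀ i < p, R' i ⊆ R i)
    (hcard : ∀ i < p, ((R' i).card : ℤ) = min (e (p + 1) - e (i + 1)) (R i).card)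
    {u v : ℕ → F[X]} (hu : ∀ j < p + 1, u j = 0) (hup : u (p + 1) = rootsPoly s) (hv0 : v 0 = 0)
    (hvp : v (p + 1) = 0) (hv : ∀ i < p, v (i + 1) = rootsPoly s * rootsPoly (R' i))
    (hub : EntriesLE (p + 2) m e f (Function.update S (p + 1) u))
    (huvb : EntriesLE (p + 2) m e f (Function.update S (p + 1) (u + v)))
    {P : F[X][X]} (hP : P ∈ targets (p + 2) m (∑ i ∈ Finset.range (p + 2), (f i - e i))
      (∏ i ∈ Finset.range (p + 1), S i (i + 1))) :
    ∃ E ∈ tangents F (p + 2) m e f,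
      pencilDeriv (p + 2) (Function.update S (p + 1) u) E +
        pencilDeriv (p + 2) (Function.update S (p + 1) (u + v)) (colProj F (p + 1) E) = P := by
  classical
  have hrow := fun r (hr : r ∈ s) => hS.exists_row_eval_eq
    (fun i hi => Finset.disjoint_left.mp (hsR i hi) hr) (fun l hl => hdiag l hl r hr) hP
  choose! z hz0 hz using hrow
  have hc := fun i (hi : i < p) r (hr : r ∈ R i) => hS.exists_eval_coeff_two_eq hi hr
  choose! c hc0 hc using hc
  have hd := fun i (hi : i < p) r (hr : r ∈ R i) => hS.exists_eval_coeff_two_update_last_eq hi hr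
  choose! d hd0 hd using hd
  have hprod : ∏ i ∈ Finset.range (p + 1), S i (i + 1) =
      ∏ i ∈ Finset.range (p + 1), rootsPoly (R i) :=
    Finset.prod_congr rfl fun i hi => hS.superdiag i (Finset.mem_range.mp hi)
  -- the corner entry of the last row
  obtain ⟨D₀, hD₀⟩ : ∃ D₀, P.coeff 1 =
      (-1) ^ (p + 1) * (D₀ * ∏ i ∈ Finset.range (p + 1), S i (i + 1)) := by
    obtain ⟨D, hD⟩ := hP.2.2.2
    refine ⟨(-1) ^ (p + 1) * D, ?_⟩
    rw [hD, ← mul_assoc, ← mul_assoc, ← mul_pow]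
    simp [mul_comm]
  have hD₀deg : ∀ n : ℕ, f (p + 1) - e 0 < n → D₀.coeff n = 0 := by
    have hmon : (∏ i ∈ Finset.range (p + 1), rootsPoly (R i)).Monic :=
      Polynomial.monic_prod_of_monic _ _ fun i _ => rootsPoly_monic _
    intro n hn
    apply coeff_eq_zero_of_monic_mul hmon
      (D := ∑ i ∈ Finset.range (p + 2), (f i - e i) + ((p + 1 : ℕ) : ℤ) * m)
    · intro n hn
      have h := hP.2.2.1 1 n (by push_cast at hn ⊢; linarith)
      rw [hD₀, hprod, mul_comm D₀] at h
      rcases neg_one_pow_eq_or F[X] (p + 1) with h1 | h1 <;> rw [h1] at h <;> simpa using h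
    · rw [Polynomial.natDegree_prod_of_monic _ _ fun i _ => rootsPoly_monic _]
      have h1 : (∑ i ∈ Finset.range (p + 1), ((rootsPoly (R i)).natDegree : ℤ)) =
          ∑ i ∈ Finset.range (p + 1), f i - ∑ i ∈ Finset.range (p + 1), e (i + 1) +
            ((p + 1 : ℕ) : ℤ) * m := by
        rw [← Finset.sum_sub_distrib, Finset.sum_congr rfl fun i hi => by
          rw [natDegree_rootsPoly, hS.card i (Finset.mem_range.mp hi)], Finset.sum_add_distrib]
        simp
      push_cast at h1 ⊢
      rw [h1, Finset.sum_sub_distrib, Finset.sum_range_succ f, Finset.sum_range_succ' e (p + 1)]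
      linarith
  -- the remaining entries of the last row
  have hD : ∀ i < p, ∃ D : F[X], (∀ r ∈ s, eval r D = z r (i + 1)) ∧
      (∀ r ∈ R' i, c i r * eval r D = eval r (P.coeff 2)) ∧
      ∀ n, s.card + (R' i).card ≤ n → D.coeff n = 0 := by
    intro i hi
    obtain ⟨D, hD, hDn⟩ := exists_interpolant (s ∪ R' i)
      fun r => if r ∈ s then z r (i + 1) else eval r (P.coeff 2) / c i r
    refine ⟨D, fun r hr => ?_, fun r hr => ?_, fun n hn => hDn n ?_⟩
    · rw [hD r (Finset.mem_union_left _ hr), if_pos hr]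
    · have hrs : r ∉ s := fun h =>
        Finset.disjoint_left.mp (hsR i (by omega)) h (hR' i hi hr)
      rw [hD r (Finset.mem_union_right _ hr), if_neg hrs,
        mul_div_cancel₀ _ (hc0 i hi r (hR' i hi hr))]
    · exact (Finset.card_union_le _ _).trans hn
  choose! D hDs hDR hDn using hD
  -- the entries of the last column
  have hB : ∀ i < p, ∃ B : F[X], (∀ r ∈ R i \ R' i,
      d i r * eval r (v (i + 1)) * eval r B = eval r (P.coeff 2) - c i r * eval r (D i)) ∧
      ∀ n, (R i \ R' i).card ≤ n → B.coeff n = 0 := by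
    intro i hi
    obtain ⟨B, hB, hBn⟩ := exists_interpolant (R i \ R' i)
      fun r => (eval r (P.coeff 2) - c i r * eval r (D i)) / (d i r * eval r (v (i + 1)))
    refine ⟨B, fun r hr => ?_, hBn⟩
    obtain ⟨hrR, hrR'⟩ := Finset.mem_sdiff.mp hr
    have hrs : r ∉ s := fun h => Finset.disjoint_left.mp (hsR i (by omega)) h hrR
    rw [hB r hr, mul_div_cancel₀]
    refine mul_ne_zero (hd0 i hi r hrR) ?_
    rw [hv i hi, eval_mul]
    exact mul_ne_zero (mt eval_rootsPoly_eq_zero_iff.mp hrs)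
      (mt eval_rootsPoly_eq_zero_iff.mp hrR')
  choose! B hBR hBn using hB
  set w : ℕ → F[X] := fun j => if j = 0 then D₀ else if j < p + 1 then D (j - 1) else 0 with hw
  have hw0 : w 0 = D₀ := if_pos rfl
  have hwi : ∀ i < p, w (i + 1) = D i := fun i hi => by simp [hw, hi]
  have hwp : w (p + 1) = 0 := by simp [hw]
  set build : (ℕ → ℕ → F[X]) → ℕ → ℕ → F[X] := fun E i j =>
    if i < p + 1 then if j < p + 1 then E i j else if i < p then B i else 0 else w j with hbuild
  have hbuild1 : ∀ E, ∀ i < p + 1, ∀ j < p + 1, build E i j = E i j := fun E i hi j hj => by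
    simp only [hbuild, if_pos hi, if_pos hj]
  have hbuild2 : ∀ E, ∀ i < p, build E i (p + 1) = B i := fun E i hi => by
    simp only [hbuild, if_pos hi, if_pos (show i < p + 1 by omega), if_neg (lt_irrefl (p + 1))]
  have hbuild3 : ∀ E, build E p (p + 1) = 0 := fun E => by
    simp only [hbuild, if_pos p.lt_succ_self, if_neg (lt_irrefl (p + 1)), if_neg (lt_irrefl p)]
  have hbuild4 : ∀ E j, build E (p + 1) j = w j := fun E j => by
    simp only [hbuild, if_neg (lt_irrefl (p + 1))]
  have hmem : ∀ E ∈ tangents F (p + 1) m e f, build E ∈ tangents F (p + 2) m e f := by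
    rintro E ⟨h1, h2, h3⟩
    refine ⟨fun i hi => ?_, fun i hi => ?_, fun i hi j hj n hn => ?_⟩
    · rcases (Nat.le_of_lt_succ hi).lt_or_eq with hi | rfl
      · rw [hbuild1 E i hi i hi, h1 i hi]
      · rw [hbuild4, hwp]
    · rcases (show i ≤ p by omega).lt_or_eq with hi | rfl
      · rw [hbuild1 E i (by omega) (i + 1) (by omega), h2 i (by omega)]
      · exact hbuild3 E
    · rcases (Nat.le_of_lt_succ hi).lt_or_eq with hi | rfl
      · rcases (Nat.le_of_lt_succ hj).lt_or_eq with hj | rfl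
        · rw [hbuild1 E i hi j hj]
          exact h3 i hi j hj n hn
        · rcases (Nat.le_of_lt_succ hi).lt_or_eq with hi | rfl
          · rw [hbuild2 E i hi]
            apply hBn i hi
            rw [entryBound, if_neg (by omega)] at hn
            have h4 := Finset.card_sdiff_add_card_eq_card (hR' i hi)
            have h5 := hcard i hi
            have h6 := hS.card i (by omega)
            omega
          · rw [hbuild3, Polynomial.coeff_zero]
      · rw [hbuild4]
        rw [entryBound, if_pos (by omega), add_zero] at hn
        rcases j with _ | j
        · rw [hw0]
          exact hD₀deg n hn
        · rcases (show j ≤ p by omega).lt_or_eq with hj | rfl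
          · rw [hwi j hj]
            apply hDn j hj
            have h5 := hcard j hj
            omega
          · rw [hwp, Polynomial.coeff_zero]
  set G : F[X][X] := pencilDet (p + 2) (Function.update S (p + 1) w) +
    ∑ l ∈ Finset.range p, pencilDet (p + 2) (Function.update (Function.update S (p + 1) (u + v)) l
      fun j => if j = p + 1 then B l else 0) with hG
  have hkey : ∀ E, pencilDeriv (p + 2) (Function.update S (p + 1) u) (build E) +
      pencilDeriv (p + 2) (Function.update S (p + 1) (u + v)) (colProj F (p + 1) (build E)) =
      X * C (rootsPoly s) * pencilDeriv (p + 1) S E + G := by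
    intro E
    have h1 : pencilDeriv (p + 2) (Function.update S (p + 1) u) (build E) =
        X * C (rootsPoly s) * pencilDeriv (p + 1) S E +
          pencilDet (p + 2) (Function.update S (p + 1) w) := by
      rw [pencilDeriv_of_row_last (by simpa using hu), Function.update_self, hup,
        Function.update_idem, pencilDeriv_congr (S' := S), pencilDeriv_apply_congr (E' := E)]
      · congr 3
        funext j
        exact hbuild4 E j
      · exact hbuild1 E
      · intro i hi j _
        rw [Function.update_of_ne hi.ne]
    have h2 : pencilDeriv (p + 2) (Function.update S (p + 1) (u + v))
        (colProj F (p + 1) (build E)) = ∑ l ∈ Finset.range p, pencilDet (p + 2)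
          (Function.update (Function.update S (p + 1) (u + v)) l
            fun j => if j = p + 1 then B l else 0) := by
      rw [pencilDeriv_apply, Finset.sum_range_succ, Finset.sum_range_succ,
        pencilDet_eq_zero_of_row (i := p) (by omega), pencilDet_eq_zero_of_row (i := p + 1)
        (by omega), add_zero, add_zero]
      · refine Finset.sum_congr rfl fun l hl => ?_
        rw [Finset.mem_range] at hl
        congr 2
        funext j
        rw [colProj_apply]
        split_ifs with hj
        · rw [hj, hbuild2 E l hl]
        · rfl
      · intro j _
        rw [Function.update_self, colProj_apply]
        split_ifs with hj
        · rw [hj, hbuild4, hwp]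
        · rfl
      · intro j _
        rw [Function.update_self, colProj_apply]
        split_ifs with hj
        · rw [hj, hbuild3]
        · rfl
    rw [h1, h2, hG, add_assoc]
  have hprod' : ∀ y, ∏ i ∈ Finset.range (p + 1), Function.update S (p + 1) y i (i + 1) =
      ∏ i ∈ Finset.range (p + 1), S i (i + 1) := fun y =>
    Finset.prod_congr rfl fun i hi => by
      rw [Function.update_of_ne (Finset.mem_range.mp hi).ne]
  have hGmem : G ∈ targets (p + 2) m (∑ i ∈ Finset.range (p + 2), (f i - e i))
      (∏ i ∈ Finset.range (p + 1), S i (i + 1)) := by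
    have h0 := hmem 0 (Submodule.zero_mem _)
    have h1 := pencilDeriv_mem_targets hub h0
    have h2 := pencilDeriv_mem_targets huvb (colProj_mem_tangents (l := p + 1) h0)
    rw [hprod'] at h1 h2
    have h3 := Submodule.add_mem _ h1 h2
    rwa [hkey, map_zero, mul_zero, zero_add] at h3
  have huv0 : (u + v) 0 = 0 := by simp [hu 0 (by omega), hv0]
  have huvi : ∀ i < p, (u + v) (i + 1) = v (i + 1) := fun i hi => by simp [hu (i + 1) (by omega)]
  have hQ1 : (P - G).coeff 1 = 0 := by
    rw [Polynomial.coeff_sub, hG, Polynomial.coeff_add, Polynomial.finsetSum_coeff,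
      coeff_pencilDet_one, hprod', Function.update_self, hw0, ← hD₀, Finset.sum_eq_zero]
    · simp
    · intro l hl
      rw [Finset.mem_range] at hl
      rw [coeff_pencilDet_one, Function.update_of_ne (by omega), Function.update_self, huv0]
      simp
  have hQs : ∀ r ∈ s, ∀ n, eval r ((P - G).coeff n) = 0 := by
    intro r hr n
    rw [Polynomial.coeff_sub, hG, Polynomial.coeff_add, Polynomial.finsetSum_coeff, eval_sub,
      eval_add, hz r hr w, eval_finsetSum, Finset.sum_eq_zero]
    · simp
    · intro l hl
      rw [Finset.mem_range] at hl
      rw [eval_coeff_pencilDet, pencilDet_eq_zero_of_row (p + 1).lt_succ_self, coeff_zero]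
      intro j hj
      rw [Function.update_of_ne (by omega), Function.update_self]
      have hrs : eval r (rootsPoly s) = 0 := eval_rootsPoly_eq_zero_iff.mpr hr
      rcases j with _ | j
      · rw [huv0, eval_zero]
      · rcases (show j ≤ p by omega).lt_or_eq with hj | rfl
        · rw [huvi j hj, hv j hj, eval_mul, hrs, zero_mul]
        · rw [Pi.add_apply, hup, hvp, add_zero, hrs]
    · intro j hj
      rcases j with _ | j
      · have h1 := hz r hr (fun j => C (z r j)) (fun j _ => by simp) 1
        rw [hD₀, coeff_pencilDet_one, hprod', Function.update_self, eval_mul, eval_mul,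
          eval_mul, eval_mul, eval_C] at h1
        have h2 : eval r ((-1 : F[X]) ^ (p + 1)) ≠ 0 := by simp
        have h3 : eval r (∏ i ∈ Finset.range (p + 1), S i (i + 1)) ≠ 0 := by
          rw [hprod, eval_prod]
          refine Finset.prod_ne_zero_iff.mpr fun i hi => ?_
          rw [Ne, eval_rootsPoly_eq_zero_iff]
          exact Finset.disjoint_left.mp (hsR i (Finset.mem_range.mp hi)) hr
        rw [hw0]
        exact (mul_right_cancel₀ h3 (mul_left_cancel₀ h2 h1)).symm
      · rcases (show j ≤ p by omega).lt_or_eq with hj | rfl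
        · rw [hwi j hj, hDs j hj r hr]
        · rw [hwp, hz0 r hr, eval_zero]
  have hQ2 : ∀ i < p, ∀ r ∈ R i, eval r ((P - G).coeff 2) = 0 := by
    intro i hi r hr
    rw [Polynomial.coeff_sub, hG, Polynomial.coeff_add, Polynomial.finsetSum_coeff, eval_sub,
      eval_add, eval_finsetSum, hc i hi r hr, hwi i hi,
      Finset.sum_eq_single_of_mem i (Finset.mem_range.mpr hi) fun l hl hli =>
        hS.eval_coeff_two_update_last_of_ne hi (Finset.mem_range.mp hl) hli huv0 _ hr,
      hd i hi r hr _ huv0, huvi i hi]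
    by_cases hr' : r ∈ R' i
    · rw [hDR i hi r hr', hv i hi, eval_mul, eval_rootsPoly_eq_zero_iff.mpr hr']
      simp
    · rw [hBR i hi r (Finset.mem_sdiff.mpr ⟨hr, hr'⟩)]
      ring
  obtain ⟨Q, hQ, hQe⟩ := hS.exists_eq_X_mul_C_mul (fun i hi => hsR i (by omega))
    (by rw [Finset.sum_range_succ, hs]) (Submodule.sub_mem _ hP hGmem) hQ1 hQs hQ2
  obtain ⟨E, hE, hEQ⟩ := hsurj Q hQ
  exact ⟨build E, hmem E hE, by rw [hkey, hEQ, ← hQe, sub_add_cancel]⟩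

lemma pencilDeriv_colProj_of_row_last {k m : ℕ} {e f : ℕ → ℤ} {S E : ℕ → ℕ → F[X]}
    (hS : ∀ j < k, S k j = 0) (hE : E ∈ tangents F (k + 1) m e f) :
    pencilDeriv (k + 1) S (colProj F k E) = 0 := by
  rw [pencilDeriv_of_row_last hS, pencilDeriv_apply_congr (E' := 0), map_zero, mul_zero, zero_add,
    pencilDet_eq_zero_of_row k.lt_succ_self]
  · intro j _
    rw [Function.update_self, colProj_apply]
    split_ifs with h
    · rw [h, hE.1 k k.lt_succ_self]
    · rfl
  · intro i _ j hj
    rw [colProj_apply, if_neg hj.ne]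
    rfl

lemma exists_isFrame_one {m : ℕ} {e f : ℕ → ℤ} [Infinite F] (hef : ∀ i, e i ≤ f i)
    (hefm : ∀ i, e (i + 1) - m ≤ f i) :
    ∃ (S : ℕ → ℕ → F[X]) (R : ℕ → Finset F), IsFrame 1 m e f S R := by
  obtain ⟨s, hs, -⟩ := exists_finset_card_eq_disjoint (f 0 - e 1 + m).toNat (∅ : Finset F)
  have hs' : (s.card : ℤ) = f 0 - e 1 + m := by
    have := hefm 0
    rw [zero_add] at this
    omega
  refine ⟨fun _ j => if j = 0 then 1 else if j = 1 then rootsPoly s else 0, fun _ => s, ?_⟩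
  constructor
  · intro i hi j hj
    simp only [if_neg (show j ≠ 0 by omega), if_neg (show j ≠ 1 by omega)]
  · intro i hi j hj n hn
    obtain rfl : i = 0 := by omega
    obtain rfl | rfl : j = 0 ∨ j = 1 := by omega
    · rw [if_pos rfl, Polynomial.coeff_one, if_neg]
      rintro rfl
      have := hef 0
      simp [entryBound] at hn
      omega
    · simp only [if_neg one_ne_zero, if_true]
      apply coeff_rootsPoly_eq_zero
      simp [entryBound] at hn
      omega
  · intro i hi
    simp [show i = 0 by omega]
  · intro i hi
    obtain rfl : i = 0 := by omega
    simpa using hs'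
  · intro i hi j hj hij
    omega
  · simp
  · simp
  · intro l hl
    simp [show l = 0 by omega]

lemma apply_perturbation_eq {V W : Type*} [AddCommGroup V] [Module F V] [AddCommGroup W]
    [Module F W] {L L' : W →ₗ[F] V} {π : W →ₗ[F] W} {a : F} (ha : a ≠ 0) {x : W}
    (hx : L (π x) = 0) :
    (L + a • (L' - L) : W →ₗ[F] V) (x - π x + a⁻¹ • π x) =
      (L + L' ∘ₗ π + a • ((L' - L) ∘ₗ (LinearMap.id - π)) : W →ₗ[F] V) x := by
  simp only [LinearMap.add_apply, LinearMap.smul_apply, LinearMap.sub_apply, map_add, map_sub,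
    map_smul, LinearMap.comp_apply, LinearMap.id_apply, hx, smul_sub, smul_smul,
    inv_mul_cancel₀ ha, one_smul, smul_zero, sub_zero, smul_add]
  abel

/-- A row can be added to a frame with surjective derivative so that the derivative of the larger
pencil is surjective as well. -/
lemma IsFrame.exists_row_surj {m p : ℕ} {e f : ℕ → ℤ} {S : ℕ → ℕ → F[X]} {R : ℕ → Finset F}
    [Infinite F] (hS : IsFrame (p + 1) m e f S R) (he : Monotone e) (hef : ∀ i, e i ≤ f i)
    (hsurj : ∀ P ∈ targets (p + 1) m (∑ i ∈ Finset.range (p + 1), (f i - e i))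
      (∏ i ∈ Finset.range p, S i (i + 1)),
      ∃ E ∈ tangents F (p + 1) m e f, pencilDeriv (p + 1) S E = P) :
    ∃ z : ℕ → F[X], (∀ j < p + 2, ∀ n : ℕ, entryBound m e f (p + 1) j < n → (z j).coeff n = 0) ∧
      (∃ b, b ≠ 0 ∧ z 0 = C b) ∧ z (p + 1) ≠ 0 ∧
      ∀ P ∈ targets (p + 2) m (∑ i ∈ Finset.range (p + 2), (f i - e i))
        (∏ i ∈ Finset.range (p + 1), S i (i + 1)),
        ∃ E ∈ tangents F (p + 2) m e f,
          pencilDeriv (p + 2) (Function.update S (p + 1) z) E = P := by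
  classical
  obtain ⟨s, hs, hsZ⟩ := exists_finset_card_eq_disjoint (f (p + 1) - e (p + 1)).toNat
    ((Finset.range (p + 1)).biUnion R ∪ (Finset.range (p + 1)).biUnion fun l =>
      (S l l).roots.toFinset)
  have hs' : (s.card : ℤ) = f (p + 1) - e (p + 1) := by
    have := hef (p + 1)
    omega
  rw [Finset.disjoint_union_right, Finset.disjoint_biUnion_right,
    Finset.disjoint_biUnion_right] at hsZ
  have hR' : ∀ i, ∃ s' ⊆ R i, i < p →
      (s'.card : ℤ) = min (e (p + 1) - e (i + 1)) (R i).card := by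
    intro i
    by_cases hi : i < p
    · obtain ⟨s', hs', hc⟩ := Finset.exists_subset_card_eq
        (show (min (e (p + 1) - e (i + 1)) (R i).card).toNat ≤ (R i).card by omega)
      refine ⟨s', hs', fun _ => ?_⟩
      have := he (show i + 1 ≤ p + 1 by omega)
      omega
    · exact ⟨∅, Finset.empty_subset _, fun h => absurd h hi⟩
  choose R' hR' hR'c using hR'
  set u : ℕ → F[X] := fun j => if j = p + 1 then rootsPoly s else 0 with hu
  set v : ℕ → F[X] := fun j =>
    if j = 0 ∨ p + 1 ≤ j then 0 else rootsPoly s * rootsPoly (R' (j - 1)) with hv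
  set ι : ℕ → F[X] := fun j => if j = 0 then 1 else 0 with hι
  have hub : ∀ j < p + 2, ∀ n : ℕ, entryBound m e f (p + 1) j < n → (u j).coeff n = 0 := by
    intro j hj n hn
    simp only [hu]
    split_ifs with h
    · apply coeff_rootsPoly_eq_zero
      rw [entryBound, if_pos (by omega), h] at hn
      omega
    · exact Polynomial.coeff_zero n
  have hvb : ∀ j < p + 2, ∀ n : ℕ, entryBound m e f (p + 1) j < n → (v j).coeff n = 0 := by
    intro j hj n hn
    simp only [hv]
    split_ifs with h
    · exact Polynomial.coeff_zero n
    · apply Polynomial.coeff_eq_zero_of_natDegree_lt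
      rw [(rootsPoly_monic s).natDegree_mul (rootsPoly_monic _), natDegree_rootsPoly,
        natDegree_rootsPoly]
      rw [entryBound, if_pos (by omega)] at hn
      have := hR'c (j - 1) (by omega)
      rw [show j - 1 + 1 = j by omega] at this
      omega
  have hιb : ∀ j < p + 2, ∀ n : ℕ, entryBound m e f (p + 1) j < n → (ι j).coeff n = 0 := by
    intro j hj n hn
    simp only [hι]
    split_ifs with h
    · rw [Polynomial.coeff_one, if_neg]
      rintro rfl
      rw [entryBound, if_pos (by omega), h] at hn
      have := hef (p + 1)
      have := he (Nat.zero_le (p + 1))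
      omega
    · exact Polynomial.coeff_zero n
  set D : (ℕ → F[X]) → (ℕ → ℕ → F[X]) →ₗ[F] F[X][X] := fun z =>
    pencilDeriv (p + 2) (Function.update S (p + 1) z) with hD
  set T := targets (p + 2) m (∑ i ∈ Finset.range (p + 2), (f i - e i))
    (∏ i ∈ Finset.range (p + 1), S i (i + 1)) with hT
  set W := tangents F (p + 2) m e f with hW
  have hDmem : ∀ z : ℕ → F[X], (∀ j < p + 2, ∀ n : ℕ, entryBound m e f (p + 1) j < n →
      (z j).coeff n = 0) → ∀ E ∈ W, D z E ∈ T := by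
    intro z hz E hE
    have := pencilDeriv_mem_targets (hS.entriesLE_update hz) hE
    rwa [Finset.prod_congr rfl fun i hi => by
      rw [Function.update_of_ne (Finset.mem_range.mp hi).ne]] at this
  have huv : ∀ E ∈ W, D (u + v) E ∈ T := hDmem _ fun j hj n hn => by
    simp [hub j hj n hn, hvb j hj n hn]
  have hπ : ∀ E ∈ W, colProj F (p + 1) E ∈ W := fun E hE => colProj_mem_tangents hE
  have hu0 : ∀ j < p + 1, u j = 0 := fun j hj => if_neg hj.ne
  have hDπ : ∀ E ∈ W, D u (colProj F (p + 1) E) = 0 := fun E hE =>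
    pencilDeriv_colProj_of_row_last (by simpa using hu0) hE
  obtain ⟨a, ha, hsurj₁⟩ := exists_ne_zero_perturbation_surjOn (W₀ := W) (T := T)
    (L := D u + D (u + v) ∘ₗ colProj F (p + 1))
    (L' := (D (u + v) - D u) ∘ₗ (LinearMap.id - colProj F (p + 1)))
    (fun E hE => T.add_mem (hDmem u hub E hE) (huv _ (hπ E hE)))
    (fun E hE => T.sub_mem (huv _ (W.sub_mem hE (hπ E hE)))
      (hDmem u hub _ (W.sub_mem hE (hπ E hE))))
    (fun P hP => hS.exists_tangent_of_disjoint hsurj hs'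
      (fun i hi => hsZ.1 i (Finset.mem_range.mpr hi))
      (fun l hl r hr h => Finset.disjoint_left.mp (hsZ.2 l (Finset.mem_range.mpr hl)) hr
        (by simpa [hS.diag_ne l hl] using h))
      (fun i _ => hR' i) hR'c hu0 (if_pos rfl) (if_pos (Or.inl rfl)) (if_pos (Or.inr le_rfl))
      (fun i hi => by simp [hv, show ¬ p ≤ i by omega]) (hS.entriesLE_update hub)
      (hS.entriesLE_update fun j hj n hn => by simp [hub j hj n hn, hvb j hj n hn]) hP)
  have hsurj₂ : ∀ P ∈ T, ∃ E ∈ W, D (u + a • v) E = P := by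
    intro P hP
    obtain ⟨E, hE, hEP⟩ := hsurj₁ P hP
    refine ⟨E - colProj F (p + 1) E + a⁻¹ • colProj F (p + 1) E,
      W.add_mem (W.sub_mem hE (hπ E hE)) (W.smul_mem _ (hπ E hE)), ?_⟩
    have haff : D (u + a • v) = D u + a • (D (u + v) - D u) :=
      pencilDeriv_update_add_smul (by omega) S u v a
    rw [← hEP, haff, apply_perturbation_eq ha (hDπ E hE)]
  have hub' : ∀ j < p + 2, ∀ n : ℕ, entryBound m e f (p + 1) j < n →
      ((u + a • v) j).coeff n = 0 := fun j hj n hn => by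
    simp [hub j hj n hn, hvb j hj n hn]
  obtain ⟨b, hb, hsurj₃⟩ := exists_ne_zero_perturbation_surjOn (W₀ := W) (T := T)
    (L := D (u + a • v)) (L' := D (u + a • v + ι) - D (u + a • v)) (hDmem _ hub')
    (fun E hE => T.sub_mem (hDmem _ (fun j hj n hn => by
      rw [Pi.add_apply, Polynomial.coeff_add, hub' j hj n hn, hιb j hj n hn, add_zero]) E hE)
      (hDmem _ hub' E hE)) hsurj₂
  refine ⟨u + a • v + b • ι, fun j hj n hn => ?_, ⟨b, hb, ?_⟩, ?_, fun P hP => ?_⟩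
  · rw [Pi.add_apply, Polynomial.coeff_add, hub' j hj n hn, Pi.smul_apply,
      Polynomial.coeff_smul, hιb j hj n hn, smul_zero, add_zero]
  · simp [hu, hv, hι, Polynomial.smul_eq_C_mul]
  · simpa [hu, hv, hι] using (rootsPoly_monic s).ne_zero
  · obtain ⟨E, hE, hEP⟩ := hsurj₃ P hP
    exact ⟨E, hE, by rw [← hEP, pencilDeriv_update_add_smul (by omega)]⟩

/-- Every frame with surjective derivative extends to a larger one. -/
lemma IsFrame.exists_extension {m p : ℕ} {e f : ℕ → ℤ} {S : ℕ → ℕ → F[X]} {R : ℕ → Finset F}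
    [Infinite F] (hS : IsFrame (p + 1) m e f S R) (he : Monotone e) (hef : ∀ i, e i ≤ f i)
    (hefm : ∀ i, e (i + 1) - m ≤ f i)
    (hsurj : ∀ P ∈ targets (p + 1) m (∑ i ∈ Finset.range (p + 1), (f i - e i))
      (∏ i ∈ Finset.range p, S i (i + 1)),
      ∃ E ∈ tangents F (p + 1) m e f, pencilDeriv (p + 1) S E = P) :
    ∃ (S' : ℕ → ℕ → F[X]) (R' : ℕ → Finset F), IsFrame (p + 2) m e f S' R' ∧
      ∀ P ∈ targets (p + 2) m (∑ i ∈ Finset.range (p + 2), (f i - e i))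
        (∏ i ∈ Finset.range (p + 1), S' i (i + 1)),
        ∃ E ∈ tangents F (p + 2) m e f, pencilDeriv (p + 2) S' E = P := by
  classical
  obtain ⟨z, hzb, ⟨b, hb, hzb0⟩, hzp0, hsurj'⟩ := hS.exists_row_surj he hef hsurj
  obtain ⟨t, ht, htZ⟩ := exists_finset_card_eq_disjoint (f (p + 1) - e (p + 2) + m).toNat
    ((Finset.range (p + 1)).biUnion R ∪ (Finset.range (p + 1)).biUnion fun l =>
      (S l 0).roots.toFinset)
  have ht' : (t.card : ℤ) = f (p + 1) - e (p + 2) + m := by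
    have := hefm (p + 1)
    rw [add_assoc, show 1 + 1 = 2 from rfl] at this
    omega
  rw [Finset.disjoint_union_right, Finset.disjoint_biUnion_right,
    Finset.disjoint_biUnion_right] at htZ
  set z' : ℕ → F[X] := fun j => if j = p + 2 then rootsPoly t else if j < p + 2 then z j else 0
    with hz'
  have hz0 : z' 0 = C b := by simp [hz', hzb0]
  have hzt : z' (p + 2) = rootsPoly t := if_pos rfl
  have hzj : ∀ j < p + 2, z' j = z j := fun j hj => by simp [hz', hj, hj.ne]
  have hzl : ∀ j, p + 2 < j → z' j = 0 := fun j hj => by simp [hz', hj.ne', hj.not_gt]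
  have hS' : ∀ l < p + 1, Function.update S (p + 1) z' l = S l := fun l hl =>
    Function.update_of_ne hl.ne _ _
  have hRl : ∀ l < p + 1, Function.update R (p + 1) t l = R l := fun l hl =>
    Function.update_of_ne hl.ne _ _
  have hlt : ∀ i < p + 2, i < p + 1 ∨ i = p + 1 := fun i hi => by omega
  refine ⟨Function.update S (p + 1) z', Function.update R (p + 1) t, ?_, fun P hP => ?_⟩
  · constructor
    · intro i hi j hj
      rcases hlt i hi with hi | rfl
      · rw [hS' i hi, hS.eq_zero i hi j hj]
      · rw [Function.update_self, hzl j (by omega)]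
    · intro i hi j hj n hn
      rcases hlt i hi with hi | rfl
      · rw [hS' i hi]
        rcases (Nat.le_of_lt_succ hj).lt_or_eq with hj | rfl
        · exact hS.coeff_eq_zero i hi j hj n hn
        · rw [hS.eq_zero i hi _ (by omega), Polynomial.coeff_zero]
      · rw [Function.update_self]
        rcases (Nat.le_of_lt_succ hj).lt_or_eq with hj | rfl
        · rw [hzj j hj, hzb j hj n hn]
        · rw [hzt]
          apply coeff_rootsPoly_eq_zero
          rw [entryBound, if_neg (by omega)] at hn
          omega
    · intro i hi
      rcases hlt i hi with hi | rfl
      · rw [hS' i hi, hRl i hi, hS.superdiag i hi]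
      · rw [Function.update_self, Function.update_self, hzt]
    · intro i hi
      rcases hlt i hi with hi | rfl
      · rw [hRl i hi, hS.card i hi]
      · rw [Function.update_self, ht']
    · intro i hi j hj hij
      rcases hlt i hi with hi | rfl <;> rcases hlt j hj with hj | rfl
      · rw [hRl i hi, hRl j hj]
        exact hS.disjoint i hi j hj hij
      · rw [hRl i hi, Function.update_self]
        exact (htZ.1 i (Finset.mem_range.mpr hi)).symm
      · rw [hRl j hj, Function.update_self]
        exact htZ.1 j (Finset.mem_range.mpr hj)
      · exact absurd rfl hij
    · intro l hl i hi r hr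
      rcases hlt l hl with hl | rfl
      · rw [hS' l hl]
        rcases hlt i hi with hi | rfl
        · rw [hRl i hi] at hr
          exact hS.eval_ne l hl i hi r hr
        · rw [Function.update_self] at hr
          exact fun h => Finset.disjoint_left.mp (htZ.2 l (Finset.mem_range.mpr hl)) hr
            (by simpa [hS.col_ne l hl] using h)
      · rw [Function.update_self, hz0, eval_C]
        exact hb
    · intro l hl
      rcases hlt l hl with hl | rfl
      · rw [hS' l hl]
        exact hS.col_ne l hl
      · rw [Function.update_self, hz0]
        exact Polynomial.C_ne_zero.mpr hb
    · intro l hl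
      rcases hlt l hl with hl | rfl
      · rw [hS' l hl]
        exact hS.diag_ne l hl
      · rw [Function.update_self, hzj _ (by omega)]
        exact hzp0
  · rw [Finset.prod_congr rfl fun i hi => by rw [hS' i (Finset.mem_range.mp hi)]] at hP
    obtain ⟨E, hE, hEP⟩ := hsurj' P hP
    refine ⟨E, hE, ?_⟩
    rw [← hEP, pencilDeriv_congr (S' := Function.update S (p + 1) z)]
    intro i _ j hj
    rcases eq_or_ne i (p + 1) with rfl | hi
    · rw [Function.update_self, Function.update_self]
      exact hzj j hj
    · rw [Function.update_of_ne hi, Function.update_of_ne hi]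

/-- In every size there is a frame at which the derivative maps the restricted tangent directions
onto the targets. -/
lemma exists_isFrame_surj [Infinite F] {m : ℕ} {e f : ℕ → ℤ} (he : Monotone e)
    (hef : ∀ i, e i ≤ f i) (hefm : ∀ i, e (i + 1) - m ≤ f i) (p : ℕ) :
    ∃ (S : ℕ → ℕ → F[X]) (R : ℕ → Finset F), IsFrame (p + 1) m e f S R ∧
      ∀ P ∈ targets (p + 1) m (∑ i ∈ Finset.range (p + 1), (f i - e i))
        (∏ i ∈ Finset.range p, S i (i + 1)),
        ∃ E ∈ tangents F (p + 1) m e f, pencilDeriv (p + 1) S E = P := by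
  induction p with
  | zero =>
    obtain ⟨S, R, hS⟩ := exists_isFrame_one (F := F) hef hefm
    refine ⟨S, R, hS, fun P hP => ⟨0, Submodule.zero_mem _, ?_⟩⟩
    rw [map_zero]
    ext1 n
    rcases n with _ | n
    · rw [hP.1, Polynomial.coeff_zero]
    · rw [hP.2.1 (n + 1) (by omega), Polynomial.coeff_zero]
  | succ p ih =>
    obtain ⟨S, R, hS, hsurj⟩ := ih
    exact hS.exists_extension he hef hefm hsurj

end Derivative

lemma Matrix.det_add_smul_of_mul_self_eq_zero {n R : Type*} [Fintype n] [DecidableEq n]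
    [CommRing R] {ε : R} (hε : ε * ε = 0) (M M' : Matrix n n R) :
    (M + ε • M').det = M.det + ε * ∑ i, (M.updateRow i (M' i)).det := by
  suffices h : ∀ (s : Finset n) (M : Matrix n n R),
      (Matrix.of fun i => if i ∈ s then M i + ε • M' i else M i).det =
        M.det + ε * ∑ i ∈ s, (M.updateRow i (M' i)).det by
    rw [← h Finset.univ M]
    congr 1
    ext i j
    simp
  intro s
  induction s using Finset.induction_on with
  | empty => 
    intro M
    simp
    rfl
  | insert a s ha ih =>
    intro M
    have key : (Matrix.of fun i => if i ∈ insert a s then M i + ε • M' i else M i) =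
        (Matrix.of fun i => if i ∈ s then M i + ε • M' i else M i).updateRow a
          (M a + ε • M' a) := by
      ext i j
      rcases eq_or_ne i a with rfl | hi
      · simp
      · simp [hi]
    have key' (v : n → R) : (Matrix.of fun i => if i ∈ s then M i + ε • M' i else M i).updateRow a v =
        Matrix.of fun i => if i ∈ s then M.updateRow a v i + ε • M' i else M.updateRow a v i := by
      ext i j
      rcases eq_or_ne i a with rfl | hi
      · simp [ha]
      · simp [hi, Matrix.updateRow_apply]
    rw [key, Matrix.det_updateRow_add, Matrix.det_updateRow_smul, key', key', ih, ih,
      Matrix.updateRow_eq_self, Finset.sum_insert ha]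
    linear_combination (∑ i ∈ s, ((M.updateRow a (M' a)).updateRow i (M' i)).det) * hε

lemma DualNumber.det_inl_add_eps_mul {n R : Type*} [Fintype n] [DecidableEq n] [CommRing R]
    (M M' : Matrix n n R) :
    (Matrix.of fun i j => (TrivSqZeroExt.inl (M i j) + DualNumber.eps * TrivSqZeroExt.inl (M' i j) :
      DualNumber R)).det = TrivSqZeroExt.inl M.det +
        DualNumber.eps * TrivSqZeroExt.inl (∑ i, (M.updateRow i (M' i)).det) := by
  let φ : R →+* DualNumber R := TrivSqZeroExt.inlHom R R
  have h := Matrix.det_add_smul_of_mul_self_eq_zero (DualNumber.eps_mul_eps (R := R))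
    (φ.mapMatrix M) (φ.mapMatrix M')
  have h' : ∀ i, (φ.mapMatrix M).updateRow i (φ.mapMatrix M' i) =
      φ.mapMatrix (M.updateRow i (M' i)) := fun i => by
    ext1 l j
    by_cases hl : l = i <;> simp [Matrix.updateRow_apply, hl]
  simp only [h', ← RingHom.map_det, ← map_sum] at h
  exact h

lemma DualNumber.det_eq_inl_add_eps_mul_iff {n R : Type*} [Fintype n] [DecidableEq n] [CommRing R]
    {M M' : Matrix n n R} {D : R} :
    (Matrix.of fun i j => (TrivSqZeroExt.inl (M i j) + DualNumber.eps * TrivSqZeroExt.inl (M' i j) :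
      DualNumber R)).det = TrivSqZeroExt.inl M.det + DualNumber.eps * TrivSqZeroExt.inl D ↔
    ∑ i, (M.updateRow i (M' i)).det = D := by
  rw [DualNumber.det_inl_add_eps_mul, add_right_inj]
  refine ⟨fun h => ?_, fun h => by rw [h]⟩
  simpa using congrArg TrivSqZeroExt.snd h

section AntiTriangular

variable {F : Type*} [Field F]

/-- The lower anti-triangular matrix with the entries of `S` on and below the diagonal, columns
reversed. -/
noncomputable def lowerPart (k : ℕ) (S : ℕ → ℕ → F[X]) : Matrix (Fin k) (Fin k) F[X] :=
  Matrix.of fun r c => if (c.rev : ℕ) ≤ r then S r c.rev else 0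

/-- The strictly upper anti-triangular matrix with the entries of `S` above the diagonal, columns
reversed. -/
noncomputable def upperPart (k : ℕ) (S : ℕ → ℕ → F[X]) : Matrix (Fin k) (Fin k) F[X] :=
  Matrix.of fun r c => if (c.rev : ℕ) ≤ r then 0 else S r c.rev

lemma xMat_lowerPart_upperPart (k : ℕ) (S : ℕ → ℕ → F[X]) :
    xMat (lowerPart k S) (upperPart k S) = (pencil k S).submatrix id Fin.revPerm := by
  ext1 r c
  rw [xMat, Matrix.of_apply, Matrix.submatrix_apply, id, Fin.revPerm_apply, lowerPart,
    upperPart, Matrix.of_apply, Matrix.of_apply]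
  rcases le_or_gt (c.rev : ℕ) r with h | h
  · rw [if_pos h, if_pos h, pencil_of_le S h, C_0, add_zero, mul_comm]
  · rw [if_neg h.not_ge, if_neg h.not_ge, pencil_of_lt S h, C_0, zero_mul, zero_add]

lemma sum_det_updateRow_xMat (k : ℕ) (S E : ℕ → ℕ → F[X]) :
    ∑ i, ((xMat (lowerPart k S) (upperPart k S)).updateRow i
      (xMat (lowerPart k E) (upperPart k E) i)).det =
      ((Equiv.Perm.sign (Fin.revPerm (n := k)) : ℤˣ) : F[X][X]) * pencilDeriv k S E := by
  rw [pencilDeriv_apply, Finset.mul_sum, ← Fin.sum_univ_eq_sum_range fun i =>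
    ((Equiv.Perm.sign (Fin.revPerm (n := k)) : ℤˣ) : F[X][X]) *
      pencilDet k (Function.update S i (E i))]
  refine Finset.sum_congr rfl fun i _ => ?_
  rw [pencilDet, ← Matrix.det_permute', pencil_update, xMat_lowerPart_upperPart,
    xMat_lowerPart_upperPart]
  congr 1
  ext1 r c
  rcases eq_or_ne r i with rfl | h
  · simp [pencil]
  · simp [Matrix.updateRow_apply, h]

lemma isAdmissible_lowerPart_upperPart {k m : ℕ} {e f : ℕ → ℤ} {S : ℕ → ℕ → F[X]}
    (hS : EntriesLE k m e f S) :
    IsAdmissible m (fun i : Fin k => e i) (fun i : Fin k => f i) (lowerPart k S)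
      (upperPart k S) := by
  refine ⟨fun r c n hn => ?_, fun r c n hn => ?_, fun r c h => ?_, fun r c h => ?_⟩
  · rw [lowerPart, Matrix.of_apply]
    split_ifs with h
    · exact hS r r.2 _ c.rev.2 n (by rw [entryBound, if_pos h, add_zero]; exact hn)
    · exact Polynomial.coeff_zero n
  · rw [upperPart, Matrix.of_apply]
    split_ifs with h
    · exact Polynomial.coeff_zero n
    · exact hS r r.2 _ c.rev.2 n (by rw [entryBound, if_neg h]; exact hn)
  · exact if_neg (by rw [Fin.val_rev]; omega)
  · exact if_pos (by rw [Fin.val_rev]; omega)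

/-- A pair is an admissible pair with vanishing leading anti-diagonals if and only if it comes
from a restricted tangent direction. -/
lemma isAdmissible_and_eq_zero_iff {k m : ℕ} {e f : ℕ → ℤ} {A B : Matrix (Fin k) (Fin k) F[X]} :
    (IsAdmissible m (fun i : Fin k => e i) (fun i : Fin k => f i) A B ∧
      (∀ i j : Fin k, (i : ℕ) + (j : ℕ) = k - 1 → A i j = 0) ∧
      ∀ i j : Fin k, (i : ℕ) + (j : ℕ) = k - 2 → B i j = 0) ↔
    ∃ E ∈ tangents F k m e f, A = lowerPart k E ∧ B = upperPart k E := by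
  constructor
  · rintro ⟨⟨hA, hB, hA0, hB0⟩, hA1, hB1⟩
    obtain ⟨E, hE⟩ : ∃ E : ℕ → ℕ → F[X], ∀ i j : Fin k, E i j = A i j.rev + B i j.rev :=
      ⟨fun i j => if h : i < k ∧ j < k then
        A ⟨i, h.1⟩ (Fin.rev ⟨j, h.2⟩) + B ⟨i, h.1⟩ (Fin.rev ⟨j, h.2⟩) else 0, by simp⟩
    have hEA : ∀ i j : Fin k, (j : ℕ) ≤ i → E i j = A i j.rev := fun i j h => by
      rw [hE, hB0 i j.rev (by rw [Fin.val_rev]; omega), add_zero]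
    have hEB : ∀ i j : Fin k, (i : ℕ) < j → E i j = B i j.rev := fun i j h => by
      rw [hE, hA0 i j.rev (by rw [Fin.val_rev]; omega), zero_add]
    refine ⟨E, ⟨fun i hi => ?_, fun i hi => ?_, fun i hi j hj n hn => ?_⟩, ?_, ?_⟩
    · exact (hEA ⟨i, hi⟩ ⟨i, hi⟩ le_rfl).trans (hA1 _ _ (by rw [Fin.val_rev]; dsimp only; omega))
    · exact (hEB ⟨i, by omega⟩ ⟨i + 1, hi⟩ i.lt_succ_self).trans
        (hB1 _ _ (by rw [Fin.val_rev]; dsimp only; omega))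
    · rw [entryBound] at hn
      split_ifs at hn with h
      · rw [hEA ⟨i, hi⟩ ⟨j, hj⟩ h]
        exact hA _ _ n (by rwa [Fin.rev_rev, ← add_zero (_ - _)])
      · rw [hEB ⟨i, hi⟩ ⟨j, hj⟩ (not_le.mp h)]
        exact hB _ _ n (by rwa [Fin.rev_rev])
    · ext1 r c
      rw [lowerPart, Matrix.of_apply]
      split_ifs with h
      · rw [hEA _ _ h, Fin.rev_rev]
      · exact hA0 r c (by rw [Fin.val_rev] at h; omega)
    · ext1 r c
      rw [upperPart, Matrix.of_apply]
      split_ifs with h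
      · exact hB0 r c (by rw [Fin.val_rev] at h; omega)
      · rw [hEB _ _ (not_le.mp h), Fin.rev_rev]
  · rintro ⟨E, ⟨h1, h2, h3⟩, rfl, rfl⟩
    refine ⟨isAdmissible_lowerPart_upperPart h3, fun i j h => ?_, fun i j h => ?_⟩
    · have : (j.rev : ℕ) = i := by rw [Fin.val_rev]; omega
      rw [lowerPart, Matrix.of_apply, this, if_pos le_rfl, h1 i i.2]
    · rw [upperPart, Matrix.of_apply]
      split_ifs with h'
      · rfl
      · rw [Fin.val_rev] at h'
        have : (j.rev : ℕ) = i + 1 := by rw [Fin.val_rev]; omega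
        rw [this, h2 _ (by omega)]

lemma mem_targets_iff {k m : ℕ} {δ : ℤ} {b : F[X]} {P : F[X][X]} :
    P ∈ targets k m δ b ↔ P.coeff 0 = 0 ∧ (∀ j : ℕ, k ≤ j → P.coeff j = 0) ∧
      (∀ j : ℕ, 1 ≤ j → j ≤ k → ∀ n : ℕ, δ + (((k - j) * m : ℕ) : ℤ) < (n : ℤ) →
        (P.coeff j).coeff n = 0) ∧ b ∣ P.coeff 1 := by
  refine and_congr_right fun h0 => and_congr_right fun hk => and_congr_left fun _ => ?_
  have hcast : ∀ j ≤ k, (((k - j) * m : ℕ) : ℤ) = ((k : ℤ) - j) * m := fun j hj => by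
    rw [Nat.cast_mul, Nat.cast_sub hj]
  refine ⟨fun h j _ hj n hn => h j n (by rwa [← hcast j hj]), fun h j n hn => ?_⟩
  rcases Nat.eq_zero_or_pos j with rfl | hj
  · rw [h0, Polynomial.coeff_zero]
  · rcases le_total k j with hkj | hkj
    · rw [hk j hkj, Polynomial.coeff_zero]
    · exact h j hj hkj n (by rwa [hcast j hkj])

lemma upperPart_of_add_eq {k : ℕ} (hk : 2 ≤ k) (S : ℕ → ℕ → F[X]) {i j : Fin k}
    (h : (i : ℕ) + j = k - 2) : upperPart k S i j = S i (i + 1) := by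
  have hj : (j.rev : ℕ) = i + 1 := by rw [Fin.val_rev]; omega
  rw [upperPart, Matrix.of_apply, hj, if_neg (by omega)]

lemma sign_mul_mem_iff {V : Submodule F F[X][X]} (u : ℤˣ) {P : F[X][X]} :
    (u : F[X][X]) * P ∈ V ↔ P ∈ V := by
  rcases Int.units_eq_one_or u with rfl | rfl
  · rw [Units.val_one, Int.cast_one, one_mul]
  · rw [show (((-1 : ℤˣ) : ℤ) : F[X][X]) * P = -P by push_cast; ring, neg_mem_iff]

end AntiTriangular

end Surjectivity

/-- Lemma 3.8 (existence form): there is an admissible pair `(A, B)` with all entries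
`B i (k-i)` (`1`-indexed, i.e. `i + j = k - 2` `0`-indexed) nonzero such that the set of
derivatives `D(A', B')` of the determinant map at `(A, B)` in restricted tangent directions
`(A', B')` — characterized by `det ((A+εA')x + (B+εB')) = det (Ax+B) + ε·D` in the dual
numbers over `F[t][x]` — is exactly the set of polynomials `Σ_{j=1}^k P_j x^j` with
`deg P_j ≤ δ + (k-j)·m`, `P_k = 0`, and `∏_{i=1}^{k-1} B i (k-i)` dividing `P_1`. -/
theorem stmt_19 {F : Type*} [Field F] [IsAlgClosed F] (k : ℕ) (hk : 2 ≤ k) (m : ℕ)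
    (e f : Fin k → ℤ) (he : Monotone e) (hf : Monotone f)
    (hef : ∀ i, e i ≤ f i)
    (hefm : ∀ i : Fin k, ∀ h : (i : ℕ) + 1 < k, e ⟨(i : ℕ) + 1, h⟩ - (m : ℤ) ≤ f i)
    (δ : ℤ) (hδ : δ = ∑ i, (f i - e i)) :
    ∃ A B : Matrix (Fin k) (Fin k) (Polynomial F),
      IsAdmissible m e f A B ∧
      (∀ i j : Fin k, (i : ℕ) + (j : ℕ) = k - 2 → B i j ≠ 0) ∧
      (∀ D : Polynomial (Polynomial F),
        (∃ A' B' : Matrix (Fin k) (Fin k) (Polynomial F),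
          IsAdmissible m e f A' B' ∧
          (∀ i j : Fin k, (i : ℕ) + (j : ℕ) = k - 1 → A' i j = 0) ∧
          (∀ i j : Fin k, (i : ℕ) + (j : ℕ) = k - 2 → B' i j = 0) ∧
          Matrix.det (Matrix.of fun r c : Fin k =>
              (TrivSqZeroExt.inl (xMat A B r c) +
                DualNumber.eps * TrivSqZeroExt.inl (xMat A' B' r c) :
                  DualNumber (Polynomial (Polynomial F)))) =
            TrivSqZeroExt.inl (Matrix.det (xMat A B)) +
              DualNumber.eps * TrivSqZeroExt.inl D) ↔
        (D.coeff 0 = 0 ∧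
          (∀ j : ℕ, k ≤ j → D.coeff j = 0) ∧
          (∀ j : ℕ, 1 ≤ j → j ≤ k → ∀ n : ℕ, δ + (((k - j) * m : ℕ) : ℤ) < (n : ℤ) →
            (D.coeff j).coeff n = 0) ∧
          (∏ i : Fin (k - 1),
              B ⟨(i : ℕ), by have := i.isLt; omega⟩ ⟨k - 2 - (i : ℕ), by omega⟩) ∣
            D.coeff 1)) := by
  have hext : ∀ i : ℕ, min i (k - 1) < k := fun i => by omega
  obtain ⟨e', he'⟩ : ∃ e' : ℕ → ℤ, ∀ i, e' i = e ⟨min i (k - 1), hext i⟩ := ⟨_, fun _ => rfl⟩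
  obtain ⟨f', hf'⟩ : ∃ f' : ℕ → ℤ, ∀ i, f' i = f ⟨min i (k - 1), hext i⟩ := ⟨_, fun _ => rfl⟩
  have hmin : ∀ i : Fin k, (⟨min i (k - 1), hext i⟩ : Fin k) = i := fun i =>
    Fin.ext (min_eq_left (by omega))
  have heq : e = fun i : Fin k => e' i := funext fun i => by rw [he', hmin]
  have hfeq : f = fun i : Fin k => f' i := funext fun i => by rw [hf', hmin]
  have hmono : Monotone e' := fun i j hij => by
    rw [he', he']
    exact he (Fin.mk_le_mk.mpr (min_le_min_right _ hij))
  have hef' : ∀ i, e' i ≤ f' i := fun i => by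
    rw [he', hf']
    exact hef _
  have hefm' : ∀ i, e' (i + 1) - m ≤ f' i := fun i => by
    by_cases hi : i + 1 < k
    · have := hefm ⟨i, by omega⟩ hi
      simpa [heq, hfeq] using this
    · have h1 : e' (i + 1) = e' i := by
        rw [he', he']
        congr 2
        omega
      have := hef' i
      omega
  have hδ' : δ = ∑ i ∈ Finset.range k, (f' i - e' i) := by
    rw [hδ, heq, hfeq, ← Fin.sum_univ_eq_sum_range fun i => f' i - e' i]
  obtain ⟨p, rfl⟩ : ∃ p, k = p + 1 := ⟨k - 1, by omega⟩
  obtain ⟨S, R, hS, hsurj⟩ := exists_isFrame_surj (F := F) hmono hef' hefm' p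
  have hSle : EntriesLE (p + 1) m e' f' S := fun i hi j hj => hS.coeff_eq_zero i hi j (by omega)
  have hprod : ∏ i : Fin (p + 1 - 1), upperPart (p + 1) S ⟨(i : ℕ), by omega⟩
      ⟨p + 1 - 2 - (i : ℕ), by omega⟩ = ∏ i ∈ Finset.range p, S i (i + 1) := by
    rw [← Fin.prod_univ_eq_prod_range fun i => S i (i + 1)]
    exact Finset.prod_congr rfl fun i _ => upperPart_of_add_eq hk S (by dsimp only; omega)
  refine ⟨lowerPart (p + 1) S, upperPart (p + 1) S, ?_, fun i j h => ?_, fun D => ?_⟩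
  · rw [heq, hfeq]
    exact isAdmissible_lowerPart_upperPart hSle
  · rw [upperPart_of_add_eq hk S h, hS.superdiag i i.2]
    exact (rootsPoly_monic _).ne_zero
  · rw [hprod, ← mem_targets_iff, heq, hfeq, hδ']
    simp only [DualNumber.det_eq_inl_add_eps_mul_iff]
    constructor
    · rintro ⟨A', B', hadm, hA', hB', rfl⟩
      obtain ⟨E, hE, rfl, rfl⟩ := isAdmissible_and_eq_zero_iff.mp ⟨hadm, hA', hB'⟩
      rw [sum_det_updateRow_xMat, sign_mul_mem_iff]
      exact pencilDeriv_mem_targets hSle hE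
    · intro hD
      set s := Equiv.Perm.sign (Fin.revPerm (n := p + 1))
      obtain ⟨E, hE, hED⟩ := hsurj ((s : ℤˣ) * D) ((sign_mul_mem_iff s).mpr hD)
      obtain ⟨hadm, hA', hB'⟩ := isAdmissible_and_eq_zero_iff.mpr ⟨E, hE, rfl, rfl⟩
      refine ⟨_, _, hadm, hA', hB', ?_⟩
      rw [sum_det_updateRow_xMat, hED, ← mul_assoc, ← Int.cast_mul, ← Units.val_mul,
        Int.units_mul_self, Units.val_one, Int.cast_one, one_mul]
end
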